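/- arXiv:2411.02190 — 3 statements merged into one kernel-verified Lean document; each statement's English description precedes it below -/
import Mathlib

section
/- (Improved stability in the nucleus of a resonance) There are constants c₄, c₅ > 0, independent of the resonance, and ε₀ > 0 such that the following holds. Let ‖s‖ = sup_{𝒟_F}|s_ε|, ν₂ = d·‖h₀''‖. If 0 < ε ≤ ε₀, n is a natural number with n < ε^{−d/(2(d+1))}, I* ∈ B_R satisfies n·h₀'(I*) ∈ ℤ^d, and the initial condition satisfies |I₀ − I*|² ≤ 2 ν₂^{−1} ‖s‖ ε, then the trajectory (I_k,φ_k) = F_ε^k(I₀,φ₀) satisfies |I_k − I*|² ≤ 11 ν^{−1} ‖s‖ ε for all integers 0 ≤ k ≤ c₄·exp(c₅/√(n²ε)). -/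
/-- Real phase space `ℝ^d × ℝ^d` (actions–angles, sup norm), a lift of `ℝ^d × 𝕋^d`. -/
abbrev RPhase (d : ℕ) := (Fin d → ℝ) × (Fin d → ℝ)

/-- Complex phase space `ℂ^d × ℂ^d` with the sup norm. -/
abbrev CPhase (d : ℕ) := (Fin d → ℂ) × (Fin d → ℂ)

/-- Complexification of a real vector. -/
def cx (d : ℕ) (v : Fin d → ℝ) : Fin d → ℂ := fun i => (v i : ℂ)
/-!
In the variables `J = (I - I⋆) / μ`, `μ = √ε`, the map is generated by `μ (q(J) + u(J, φ))` on top
of the rotation by the resonant frequency `ω(I⋆)`, where `q` is the rescaled second-order Taylor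
remainder of `h₀` at `I⋆` and `u` the perturbation. As `n ω(I⋆)` is an integer vector, the `n`-th
iterate `f` is, up to a translation of the lift, within `O(n μ)` of the identity.

A near-identity exact symplectic map has an exponentially accurate first integral. If `f` were the
time-one map of a flow, the Hamiltonian could be read off from the logarithm of the Koopman operator
`g ↦ g ∘ f`; truncating the logarithm series after `m` terms amounts to differentiating at `t = 0`
the polynomial that interpolates `g (f^[t] x)` at `t = 0, …, m`. For `m ∼ 1 / (n μ)` the chain rule
holds for this derivative up to `O(3 ^ -m)`: the error is the derivative at a zero of a bounded
holomorphic function of `t` with `m + 1` zeros, to which the maximum principle applies.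

The resulting near-integral differs from `n μ q(J)` by at most about `n μ ‖s‖`. Hence `q(J)` moves
by little more than `2 ‖s‖` during `3 ^ m` iterations, and strong convexity, `q(J) ≥ ν |J|² / 2`,
confines `J`.
-/

open Metric Set Finset

open scoped Matrix

/-! ### Near-identity maps and the logarithm of the Koopman operator -/

section Koopman

section BoundedHolo

variable {E F G : Type*} [NormedAddCommGroup E] [NormedSpace ℂ E]
  [NormedAddCommGroup F] [NormedSpace ℂ F] [NormedAddCommGroup G] [NormedSpace ℂ G]

/-- `g` is holomorphic on `s` and bounded there by `M`. A map `f` that is `δ`-close to the identity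
on a complex ball is encoded as `BoundedHolo (f - id) (ball x ρ) δ`. -/
structure BoundedHolo (g : E → F) (s : Set E) (M : ℝ) : Prop where
  differentiableOn : DifferentiableOn ℂ g s
  norm_le : ∀ z ∈ s, ‖g z‖ ≤ M

namespace BoundedHolo

variable {g h : E → F} {s t : Set E} {c z : E} {η M N : ℝ}

theorem mono (hg : BoundedHolo g s M) (hts : t ⊆ s) : BoundedHolo g t M :=
  ⟨hg.differentiableOn.mono hts, fun z hz => hg.norm_le z (hts hz)⟩

theorem nonneg (hg : BoundedHolo g s M) (hz : z ∈ s) : 0 ≤ M :=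
  (norm_nonneg _).trans (hg.norm_le z hz)

theorem differentiableAt (hg : BoundedHolo g (ball c η) M) (hη : 0 < η) :
    DifferentiableAt ℂ g c :=
  hg.differentiableOn.differentiableAt (ball_mem_nhds c hη)

theorem continuousLinearMap_comp (hg : BoundedHolo g s M) (l : F →L[ℂ] G) (hl : ‖l‖ ≤ 1) :
    BoundedHolo (l ∘ g) s M :=
  ⟨l.differentiable.comp_differentiableOn hg.differentiableOn,
    fun z hz => (l.le_of_opNorm_le hl (g z)).trans (by simpa using hg.norm_le z hz)⟩

theorem mapsTo_closedBall (hg : BoundedHolo g (ball c η) M) (hη : 0 < η) :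
    MapsTo g (ball c η) (closedBall (g c) (2 * M)) := fun y hy => by
  rw [mem_closedBall, dist_eq_norm, two_mul]
  exact (norm_sub_le _ _).trans (add_le_add (hg.norm_le y hy) (hg.norm_le c (mem_ball_self hη)))

theorem norm_sub_le_div_mul (hg : BoundedHolo g (ball c η) M) (hz : z ∈ ball c η) :
    ‖g z - g c‖ ≤ 2 * M / η * ‖z - c‖ := by
  simpa only [dist_eq_norm] using Complex.dist_le_div_mul_dist_of_mapsTo_ball hg.differentiableOn
    (hg.mapsTo_closedBall (nonempty_ball.1 ⟨z, hz⟩)) hz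

theorem norm_fderiv_le (hg : BoundedHolo g (ball c η) M) (hη : 0 < η) :
    ‖fderiv ℂ g c‖ ≤ 2 * M / η :=
  Complex.norm_fderiv_le_div_of_mapsTo_ball hg.differentiableOn (hg.mapsTo_closedBall hη) hη

end BoundedHolo

end BoundedHolo

section Algebra

variable {E F G : Type*} [AddCommGroup F] [Module ℂ F] [AddCommGroup G] [Module ℂ G]

/-- The Koopman (composition) operator `g ↦ g ∘ f` on `F`-valued observables. -/
def koopman (F : Type*) [AddCommGroup F] [Module ℂ F] (f : E → E) :
    Module.End ℂ (E → F) :=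
  LinearMap.funLeft ℂ F f

/-- The difference operator `g ↦ g ∘ f - g` along the orbits of `f`. -/
def koopmanDiff (F : Type*) [AddCommGroup F] [Module ℂ F] (f : E → E) :
    Module.End ℂ (E → F) :=
  koopman F f - 1

theorem koopman_apply (f : E → E) (g : E → F) (x : E) : koopman F f g x = g (f x) := rfl

theorem koopmanDiff_apply (f : E → E) (g : E → F) (x : E) :
    koopmanDiff F f g x = g (f x) - g x := rfl

theorem koopman_pow_apply (f : E → E) (g : E → F) (j : ℕ) (x : E) :
    (koopman F f ^ j) g x = g (f^[j] x) := by
  induction j generalizing x with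
  | zero => simp only [pow_zero, Module.End.one_apply, Function.iterate_zero, id_eq]
  | succ j ih => rw [pow_succ', Module.End.mul_apply, koopman_apply, ih,
      Function.iterate_succ_apply]

theorem koopmanDiff_pow_succ_apply (f : E → E) (g : E → F) (k : ℕ) (x : E) :
    (koopmanDiff F f ^ (k + 1)) g x =
      (koopmanDiff F f ^ k) g (f x) - (koopmanDiff F f ^ k) g x := by
  rw [pow_succ', Module.End.mul_apply, koopmanDiff_apply]

theorem koopmanDiff_pow_comp (f : E → E) (g : E → F) (l : F →ₗ[ℂ] G) (k : ℕ) (x : E) :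
    (koopmanDiff G f ^ k) (l ∘ g) x = l ((koopmanDiff F f ^ k) g x) := by
  induction k generalizing x with
  | zero => rfl
  | succ k ih => rw [koopmanDiff_pow_succ_apply, koopmanDiff_pow_succ_apply, ih, ih, map_sub]

theorem apply_iterate_eq_sum_choose_smul (f : E → E) (g : E → F) (j : ℕ) (x : E) :
    g (f^[j] x) = ∑ k ∈ range (j + 1), (j.choose k : ℂ) • (koopmanDiff F f ^ k) g x := by
  have h : koopman F f = koopmanDiff F f + 1 := (sub_add_cancel _ _).symm
  rw [← koopman_pow_apply f g j x, h, (Commute.one_right _).add_pow]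
  simp only [one_pow, mul_one, LinearMap.sum_apply, Finset.sum_apply]
  refine sum_congr rfl fun k _ => ?_
  rw [← nsmul_eq_mul', LinearMap.smul_apply, Pi.smul_apply, Nat.cast_smul_eq_nsmul]

/-- The Newton polynomial interpolating `j ↦ g (f^[j] x)` at `0, …, m`. -/
noncomputable def newtonInterp (f : E → E) (m : ℕ) (g : E → F) (x : E) (t : ℂ) : F :=
  ∑ k ∈ range (m + 1), Ring.choose t k • (koopmanDiff F f ^ k) g x

/-- The truncation `∑_{k < m} (-1)^k Δ^k / (k + 1)` of `log (1 + Δ) / Δ`, where `Δ` is the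
difference operator. -/
noncomputable def koopmanLogQuot (F : Type*) [AddCommGroup F] [Module ℂ F]
    (f : E → E) (m : ℕ) : Module.End ℂ (E → F) :=
  ∑ k ∈ range m, ((-1) ^ k / (k + 1) : ℂ) • koopmanDiff F f ^ k

/-- The truncated logarithm of the Koopman operator: the candidate for the vector field whose
time-one flow is `f`, acting on observables. -/
noncomputable def koopmanLog (F : Type*) [AddCommGroup F] [Module ℂ F]
    (f : E → E) (m : ℕ) : Module.End ℂ (E → F) :=
  koopmanLogQuot F f m * koopmanDiff F f

theorem commute_koopmanDiff_koopmanLogQuot (f : E → E) (m : ℕ) :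
    Commute (koopmanDiff F f) (koopmanLogQuot F f m) :=
  Commute.sum_right _ _ _ fun _ _ => ((Commute.refl _).pow_right _).smul_right _

theorem koopmanLogQuot_apply_sub (f : E → E) (m : ℕ) (g : E → F) (x : E) :
    koopmanLogQuot F f m g (f x) - koopmanLogQuot F f m g x = koopmanLog F f m g x :=
  congrFun (LinearMap.congr_fun (commute_koopmanDiff_koopmanLogQuot f m).eq g) x

theorem koopmanLog_apply_sub (f : E → E) (m : ℕ) (g : E → F) (x : E) :
    koopmanLog F f m g (f x) - koopmanLog F f m g x = koopmanLog F f m (koopmanDiff F f g) x :=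
  koopmanLogQuot_apply_sub f m (koopmanDiff F f g) x

theorem koopmanLogQuot_apply (f : E → E) (m : ℕ) (g : E → F) (x : E) :
    koopmanLogQuot F f m g x =
      ∑ k ∈ range m, ((-1) ^ k / (k + 1) : ℂ) • (koopmanDiff F f ^ k) g x := by
  simp only [koopmanLogQuot, LinearMap.sum_apply, LinearMap.smul_apply, Finset.sum_apply,
    Pi.smul_apply]

theorem koopmanLog_apply (f : E → E) (m : ℕ) (g : E → F) (x : E) :
    koopmanLog F f m g x =
      ∑ k ∈ range m, ((-1) ^ k / (k + 1) : ℂ) • (koopmanDiff F f ^ (k + 1)) g x := by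
  simp only [koopmanLog, Module.End.mul_apply, koopmanLogQuot_apply, pow_succ]

theorem koopmanLog_comp (f : E → E) (m : ℕ) (g : E → F) (l : F →ₗ[ℂ] G) (x : E) :
    koopmanLog G f m (l ∘ g) x = l (koopmanLog F f m g x) := by
  simp only [koopmanLog_apply, koopmanDiff_pow_comp, map_sum, map_smul]

theorem newtonInterp_eq_add (f : E → E) (m : ℕ) (g : E → F) (x : E) (t : ℂ) :
    newtonInterp f m g x t =
      ∑ k ∈ range m, Ring.choose t (k + 1) • (koopmanDiff F f ^ (k + 1)) g x + g x := by
  rw [newtonInterp, sum_range_succ', Ring.choose_zero_right, one_smul, pow_zero,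
    Module.End.one_apply]

theorem newtonInterp_natCast (f : E → E) {m j : ℕ} (hj : j ≤ m) (g : E → F) (x : E) :
    newtonInterp f m g x j = g (f^[j] x) := by
  rw [apply_iterate_eq_sum_choose_smul f g j x, newtonInterp]
  simp only [Ring.choose_natCast]
  refine (Finset.sum_subset (Finset.range_mono (by omega)) fun k _ hk => ?_).symm
  rw [Finset.mem_range, not_lt] at hk
  rw [Nat.choose_eq_zero_of_lt hk, Nat.cast_zero, zero_smul]

theorem newtonInterp_zero (f : E → E) (m : ℕ) (g : E → F) (x : E) :
    newtonInterp f m g x 0 = g x := by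
  simpa using newtonInterp_natCast f (Nat.zero_le m) g x

end Algebra

section Interpolation

variable {E F : Type*} [NormedAddCommGroup F] [NormedSpace ℂ F]

theorem choose_eq_prod_div_factorial (t : ℂ) (k : ℕ) :
    Ring.choose t k = (∏ j ∈ range k, (t - j)) / k.factorial := by
  rw [Ring.choose_eq_smul, ← Polynomial.aeval_eq_smeval, ← Polynomial.eval_map_algebraMap,
    descPochhammer_map, descPochhammer_eval_eq_prod_range, smul_eq_mul, inv_mul_eq_div]

theorem differentiable_choose (k : ℕ) : Differentiable ℂ fun t : ℂ => Ring.choose t k := by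
  simp only [choose_eq_prod_div_factorial]
  fun_prop

theorem hasDerivAt_prod_range_succ_sub_zero (k : ℕ) :
    HasDerivAt (fun t : ℂ => ∏ j ∈ range (k + 1), (t - j)) ((-1) ^ k * k.factorial) 0 := by
  simp only [prod_range_succ', Nat.cast_zero, sub_zero]
  have hd : DifferentiableAt ℂ (fun t : ℂ => ∏ j ∈ range k, (t - (j + 1 : ℕ))) 0 := by fun_prop
  refine (hd.hasDerivAt.mul (hasDerivAt_id 0)).congr_deriv ?_
  simp only [id, mul_zero, zero_add, mul_one, zero_sub, prod_neg, card_range]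
  rw [← Nat.cast_prod, prod_range_add_one_eq_factorial]

theorem hasDerivAt_choose_succ_zero (k : ℕ) :
    HasDerivAt (fun t : ℂ => Ring.choose t (k + 1)) ((-1) ^ k / (k + 1)) 0 := by
  simp only [choose_eq_prod_div_factorial]
  refine ((hasDerivAt_prod_range_succ_sub_zero k).div_const _).congr_deriv ?_
  have : (k.factorial : ℂ) ≠ 0 := by exact_mod_cast k.factorial_ne_zero
  rw [Nat.factorial_succ]
  push_cast
  field_simp

theorem norm_choose_le {m k : ℕ} (hk : k ≤ m) {t : ℂ} (ht : ‖t‖ ≤ 4 * m) :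
    ‖Ring.choose t k‖ ≤ (5 * m : ℝ) ^ k / k.factorial := by
  rw [choose_eq_prod_div_factorial, norm_div, norm_prod, Complex.norm_natCast]
  gcongr
  refine (prod_le_prod (fun _ _ => norm_nonneg _) fun j hj => ?_).trans_eq
    (by rw [prod_const, card_range])
  have hjm : (j : ℝ) ≤ m := by exact_mod_cast (mem_range.1 hj).le.trans hk
  calc ‖t - j‖ ≤ ‖t‖ + j := by simpa using norm_sub_le t (j : ℂ)
    _ ≤ 5 * m := by linarith

theorem differentiable_newtonInterp (f : E → E) (m : ℕ) (g : E → F) (x : E) :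
    Differentiable ℂ (newtonInterp f m g x) :=
  Differentiable.fun_sum fun k _ => (differentiable_choose k).smul_const _

theorem hasDerivAt_newtonInterp_zero (f : E → E) (m : ℕ) (g : E → F) (x : E) :
    HasDerivAt (newtonInterp f m g x) (koopmanLog F f m g x) 0 := by
  rw [funext (newtonInterp_eq_add f m g x), koopmanLog_apply]
  exact (HasDerivAt.fun_sum fun k _ => (hasDerivAt_choose_succ_zero k).smul_const _).add_const _

theorem exists_eq_prod_smul_of_forall_eq_zero [CompleteSpace F] {G : ℂ → F} {s : Set ℂ} (N : ℕ)
    (hs : ∀ j < N, s ∈ nhds (j : ℂ)) (hG : DifferentiableOn ℂ G s) (hz : ∀ j < N, G j = 0) :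
    ∃ K : ℂ → F, DifferentiableOn ℂ K s ∧ ∀ t, G t = (∏ j ∈ range N, (t - j)) • K t := by
  induction N with
  | zero => exact ⟨G, hG, by simp⟩
  | succ N ih =>
    obtain ⟨K, hK, hGK⟩ := ih (fun j hj => hs j (by omega)) fun j hj => hz j (by omega)
    have hne : ∏ j ∈ range N, ((N : ℂ) - j) ≠ 0 := prod_ne_zero_iff.2 fun j hj =>
      sub_ne_zero.2 (by exact_mod_cast (mem_range.1 hj).ne')
    have hKN : K N = 0 := (smul_eq_zero.1 ((hGK N).symm.trans (hz N (by omega)))).resolve_left hne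
    refine ⟨dslope K N, (Complex.differentiableOn_dslope (hs N (by omega))).2 hK, fun t => ?_⟩
    rw [prod_range_succ, mul_smul, sub_smul_dslope, hKN, sub_zero, hGK]

theorem norm_le_div_pow_of_prod_smul {K : ℂ → F} {m : ℕ} {M : ℝ} (hm : 1 ≤ m)
    (hK : DifferentiableOn ℂ K (closedBall 0 (4 * m)))
    (hb : ∀ t : ℂ, ‖t‖ ≤ 4 * m → ‖(∏ j ∈ range (m + 1), (t - j)) • K t‖ ≤ M) :
    ‖K 0‖ ≤ M / (3 * m) ^ (m + 1) := by
  have : (1 : ℝ) ≤ m := by exact_mod_cast hm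
  refine Complex.norm_le_of_forall_mem_frontier_norm_le (U := ball 0 (4 * m)) isBounded_ball
    (hK.diffContOnCl_ball subset_rfl) (fun t ht => ?_)
    (subset_closure (mem_ball_self (by positivity)))
  rw [frontier_ball _ (by positivity), mem_sphere_zero_iff_norm] at ht
  have hprod : (3 * m : ℝ) ^ (m + 1) ≤ ∏ j ∈ range (m + 1), ‖t - j‖ := by
    refine (by rw [prod_const, card_range] : _ = ∏ _j ∈ range (m + 1), (3 * m : ℝ)).trans_le
      (prod_le_prod (fun _ _ => by positivity) fun j hj => ?_)
    have hjm : (j : ℝ) ≤ m := by exact_mod_cast Nat.lt_succ_iff.1 (mem_range.1 hj)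
    calc (3 * m : ℝ) ≤ ‖t‖ - ‖(j : ℂ)‖ := by rw [Complex.norm_natCast]; linarith
      _ ≤ ‖t - j‖ := norm_sub_norm_le t j
  rw [le_div_iff₀ (by positivity), mul_comm]
  refine le_trans ?_ (hb t ht.le)
  rw [norm_smul, norm_prod]
  gcongr

/-- Dividing out the zeros gains `3 ^ -(m + 1)` by the maximum principle, since `‖t - j‖ ≥ 3 m` on
the circle `‖t‖ = 4 m`. -/
theorem norm_deriv_zero_le_of_forall_eq_zero [CompleteSpace F] {G : ℂ → F} {m : ℕ} {M : ℝ}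
    (hm : 1 ≤ m) (hG : BoundedHolo G (closedBall 0 (4 * m)) M) (hz : ∀ j < m + 1, G j = 0) :
    ‖deriv G 0‖ ≤ M / 3 ^ (m + 1) := by
  have hm' : (1 : ℝ) ≤ m := by exact_mod_cast hm
  have hnhds (j : ℕ) (hj : j < m + 1) : closedBall (0 : ℂ) (4 * m) ∈ nhds (j : ℂ) := by
    have : (j : ℝ) ≤ m := by exact_mod_cast Nat.lt_succ_iff.1 hj
    refine closedBall_mem_nhds_of_mem ?_
    rw [mem_ball_zero_iff, Complex.norm_natCast]
    linarith
  obtain ⟨K, hK, hGK⟩ :=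
    exists_eq_prod_smul_of_forall_eq_zero (m + 1) hnhds hG.differentiableOn hz
  have hKd : DifferentiableAt ℂ K 0 := hK.differentiableAt (closedBall_mem_nhds _ (by positivity))
  have hderiv : deriv G 0 = ((-1) ^ m * (m.factorial : ℂ)) • K 0 := by
    rw [funext hGK]
    refine ((hasDerivAt_prod_range_succ_sub_zero m).fun_smul hKd.hasDerivAt).deriv.trans ?_
    rw [prod_range_succ', Nat.cast_zero, sub_zero, mul_zero, zero_smul, zero_add]
  have hK0 : ‖K 0‖ ≤ M / (3 * m) ^ (m + 1) := norm_le_div_pow_of_prod_smul hm hK fun t ht => by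
    rw [← hGK]
    exact hG.norm_le t (mem_closedBall_zero_iff.2 ht)
  have hfac : (m.factorial : ℝ) ≤ m ^ (m + 1) := by
    exact_mod_cast m.factorial_le_pow.trans (Nat.pow_le_pow_right hm (Nat.le_succ m))
  calc ‖deriv G 0‖ = m.factorial * ‖K 0‖ := by
        rw [hderiv, norm_smul, norm_mul, norm_pow, norm_neg, norm_one, one_pow, one_mul,
          Complex.norm_natCast]
    _ ≤ m ^ (m + 1) * (M / (3 * m) ^ (m + 1)) := by gcongr
    _ = M / 3 ^ (m + 1) := by rw [mul_pow]; field_simp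

end Interpolation

section Estimates

theorem pow_div_factorial_le_three_pow (k : ℕ) : (k : ℝ) ^ k / k.factorial ≤ 3 ^ k :=
  calc (k : ℝ) ^ k / k.factorial ≤ Real.exp k := Real.pow_div_factorial_le_exp _ k.cast_nonneg k
    _ = Real.exp 1 ^ k := by rw [← Real.exp_nat_mul, mul_one]
    _ ≤ 3 ^ k := by gcongr; linarith [Real.exp_one_lt_d9]

theorem norm_sum_range_le_of_forall_norm_le_geometric {F : Type*} [SeminormedAddCommGroup F]
    {a : ℕ → F} {C : ℝ} {n : ℕ} (hC : 0 ≤ C)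
    (ha : ∀ k < n, ‖a k‖ ≤ C * (1 / 4) ^ (k + 1)) : ‖∑ k ∈ range n, a k‖ ≤ C / 3 :=
  calc ‖∑ k ∈ range n, a k‖ ≤ ∑ k ∈ range n, C * (1 / 4) ^ (k + 1) :=
        norm_sum_le_of_le _ fun k hk => ha k (mem_range.1 hk)
    _ = C / 3 * (1 - (1 / 4) ^ n) := by
        simp only [pow_succ, ← sum_mul, ← mul_sum]
        rw [geom_sum_eq (by norm_num)]
        ring
    _ ≤ C / 3 := mul_le_of_le_one_right (by positivity) (sub_le_self _ (by positivity))

variable {E F : Type*} [NormedAddCommGroup E] [NormedSpace ℂ E]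
  [NormedAddCommGroup F] [NormedSpace ℂ F]
  {f : E → E} {g : E → F} {x : E} {ρ η δ M : ℝ}

/-- Each application of the difference operator costs a shrinking of the ball by `η` and gains the
factor `2 δ / η` from the Schwarz lemma. -/
theorem BoundedHolo.koopmanDiff_pow (hf : BoundedHolo (f - id) (ball x ρ) δ)
    (hg : BoundedHolo g (ball x ρ) M) (hδ : 0 ≤ δ) (hδη : δ < η) (k : ℕ) :
    BoundedHolo ((koopmanDiff F f ^ k) g) (ball x (ρ - k * η)) (M * (2 * δ / η) ^ k) := by
  have hη : 0 < η := hδ.trans_lt hδη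
  induction k with
  | zero => simpa using hg
  | succ k ih =>
    have hk : 0 ≤ k * η := by positivity
    rw [show ρ - (k + 1 : ℕ) * η = ρ - k * η - η by push_cast; ring]
    have hsub {z} (hz : z ∈ ball x (ρ - k * η - η)) : ball z η ⊆ ball x (ρ - k * η) :=
      ball_subset_ball' (by linarith [mem_ball.1 hz])
    have hρ : ball x (ρ - k * η - η) ⊆ ball x ρ := ball_subset_ball (by linarith)
    have hfz {z} (hz : z ∈ ball x (ρ - k * η - η)) : f z ∈ ball z η := by
      rw [mem_ball, dist_eq_norm]
      exact (hf.norm_le z (hρ hz)).trans_lt hδη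
    have hfd : DifferentiableOn ℂ f (ball x ρ) := by
      simpa using hf.differentiableOn.add differentiableOn_id
    refine ⟨?_, fun z hz => ?_⟩
    · rw [funext (koopmanDiff_pow_succ_apply f g k)]
      exact (ih.differentiableOn.comp (hfd.mono hρ) fun z hz => hsub hz (hfz hz)).sub
        (ih.differentiableOn.mono (ball_subset_ball (by linarith)))
    · rw [koopmanDiff_pow_succ_apply]
      have hM : 0 ≤ M * (2 * δ / η) ^ k := ih.nonneg (hsub hz (mem_ball_self hη))
      calc _ ≤ 2 * (M * (2 * δ / η) ^ k) / η * ‖f z - z‖ :=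
            (ih.mono (hsub hz)).norm_sub_le_div_mul (hfz hz)
        _ ≤ 2 * (M * (2 * δ / η) ^ k) / η * δ := by gcongr; exact hf.norm_le z (hρ hz)
        _ = M * (2 * δ / η) ^ (k + 1) := by rw [pow_succ]; ring

/-- The weight `(5 m) ^ k / k!` dominates the binomial coefficient `t.choose k` for `‖t‖ ≤ 4 m`. -/
theorem weight_mul_norm_koopmanDiff_pow_le {m k : ℕ} (hρ : 0 < ρ) (hδ : 0 ≤ δ)
    (hm : 240 * m * δ ≤ ρ) (hf : BoundedHolo (f - id) (ball x ρ) δ)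
    (hg : BoundedHolo g (ball x ρ) M) (hk : k ≤ m) :
    (5 * m : ℝ) ^ k / k.factorial * ‖(koopmanDiff F f ^ k) g x‖ ≤ M * (1 / 4) ^ k := by
  have hM : 0 ≤ M := hg.nonneg (mem_ball_self hρ)
  rcases Nat.eq_zero_or_pos k with rfl | hk0
  · simpa using hg.norm_le x (mem_ball_self hρ)
  have hkR : (1 : ℝ) ≤ k := by exact_mod_cast hk0
  have hkδ : k * δ ≤ ρ / 240 := by
    have : (k : ℝ) ≤ m := by exact_mod_cast hk
    nlinarith
  have hdiff : ‖(koopmanDiff F f ^ k) g x‖ ≤ M * (2 * δ / (ρ / (k + 1))) ^ k := by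
    have hlt : δ < ρ / (k + 1) := by
      rw [lt_div_iff₀ (by positivity)]; nlinarith
    have hsum : ρ - k * (ρ / (k + 1)) = ρ / (k + 1) := by field_simp; ring
    refine (hf.koopmanDiff_pow hg hδ hlt k).norm_le x (mem_ball_self ?_)
    rw [hsum]
    positivity
  calc (5 * m : ℝ) ^ k / k.factorial * ‖(koopmanDiff F f ^ k) g x‖
      ≤ (5 * m : ℝ) ^ k / k.factorial * (M * (2 * δ / (ρ / (k + k))) ^ k) := by
        gcongr
        refine hdiff.trans ?_
        gcongr
    _ = M * ((20 * m * δ / ρ) ^ k * ((k : ℝ) ^ k / k.factorial)) := by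
        rw [div_mul_eq_mul_div, mul_div_assoc', mul_div_assoc', mul_left_comm, ← mul_pow,
          ← mul_pow]
        congr 3
        field_simp
        ring
    _ ≤ M * ((20 * m * δ / ρ) ^ k * 3 ^ k) := by gcongr; exact pow_div_factorial_le_three_pow k
    _ = M * (60 * m * δ / ρ) ^ k := by rw [← mul_pow]; congr 2; ring
    _ ≤ M * (1 / 4) ^ k := by
        have : 60 * m * δ / ρ ≤ 1 / 4 := by rw [div_le_iff₀ hρ]; linarith
        gcongr

variable {m : ℕ} (hρ : 0 < ρ) (hδ : 0 ≤ δ) (hm : 240 * m * δ ≤ ρ)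
  (hf : BoundedHolo (f - id) (ball x ρ) δ)

include hρ hδ hm hf

theorem norm_newtonInterp_sub_le (hg : BoundedHolo g (ball x ρ) M) {t : ℂ} (ht : ‖t‖ ≤ 4 * m) :
    ‖newtonInterp f m g x t - g x‖ ≤ M / 3 := by
  rw [newtonInterp_eq_add, add_sub_cancel_right]
  refine norm_sum_range_le_of_forall_norm_le_geometric (hg.nonneg (mem_ball_self hρ)) fun k hk => ?_
  rw [norm_smul]
  refine le_trans ?_ (weight_mul_norm_koopmanDiff_pow_le hρ hδ hm hf hg hk)
  gcongr
  exact norm_choose_le hk ht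

theorem newtonInterp_id_mem_ball {t : ℂ} (ht : ‖t‖ ≤ 4 * m) :
    newtonInterp f m id x t ∈ ball x ρ := by
  have hsub : BoundedHolo (fun y => y - x) (ball x ρ) ρ :=
    ⟨by fun_prop, fun z hz => (mem_ball_iff_norm.1 hz).le⟩
  have hdiff : koopmanDiff E f id = koopmanDiff E f fun y => y - x := by
    funext y
    simp only [koopmanDiff_apply, id, sub_sub_sub_cancel_right]
  have hinterp : newtonInterp f m id x t - x = newtonInterp f m (fun y => y - x) x t - (x - x) := by
    simp only [newtonInterp_eq_add, pow_succ, Module.End.mul_apply, hdiff, id, sub_self, add_zero,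
      add_sub_cancel_right, sub_zero]
  rw [mem_ball_iff_norm, hinterp]
  exact (norm_newtonInterp_sub_le hρ hδ hm hf hsub ht).trans_lt (by linarith)

/-- The difference between the interpolated observable and the observable along the interpolated
orbit vanishes at `0, …, m`, so its derivative at `0` is exponentially small. -/
theorem norm_koopmanLog_sub_fderiv_le [CompleteSpace F] (hm1 : 1 ≤ m)
    (hg : BoundedHolo g (ball x ρ) M) :
    ‖koopmanLog F f m g x - fderiv ℂ g x (koopmanLog E f m id x)‖ ≤ M / 3 ^ m := by
  set P := newtonInterp f m id x with hP
  have hM : 0 ≤ M := hg.nonneg (mem_ball_self hρ)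
  have hPmem {t} (ht : ‖t‖ ≤ 4 * m) : P t ∈ ball x ρ := newtonInterp_id_mem_ball hρ hδ hm hf ht
  have hgP {t} (ht : ‖t‖ ≤ 4 * m) : DifferentiableAt ℂ (g ∘ P) t :=
    (hg.differentiableOn.differentiableAt (isOpen_ball.mem_nhds (hPmem ht))).comp t
      (differentiable_newtonInterp f m id x t)
  have hbd : BoundedHolo (newtonInterp f m g x - g ∘ P) (closedBall 0 (4 * m))
      (M / 3 + M + M) := by
    refine ⟨fun t ht => ((differentiable_newtonInterp f m g x t).sub
      (hgP (mem_closedBall_zero_iff.1 ht))).differentiableWithinAt, fun t ht => ?_⟩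
    have ht := mem_closedBall_zero_iff.1 ht
    refine (norm_sub_le _ _).trans (add_le_add ?_ (hg.norm_le _ (hPmem ht)))
    refine (norm_le_norm_sub_add _ (g x)).trans (add_le_add ?_ (hg.norm_le x (mem_ball_self hρ)))
    exact norm_newtonInterp_sub_le hρ hδ hm hf hg ht
  have hzero (j : ℕ) (hj : j < m + 1) : (newtonInterp f m g x - g ∘ P) j = 0 := by
    rw [Pi.sub_apply, Function.comp_apply, hP, newtonInterp_natCast _ (by omega),
      newtonInterp_natCast _ (by omega), id, sub_self]
  have hderiv : deriv (newtonInterp f m g x - g ∘ P) 0 =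
      koopmanLog F f m g x - fderiv ℂ g x (koopmanLog E f m id x) := by
    have hP0 : P 0 = x := newtonInterp_zero f m id x
    have hg0 : HasFDerivAt g (fderiv ℂ g x) (P 0) := by
      rw [hP0]; exact (hg.differentiableAt hρ).hasFDerivAt
    exact ((hasDerivAt_newtonInterp_zero f m g x).sub
      (hg0.comp_hasDerivAt 0 (hasDerivAt_newtonInterp_zero f m id x))).deriv
  rw [← hderiv]
  refine (norm_deriv_zero_le_of_forall_eq_zero hm1 hbd hzero).trans ?_
  rw [div_le_div_iff₀ (by positivity) (by positivity), pow_succ]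
  nlinarith [mul_nonneg hM (pow_nonneg zero_le_three m : (0 : ℝ) ≤ 3 ^ m)]

theorem norm_koopmanDiff_pow_succ_le {k : ℕ} (hk : k + 1 ≤ m) (hg : BoundedHolo g (ball x ρ) M) :
    ‖(koopmanDiff F f ^ (k + 1)) g x‖ ≤ M / m * (1 / 4) ^ (k + 1) := by
  have hm0 : (0 : ℝ) < m := by exact_mod_cast (by omega : 0 < m)
  have hfac : ((k + 1).factorial : ℝ) ≤ m ^ k := by
    have hdesc : (k + 1).factorial ≤ m ^ k := by
      calc (k + 1).factorial = (k + 1).descFactorial k := by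
            simpa using (Nat.factorial_mul_descFactorial (Nat.le_succ k)).symm
        _ ≤ (k + 1) ^ k := Nat.descFactorial_le_pow _ _
        _ ≤ m ^ k := by gcongr
    exact_mod_cast hdesc
  have hweight : (m : ℝ) ≤ (5 * m) ^ (k + 1) / (k + 1).factorial := by
    rw [le_div_iff₀ (by positivity)]
    calc (m : ℝ) * (k + 1).factorial ≤ m * m ^ k := by gcongr
      _ = (1 * m) ^ (k + 1) := by ring
      _ ≤ (5 * m) ^ (k + 1) := by gcongr; norm_num
  rw [div_mul_eq_mul_div, le_div_iff₀ hm0, mul_comm]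
  exact (mul_le_mul_of_nonneg_right hweight (norm_nonneg _)).trans
    (weight_mul_norm_koopmanDiff_pow_le hρ hδ hm hf hg hk)

theorem norm_koopmanLogQuot_sub_le (hm1 : 1 ≤ m) (hg : BoundedHolo g (ball x ρ) M) :
    ‖koopmanLogQuot F f m g x - g x‖ ≤ M / m := by
  have hMm : 0 ≤ M / m := div_nonneg (hg.nonneg (mem_ball_self hρ)) m.cast_nonneg
  have hsplit : koopmanLogQuot F f m g x - g x = ∑ k ∈ range (m - 1),
      ((-1) ^ (k + 1) / ((k + 1 : ℕ) + 1) : ℂ) • (koopmanDiff F f ^ (k + 1)) g x := by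
    obtain ⟨l, rfl⟩ := Nat.exists_eq_add_of_le' hm1
    rw [koopmanLogQuot_apply, sum_range_succ', pow_zero, pow_zero, Nat.cast_zero, zero_add, div_one,
      one_smul, Module.End.one_apply, add_sub_cancel_right, Nat.add_sub_cancel]
  have hcoeff (k : ℕ) : ‖((-1) ^ (k + 1) / ((k + 1 : ℕ) + 1) : ℂ)‖ ≤ 1 := by
    rw [norm_div, norm_pow, norm_neg, norm_one, one_pow, ← Nat.cast_succ, Complex.norm_natCast]
    exact div_le_one_of_le₀ (by exact_mod_cast Nat.succ_pos _) (Nat.cast_nonneg _)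
  rw [hsplit]
  refine (norm_sum_range_le_of_forall_norm_le_geometric hMm fun k hk => ?_).trans
    (div_le_self hMm (by norm_num))
  rw [norm_smul]
  exact (mul_le_of_le_one_left (norm_nonneg _) (hcoeff k)).trans
    (norm_koopmanDiff_pow_succ_le hρ hδ hm hf (by omega) hg)

end Estimates

end Koopman

/-! ### Near-integrals of exact symplectic maps -/

section NearIntegral

variable {d : ℕ}

theorem norm_dotProduct_le (v w : Fin d → ℂ) : ‖v ⬝ᵥ w‖ ≤ d * ‖v‖ * ‖w‖ :=
  calc ‖v ⬝ᵥ w‖ ≤ ∑ _i : Fin d, ‖v‖ * ‖w‖ := norm_sum_le_of_le _ fun i _ =>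
        norm_mul_le_of_le (norm_le_pi_norm v i) (norm_le_pi_norm w i)
    _ = d * ‖v‖ * ‖w‖ := by rw [sum_const, card_univ, Fintype.card_fin, nsmul_eq_mul, mul_assoc]

/-- `f` is exact symplectic at `x` with primitive `A`: the one-forms `f^* (J dφ) - J dφ` and `dA`
agree at `x`. -/
structure IsExactAt (f : CPhase d → CPhase d) (A : CPhase d → ℂ) (x : CPhase d) : Prop where
  differentiableAt : DifferentiableAt ℂ f x
  differentiableAt_primitive : DifferentiableAt ℂ A x
  fderiv_primitive (v : CPhase d) : fderiv ℂ A x v = (f x).1 ⬝ᵥ (fderiv ℂ f x v).2 - x.1 ⬝ᵥ v.2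

namespace IsExactAt

variable {f g : CPhase d → CPhase d} {A B : CPhase d → ℂ} {x : CPhase d}

theorem comp (hg : IsExactAt g B (f x)) (hf : IsExactAt f A x) :
    IsExactAt (g ∘ f) (A + B ∘ f) x where
  differentiableAt := hg.differentiableAt.comp x hf.differentiableAt
  differentiableAt_primitive := hf.differentiableAt_primitive.add
    (hg.differentiableAt_primitive.comp x hf.differentiableAt)
  fderiv_primitive v := by
    rw [fderiv_add hf.differentiableAt_primitive
        (hg.differentiableAt_primitive.comp x hf.differentiableAt),
      fderiv_comp x hg.differentiableAt_primitive hf.differentiableAt,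
      fderiv_comp x hg.differentiableAt hf.differentiableAt, add_apply,
      ContinuousLinearMap.comp_apply, ContinuousLinearMap.comp_apply, hf.fderiv_primitive,
      hg.fderiv_primitive, Function.comp_apply]
    ring

theorem iterate {n : ℕ} (hf : ∀ j < n, IsExactAt f A (f^[j] x)) :
    IsExactAt f^[n] (∑ j ∈ range n, A ∘ f^[j]) x := by
  induction n with
  | zero => exact ⟨differentiableAt_id, differentiableAt_const 0, fun v => by
      simp [show fderiv ℂ (0 : CPhase d → ℂ) x = 0 from fderiv_const_apply 0]⟩
  | succ n ih =>
    rw [Function.iterate_succ', sum_range_succ]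
    exact (hf n n.lt_succ_self).comp (ih fun j hj => hf j (hj.trans n.lt_succ_self))

theorem sub_const (hf : IsExactAt f A x) (c : Fin d → ℂ) :
    IsExactAt (fun z => f z - (0, c)) A x where
  differentiableAt := hf.differentiableAt.sub_const _
  differentiableAt_primitive := hf.differentiableAt_primitive
  fderiv_primitive v := by
    rw [fderiv_sub_const, hf.fderiv_primitive, Prod.fst_sub, sub_zero]

end IsExactAt

/-- The near-integral of a near-identity exact symplectic map `f` with primitive `A`: the value
`J · φ' - A'` of the Hamiltonian of the vector field given by the truncated logarithm of `f`. -/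
noncomputable def nearIntegral (f : CPhase d → CPhase d) (m : ℕ) (A : CPhase d → ℂ)
    (x : CPhase d) : ℂ :=
  x.1 ⬝ᵥ koopmanLog (Fin d → ℂ) f m Prod.snd x - koopmanLogQuot ℂ f m A x

theorem nearIntegral_sub (f : CPhase d → CPhase d) (m : ℕ) (A : CPhase d → ℂ) (x : CPhase d) :
    nearIntegral f m A (f x) - nearIntegral f m A x =
      (f x).1 ⬝ᵥ koopmanLog (Fin d → ℂ) f m (koopmanDiff _ f Prod.snd) x
        + ((f x).1 - x.1) ⬝ᵥ koopmanLog (Fin d → ℂ) f m Prod.snd x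
        - koopmanLog ℂ f m A x := by
  rw [← koopmanLog_apply_sub, ← koopmanLogQuot_apply_sub f m A, dotProduct_sub, sub_dotProduct,
    nearIntegral, nearIntegral]
  ring

section Estimates

variable {f : CPhase d → CPhase d} {A : CPhase d → ℂ} {x : CPhase d} {ρ δ M Λ : ℝ} {m : ℕ}
  (hρ : 0 < ρ) (hδ : 0 ≤ δ) (hm1 : 1 ≤ m) (hm : 240 * m * δ ≤ ρ)
  (hf : BoundedHolo (f - id) (ball x ρ) δ) (hA : BoundedHolo A (ball x ρ) M)

theorem BoundedHolo.koopmanDiff_snd {s : Set (CPhase d)} (hf : BoundedHolo (f - id) s δ) :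
    BoundedHolo (koopmanDiff (Fin d → ℂ) f Prod.snd) s δ :=
  hf.continuousLinearMap_comp (ContinuousLinearMap.snd ℂ (Fin d → ℂ) (Fin d → ℂ))
    (ContinuousLinearMap.norm_snd_le ..)

include hρ hδ hm1 hm hf hA

/-- By exactness the contributions of `dA` and of `J dφ` cancel to first order, leaving only the
two exponentially small remainders of the chain rule for the truncated logarithm. -/
theorem norm_nearIntegral_sub_le (hΛ : ‖(f x).1‖ ≤ Λ) (hex : IsExactAt f A x) :
    ‖nearIntegral f m A (f x) - nearIntegral f m A x‖ ≤ (d * Λ * δ + M) / 3 ^ m := by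
  set v := koopmanLog (CPhase d) f m id x
  set D := koopmanDiff (Fin d → ℂ) f Prod.snd
  have hsnd : koopmanLog (Fin d → ℂ) f m Prod.snd x = v.2 :=
    koopmanLog_comp f m id (LinearMap.snd ℂ (Fin d → ℂ) (Fin d → ℂ)) x
  have hDv : fderiv ℂ D x v = (fderiv ℂ f x v).2 - v.2 := by
    have : HasFDerivAt D ((ContinuousLinearMap.snd ℂ _ _).comp (fderiv ℂ f x) -
        ContinuousLinearMap.snd ℂ _ _) x :=
      hex.differentiableAt.hasFDerivAt.snd.sub hasFDerivAt_snd
    rw [this.fderiv]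
    rfl
  have hsplit : nearIntegral f m A (f x) - nearIntegral f m A x =
      (f x).1 ⬝ᵥ (koopmanLog (Fin d → ℂ) f m D x - fderiv ℂ D x v)
        - (koopmanLog ℂ f m A x - fderiv ℂ A x v) := by
    rw [nearIntegral_sub, hsnd, hex.fderiv_primitive, hDv, dotProduct_sub, dotProduct_sub,
      sub_dotProduct]
    ring
  have hΛ0 : 0 ≤ Λ := (norm_nonneg _).trans hΛ
  rw [hsplit, add_div]
  refine (norm_sub_le _ _).trans (add_le_add ?_
    (norm_koopmanLog_sub_fderiv_le hρ hδ hm hf hm1 hA))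
  refine (norm_dotProduct_le _ _).trans ?_
  rw [mul_div_assoc]
  gcongr
  exact norm_koopmanLog_sub_fderiv_le hρ hδ hm hf hm1 hf.koopmanDiff_snd

theorem norm_nearIntegral_sub_main_le (hΛ : ‖x.1‖ ≤ Λ) :
    ‖nearIntegral f m A x - (x.1 ⬝ᵥ ((f x).2 - x.2) - A x)‖ ≤ (d * Λ * δ + M) / m := by
  set D := koopmanDiff (Fin d → ℂ) f Prod.snd
  have hsplit : nearIntegral f m A x - (x.1 ⬝ᵥ ((f x).2 - x.2) - A x) =
      x.1 ⬝ᵥ (koopmanLogQuot (Fin d → ℂ) f m D x - D x) - (koopmanLogQuot ℂ f m A x - A x) := by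
    rw [dotProduct_sub _ _ (D x)]
    exact sub_sub_sub_comm ..
  have hΛ0 : 0 ≤ Λ := (norm_nonneg _).trans hΛ
  rw [hsplit, add_div]
  refine (norm_sub_le _ _).trans (add_le_add ?_ (norm_koopmanLogQuot_sub_le hρ hδ hm hf hm1 hA))
  refine (norm_dotProduct_le _ _).trans ?_
  rw [mul_div_assoc]
  gcongr
  exact norm_koopmanLogQuot_sub_le hρ hδ hm hf hm1 hf.koopmanDiff_snd

end Estimates

end NearIntegral

/-! ### Exact symplectic maps with a small generating function -/

section Complexification

variable {d : ℕ}

theorem norm_cx (v : Fin d → ℝ) : ‖cx d v‖ = ‖v‖ := by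
  simp only [Pi.norm_def, cx, Complex.nnnorm_real]

theorem cx_zero : cx d 0 = 0 := funext fun _ => Complex.ofReal_zero

theorem cx_add (v w : Fin d → ℝ) : cx d (v + w) = cx d v + cx d w := by
  ext i
  exact Complex.ofReal_add (v i) (w i)

theorem cx_sub (v w : Fin d → ℝ) : cx d (v - w) = cx d v - cx d w := by
  ext i
  exact Complex.ofReal_sub (v i) (w i)

theorem cx_smul (t : ℝ) (v : Fin d → ℝ) : cx d (t • v) = (t : ℂ) • cx d v := by
  ext i
  exact Complex.ofReal_mul t (v i)

end Complexification

section ComplexStrip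

variable {d : ℕ} {L t t' η : ℝ} {w z : CPhase d}

/-- The complex neighbourhood of width `t` of the real phase space over the ball of actions of
radius `L`. -/
def complexStrip (d : ℕ) (L t : ℝ) : Set (CPhase d) := {w | ‖w.1‖ < L + t ∧ ∀ i, |(w.2 i).im| < t}

theorem isOpen_complexStrip : IsOpen (complexStrip d L t) := by
  have hact : IsOpen {w : CPhase d | ‖w.1‖ < L + t} := isOpen_lt (by fun_prop) continuous_const
  have hang (i : Fin d) : IsOpen {w : CPhase d | |(w.2 i).im| < t} :=
    isOpen_lt (by fun_prop) continuous_const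
  have hinter := hact.inter (isOpen_iInter_of_finite hang)
  rwa [← ofPred_forall] at hinter

theorem convex_complexStrip : Convex ℝ (complexStrip d L t) := by
  intro x hx y hy a b ha hb hab
  refine ⟨?_, fun i => ?_⟩
  · simpa using (convex_ball (0 : Fin d → ℂ) (L + t)) (x := x.1) (by simpa using hx.1)
      (y := y.1) (by simpa using hy.1) ha hb hab
  · have him : ((a • x + b • y).2 i).im = a • (x.2 i).im + b • (y.2 i).im := by simp
    rw [him]
    exact abs_lt.2 (convex_Ioo (-t) t (abs_lt.1 (hx.2 i)) (abs_lt.1 (hy.2 i)) ha hb hab)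

theorem complexStrip_mono (h : t ≤ t') : complexStrip d L t ⊆ complexStrip d L t' := fun _ hw =>
  ⟨hw.1.trans_le (by gcongr), fun i => (hw.2 i).trans_le h⟩

theorem mem_complexStrip_of_norm_sub_le (hw : w ∈ complexStrip d L t) (h : ‖z - w‖ ≤ η) :
    z ∈ complexStrip d L (t + η) := by
  refine ⟨?_, fun i => ?_⟩
  · have hfst : ‖z.1 - w.1‖ ≤ η := (norm_fst_le (z - w)).trans h
    linarith [norm_sub_norm_le z.1 w.1, hw.1]
  · have him : |(z.2 i).im - (w.2 i).im| ≤ η := by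
      rw [← Complex.sub_im]
      exact (Complex.abs_im_le_norm _).trans
        ((norm_le_pi_norm (z - w).2 i).trans ((norm_snd_le _).trans h))
    linarith [abs_sub_abs_le_abs_sub (z.2 i).im (w.2 i).im, hw.2 i]

theorem ball_subset_complexStrip_add (hw : w ∈ complexStrip d L t) :
    ball w η ⊆ complexStrip d L (t + η) := fun _ hz =>
  mem_complexStrip_of_norm_sub_le hw (mem_ball_iff_norm.1 hz).le

theorem add_cx_mem_complexStrip (hw : w ∈ complexStrip d L t) (c : Fin d → ℝ) :
    w + (0, cx d c) ∈ complexStrip d L t :=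
  ⟨by simpa using hw.1, fun i => by simpa [cx] using hw.2 i⟩

theorem ball_subset_complexStrip (hw : ‖w.1‖ ≤ L) (him : ∀ i, (w.2 i).im = 0) :
    ball w t ⊆ complexStrip d L t := by
  intro z hz
  rw [mem_ball_iff_norm] at hz
  refine ⟨?_, fun i => ?_⟩
  · have hfst : ‖z.1 - w.1‖ < t := (norm_fst_le (z - w)).trans_lt hz
    linarith [norm_sub_norm_le z.1 w.1]
  · have hi : (z.2 i).im = ((z - w).2 i).im := by simp [him]
    rw [hi]
    exact (Complex.abs_im_le_norm _).trans_lt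
      ((norm_le_pi_norm (z - w).2 i).trans_lt ((norm_snd_le _).trans_lt hz))

end ComplexStrip

section DotProduct

variable {d : ℕ} {E : Type*} [NormedAddCommGroup E] [NormedSpace ℂ E] {u v : E → Fin d → ℂ} {x : E}

theorem hasFDerivAt_dotProduct (hu : DifferentiableAt ℂ u x) (hv : DifferentiableAt ℂ v x) :
    HasFDerivAt (fun y => u y ⬝ᵥ v y) (∑ i, (u x i • (ContinuousLinearMap.proj i).comp
      (fderiv ℂ v x) + v x i • (ContinuousLinearMap.proj i).comp (fderiv ℂ u x))) x :=
  HasFDerivAt.fun_sum fun i _ =>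
    (hasFDerivAt_pi'.1 hu.hasFDerivAt i).mul (hasFDerivAt_pi'.1 hv.hasFDerivAt i)

theorem differentiableAt_dotProduct (hu : DifferentiableAt ℂ u x) (hv : DifferentiableAt ℂ v x) :
    DifferentiableAt ℂ (fun y => u y ⬝ᵥ v y) x :=
  (hasFDerivAt_dotProduct hu hv).differentiableAt

theorem fderiv_dotProduct_apply (hu : DifferentiableAt ℂ u x) (hv : DifferentiableAt ℂ v x)
    (w : E) : fderiv ℂ (fun y => u y ⬝ᵥ v y) x w =
      u x ⬝ᵥ fderiv ℂ v x w + fderiv ℂ u x w ⬝ᵥ v x := by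
  rw [(hasFDerivAt_dotProduct hu hv).fderiv, _root_.sum_apply, dotProduct_comm _ (v x)]
  exact sum_add_distrib

end DotProduct

section Gradients

variable {d : ℕ} {S : CPhase d → ℂ} {w : CPhase d}

/-- The partial gradient of `S` in the angles. -/
noncomputable def gradPhi (S : CPhase d → ℂ) (w : CPhase d) : Fin d → ℂ :=
  fun i => fderiv ℂ S w (0, Pi.single i 1)

/-- The partial gradient of `S` in the actions. -/
noncomputable def gradJ (S : CPhase d → ℂ) (w : CPhase d) : Fin d → ℂ :=
  fun i => fderiv ℂ S w (Pi.single i 1, 0)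

theorem norm_gradPhi_le (S : CPhase d → ℂ) (w : CPhase d) : ‖gradPhi S w‖ ≤ ‖fderiv ℂ S w‖ :=
  (pi_norm_le_iff_of_nonneg (norm_nonneg _)).2 fun i =>
    (fderiv ℂ S w).unit_le_opNorm _ (by simp [Prod.norm_def, Pi.norm_single])

theorem norm_gradJ_le (S : CPhase d → ℂ) (w : CPhase d) : ‖gradJ S w‖ ≤ ‖fderiv ℂ S w‖ :=
  (pi_norm_le_iff_of_nonneg (norm_nonneg _)).2 fun i =>
    (fderiv ℂ S w).unit_le_opNorm _ (by simp [Prod.norm_def, Pi.norm_single])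

theorem fderiv_apply_eq_dotProduct (S : CPhase d → ℂ) (w v : CPhase d) :
    fderiv ℂ S w v = v.1 ⬝ᵥ gradJ S w + v.2 ⬝ᵥ gradPhi S w := by
  have hv : v = ∑ i, v.1 i • ((Pi.single i 1, 0) : CPhase d)
      + ∑ i, v.2 i • ((0, Pi.single i 1) : CPhase d) := by
    ext j
    · simp [Prod.fst_sum, Finset.sum_apply, Pi.single_apply]
    · simp [Prod.snd_sum, Finset.sum_apply, Pi.single_apply]
  conv_lhs => rw [hv]
  simp only [map_add, map_sum, map_smul]
  rfl

theorem differentiableAt_gradPhi (hS : AnalyticAt ℂ S w) :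
    DifferentiableAt ℂ (gradPhi S) w :=
  differentiableAt_pi.2 fun _ => hS.fderiv.differentiableAt.clm_apply (differentiableAt_const _)

theorem differentiableAt_gradJ (hS : AnalyticAt ℂ S w) :
    DifferentiableAt ℂ (gradJ S) w :=
  differentiableAt_pi.2 fun _ => hS.fderiv.differentiableAt.clm_apply (differentiableAt_const _)

end Gradients

/-- The generating function `S` is analytic and bounded by `M` on the complex strip of width `4 τ`
over the ball of actions of radius `L`, and is so small that the map it generates is defined on the
strip of width `τ`. -/
structure SmallGenerator {d : ℕ} (L τ M : ℝ) (S : CPhase d → ℂ) : Prop where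
  τ_pos : 0 < τ
  analyticOnNhd : AnalyticOnNhd ℂ S (complexStrip d L (4 * τ))
  norm_le : ∀ w ∈ complexStrip d L (4 * τ), ‖S w‖ ≤ M
  small : 8 * M ≤ τ ^ 2

section GenMap

variable {d : ℕ} {L τ M : ℝ} {S : CPhase d → ℂ} {w w' z : CPhase d} {c : Fin d → ℝ}

/-- The inverse, with values in the strip of width `2 τ`, of the implicit relation
`J = J' + ∂S/∂φ (J', φ)` defining the new actions `J'` in terms of `(J, φ)`. -/
noncomputable def genInv (L τ : ℝ) (S : CPhase d → ℂ) : CPhase d → CPhase d :=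
  Function.invFunOn (fun w => w + (gradPhi S w, 0)) (complexStrip d L (2 * τ))

/-- The symplectic map `(J, φ) ↦ (J', φ')` given by `J = J' + ∂S/∂φ (J', φ)` and
`φ' = φ + c + ∂S/∂J (J', φ)`. -/
noncomputable def genMap (L τ : ℝ) (S : CPhase d → ℂ) (c : Fin d → ℝ) (z : CPhase d) : CPhase d :=
  ((genInv L τ S z).1, z.2 + cx d c + gradJ S (genInv L τ S z))

/-- The primitive `J' · ∂S/∂J (J', φ) - S (J', φ)` of the map generated by `S`. -/
noncomputable def genPrimitive (L τ : ℝ) (S : CPhase d → ℂ) (z : CPhase d) : ℂ :=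
  (genInv L τ S z).1 ⬝ᵥ gradJ S (genInv L τ S z) - S (genInv L τ S z)

namespace SmallGenerator

theorem boundedHolo (h : SmallGenerator L τ M S) : BoundedHolo S (complexStrip d L (4 * τ)) M :=
  ⟨h.analyticOnNhd.differentiableOn, h.norm_le⟩

theorem M_nonneg (h : SmallGenerator L τ M S) (hw : w ∈ complexStrip d L (4 * τ)) : 0 ≤ M :=
  h.boundedHolo.nonneg hw

theorem step_le (h : SmallGenerator L τ M S) : 2 * M / τ ≤ τ / 4 := by
  rw [div_le_iff₀ h.τ_pos]
  linarith [h.small]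

theorem norm_fderiv_le (h : SmallGenerator L τ M S) (hw : w ∈ complexStrip d L (3 * τ)) :
    ‖fderiv ℂ S w‖ ≤ 2 * M / τ := by
  have hb := ball_subset_complexStrip_add (η := τ) hw
  rw [show 3 * τ + τ = 4 * τ by ring] at hb
  exact (h.boundedHolo.mono hb).norm_fderiv_le h.τ_pos

theorem norm_gradJ_le (h : SmallGenerator L τ M S) (hw : w ∈ complexStrip d L (3 * τ)) :
    ‖gradJ S w‖ ≤ 2 * M / τ := (_root_.norm_gradJ_le S w).trans (h.norm_fderiv_le hw)

theorem boundedHolo_gradPhi (h : SmallGenerator L τ M S) :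
    BoundedHolo (fun w => ((gradPhi S w, 0) : CPhase d)) (complexStrip d L (3 * τ))
      (2 * M / τ) where
  differentiableOn w hw := ((_root_.differentiableAt_gradPhi (h.analyticOnNhd w (complexStrip_mono
    (by linarith [h.τ_pos]) hw))).prodMk (differentiableAt_const 0)).differentiableWithinAt
  norm_le w hw := by
    rw [Prod.norm_mk, norm_zero, max_eq_left (norm_nonneg _)]
    exact (norm_gradPhi_le S w).trans (h.norm_fderiv_le hw)

theorem norm_fderiv_gradPhi_le (h : SmallGenerator L τ M S) (hw : w ∈ complexStrip d L (2 * τ)) :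
    ‖fderiv ℂ (fun w => ((gradPhi S w, 0) : CPhase d)) w‖ ≤ 1 / 2 := by
  have hb := ball_subset_complexStrip_add (η := τ) hw
  rw [show 2 * τ + τ = 3 * τ by ring] at hb
  refine ((h.boundedHolo_gradPhi.mono hb).norm_fderiv_le h.τ_pos).trans ?_
  rw [div_le_iff₀ h.τ_pos]
  linarith [h.step_le]

theorem differentiableAt_gradPhi (h : SmallGenerator L τ M S)
    (hw : w ∈ complexStrip d L (2 * τ)) :
    DifferentiableAt ℂ (fun w => ((gradPhi S w, 0) : CPhase d)) w :=
  h.boundedHolo_gradPhi.differentiableOn.differentiableAt (isOpen_complexStrip.mem_nhds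
    (complexStrip_mono (by linarith [h.τ_pos]) hw))

theorem approximatesLinearOn (h : SmallGenerator L τ M S) :
    ApproximatesLinearOn (fun w => w + (gradPhi S w, 0)) (ContinuousLinearMap.id ℂ (CPhase d))
      (complexStrip d L (2 * τ)) (1 / 2) := fun w hw w' hw' => by
  have hlip := convex_complexStrip.norm_image_sub_le_of_norm_fderiv_le (𝕜 := ℂ)
    (fun _ => h.differentiableAt_gradPhi) (fun _ => h.norm_fderiv_gradPhi_le) hw' hw
  rw [ContinuousLinearMap.id_apply, add_sub_add_comm, add_sub_cancel_left]
  simpa using hlip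

theorem surjOn (h : SmallGenerator L τ M S) :
    SurjOn (fun w => w + (gradPhi S w, 0)) (complexStrip d L (2 * τ)) (complexStrip d L τ) := by
  intro z hz
  have hτ := h.τ_pos
  have hsub : closedBall z (τ / 2) ⊆ complexStrip d L (2 * τ) := fun w hw =>
    complexStrip_mono (by linarith)
      (mem_complexStrip_of_norm_sub_le hz (mem_closedBall_iff_norm.1 hw))
  have hsurj := h.approximatesLinearOn.surjOn_closedBall_of_nonlinearRightInverse
    ⟨id, 1, fun _ => by simp, fun _ => rfl⟩ (by positivity) hsub
  have hstep := (h.boundedHolo_gradPhi.norm_le z (complexStrip_mono (by linarith) hz)).trans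
    h.step_le
  obtain ⟨w, hw, hwz⟩ := hsurj (show z ∈ closedBall _ _ by
    rw [mem_closedBall', dist_eq_norm, add_sub_cancel_left]
    refine hstep.trans_eq ?_
    norm_num
    ring)
  exact ⟨w, hsub hw, hwz⟩

theorem norm_sub_le_two_mul (h : SmallGenerator L τ M S) (hw : w ∈ complexStrip d L (2 * τ))
    (hw' : w' ∈ complexStrip d L (2 * τ)) :
    ‖w - w'‖ ≤ 2 * ‖(w + (gradPhi S w, 0)) - (w' + (gradPhi S w', 0))‖ := by
  have happrox : ‖(w + (gradPhi S w, 0)) - (w' + (gradPhi S w', 0)) - (w - w')‖ ≤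
      1 / 2 * ‖w - w'‖ := by simpa using h.approximatesLinearOn w hw w' hw'
  linarith [norm_sub_norm_le (w - w') ((w + (gradPhi S w, 0)) - (w' + (gradPhi S w', 0))),
    norm_sub_rev (w - w') ((w + (gradPhi S w, 0)) - (w' + (gradPhi S w', 0)))]

theorem genInv_mem (h : SmallGenerator L τ M S) (hz : z ∈ complexStrip d L τ) :
    genInv L τ S z ∈ complexStrip d L (2 * τ) :=
  Function.invFunOn_mem (h.surjOn hz)

theorem genInv_add (h : SmallGenerator L τ M S) (hz : z ∈ complexStrip d L τ) :
    genInv L τ S z + (gradPhi S (genInv L τ S z), 0) = z :=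
  Function.invFunOn_eq (h.surjOn hz)

theorem genInv_eq (h : SmallGenerator L τ M S) (hw : w ∈ complexStrip d L (2 * τ))
    (hz : w + (gradPhi S w, 0) ∈ complexStrip d L τ) :
    genInv L τ S (w + (gradPhi S w, 0)) = w := by
  have hle := h.norm_sub_le_two_mul (h.genInv_mem hz) hw
  rw [h.genInv_add hz, sub_self, norm_zero, mul_zero] at hle
  exact sub_eq_zero.1 (norm_le_zero_iff.1 hle)

theorem genInv_snd (h : SmallGenerator L τ M S) (hz : z ∈ complexStrip d L τ) :
    (genInv L τ S z).2 = z.2 := by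
  simpa using congrArg Prod.snd (h.genInv_add hz)

theorem genInv_fst_add (h : SmallGenerator L τ M S) (hz : z ∈ complexStrip d L τ) :
    (genInv L τ S z).1 + gradPhi S (genInv L τ S z) = z.1 := by
  simpa using congrArg Prod.fst (h.genInv_add hz)

theorem continuousOn_genInv (h : SmallGenerator L τ M S) :
    ContinuousOn (genInv L τ S) (complexStrip d L τ) :=
  (LipschitzOnWith.of_dist_le_mul (K := 2) fun x hx y hy => by
    have hle := h.norm_sub_le_two_mul (h.genInv_mem hx) (h.genInv_mem hy)
    rwa [h.genInv_add hx, h.genInv_add hy, ← dist_eq_norm, ← dist_eq_norm] at hle).continuousOn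

theorem differentiableAt_genInv (h : SmallGenerator L τ M S) (hz : z ∈ complexStrip d L τ) :
    DifferentiableAt ℂ (genInv L τ S) z := by
  have hnhds : complexStrip d L τ ∈ nhds z := isOpen_complexStrip.mem_nhds hz
  set w := genInv L τ S z
  set T := fderiv ℂ (fun w => ((gradPhi S w, 0) : CPhase d)) w
  have hw := h.genInv_mem hz
  have hT : ‖-T‖ < 1 := by
    rw [norm_neg]
    exact (h.norm_fderiv_gradPhi_le hw).trans_lt one_half_lt_one
  have hder : HasFDerivAt (fun w => w + (gradPhi S w, 0))
      (ContinuousLinearEquiv.ofUnit (Units.oneSub (-T) hT) : CPhase d →L[ℂ] CPhase d) w := by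
    refine ((hasFDerivAt_id w).add (h.differentiableAt_gradPhi hw).hasFDerivAt).congr_fderiv ?_
    change _ = ((Units.oneSub (-T) hT : (CPhase d →L[ℂ] CPhase d)ˣ) : CPhase d →L[ℂ] CPhase d)
    rw [Units.val_oneSub, sub_neg_eq_add]
    rfl
  exact (HasFDerivAt.of_local_left_inverse (h.continuousOn_genInv.continuousAt hnhds) hder
    (Filter.eventually_of_mem hnhds fun _ => h.genInv_add)).differentiableAt

theorem genMap_sub (h : SmallGenerator L τ M S) (c : Fin d → ℝ) (hz : z ∈ complexStrip d L τ) :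
    genMap L τ S c z - z - (0, cx d c) =
      (-gradPhi S (genInv L τ S z), gradJ S (genInv L τ S z)) := by
  refine Prod.ext ?_ ?_
  · have hfst : (genMap L τ S c z - z - (0, cx d c)).1 = (genInv L τ S z).1 - z.1 := sub_zero _
    rw [hfst, ← h.genInv_fst_add hz, sub_add_cancel_left]
  · simp only [genMap, Prod.snd_sub]
    abel

theorem norm_genMap_sub_le (h : SmallGenerator L τ M S) (c : Fin d → ℝ)
    (hz : z ∈ complexStrip d L τ) : ‖genMap L τ S c z - z - (0, cx d c)‖ ≤ 2 * M / τ := by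
  have hw : genInv L τ S z ∈ complexStrip d L (3 * τ) :=
    complexStrip_mono (by linarith [h.τ_pos]) (h.genInv_mem hz)
  rw [h.genMap_sub c hz, Prod.norm_mk, norm_neg]
  exact max_le ((norm_gradPhi_le S _).trans (h.norm_fderiv_le hw)) (h.norm_gradJ_le hw)

theorem norm_genPrimitive_le (h : SmallGenerator L τ M S) (hz : z ∈ complexStrip d L τ) :
    ‖genPrimitive L τ S z‖ ≤ d * (L + 2 * τ) * (2 * M / τ) + M := by
  have hτ := h.τ_pos
  have hw := h.genInv_mem hz
  have hL : 0 ≤ L + 2 * τ := (norm_nonneg _).trans hw.1.le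
  refine (norm_sub_le _ _).trans (add_le_add ((norm_dotProduct_le _ _).trans ?_)
    (h.norm_le _ (complexStrip_mono (by linarith) hw)))
  gcongr
  · exact hw.1.le
  · exact h.norm_gradJ_le (complexStrip_mono (by linarith) hw)

theorem isExactAt_genMap (h : SmallGenerator L τ M S) (c : Fin d → ℝ)
    (hz : z ∈ complexStrip d L τ) : IsExactAt (genMap L τ S c) (genPrimitive L τ S) z := by
  have hS : AnalyticAt ℂ S (genInv L τ S z) := h.analyticOnNhd _
    (complexStrip_mono (by linarith [h.τ_pos]) (h.genInv_mem hz))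
  have hW := h.differentiableAt_genInv hz
  set G := fun z => gradJ S (genInv L τ S z)
  have hG : DifferentiableAt ℂ G z := (differentiableAt_gradJ hS).comp z hW
  have hSW : DifferentiableAt ℂ (S ∘ genInv L τ S) z := hS.differentiableAt.comp z hW
  have hF : HasFDerivAt (genMap L τ S c) (((ContinuousLinearMap.fst ℂ _ _).comp
      (fderiv ℂ (genInv L τ S) z)).prod (ContinuousLinearMap.snd ℂ _ _ + fderiv ℂ G z)) z :=
    hW.hasFDerivAt.fst.prodMk ((hasFDerivAt_snd.add_const _).add hG.hasFDerivAt)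
  have hW_snd (v : CPhase d) : (fderiv ℂ (genInv L τ S) z v).2 = v.2 := by
    have heq : (fun z => (genInv L τ S z).2) =ᶠ[nhds z] Prod.snd :=
      Filter.eventually_of_mem (isOpen_complexStrip.mem_nhds hz) fun _ => h.genInv_snd
    exact congrArg (· v)
      (hW.hasFDerivAt.snd.unique (hasFDerivAt_snd.congr_of_eventuallyEq heq))
  have hW_fst (v : CPhase d) : fderiv ℂ (fun z => (genInv L τ S z).1) z v =
      (fderiv ℂ (genInv L τ S) z v).1 := congrArg (· v) hW.hasFDerivAt.fst.fderiv
  refine ⟨hF.differentiableAt, (differentiableAt_dotProduct hW.fst hG).sub hSW, fun v => ?_⟩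
  have hA : fderiv ℂ (genPrimitive L τ S) z v = (genInv L τ S z).1 ⬝ᵥ fderiv ℂ G z v
      + (fderiv ℂ (genInv L τ S) z v).1 ⬝ᵥ G z
      - fderiv ℂ S (genInv L τ S z) (fderiv ℂ (genInv L τ S) z v) := by
    rw [← hW_fst, ← fderiv_dotProduct_apply hW.fst hG, ← ContinuousLinearMap.comp_apply,
      ← fderiv_comp z hS.differentiableAt hW]
    exact congrArg (· v) (fderiv_sub (differentiableAt_dotProduct hW.fst hG) hSW)
  rw [hA, fderiv_apply_eq_dotProduct, hW_snd, hF.fderiv, ← h.genInv_fst_add hz, add_dotProduct,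
    dotProduct_comm (gradPhi _ _)]
  change _ = (genInv L τ S z).1 ⬝ᵥ (v.2 + fderiv ℂ G z v) - _
  rw [dotProduct_add]
  ring

end SmallGenerator

end GenMap

section Iterates

variable {d : ℕ} {L τ M : ℝ} {S : CPhase d → ℂ} {c : Fin d → ℝ} {x z : CPhase d} {j n m : ℕ}

/-- The `n`-th iterate of the map generated by `S`, followed by the translation of the angles by
`-n • c`: a map close to the identity. For integral `n • c` it is a lift of the `n`-th iterate. -/
noncomputable def returnMap (L τ : ℝ) (S : CPhase d → ℂ) (c : Fin d → ℝ) (n : ℕ) (z : CPhase d) :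
    CPhase d := (genMap L τ S c)^[n] z - (0, cx d (n • c))

/-- The primitive of `returnMap`. -/
noncomputable def returnPrimitive (L τ : ℝ) (S : CPhase d → ℂ) (c : Fin d → ℝ) (n : ℕ) :
    CPhase d → ℂ := ∑ j ∈ range n, genPrimitive L τ S ∘ (genMap L τ S c)^[j]

namespace SmallGenerator

theorem norm_iterate_sub_le (h : SmallGenerator L τ M S)
    (hz : ∀ i < j, (genMap L τ S c)^[i] z ∈ complexStrip d L τ) :
    ‖(genMap L τ S c)^[j] z - (z + (0, cx d (j • c)))‖ ≤ j * (2 * M / τ) := by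
  induction j with
  | zero => simp [cx_zero]
  | succ j ih =>
    have hsplit : (genMap L τ S c)^[j + 1] z - (z + (0, cx d ((j + 1) • c))) =
        ((genMap L τ S c)^[j] z - (z + (0, cx d (j • c)))) +
          (genMap L τ S c ((genMap L τ S c)^[j] z) - (genMap L τ S c)^[j] z - (0, cx d c)) := by
      have hadd : ((0, cx d ((j + 1) • c)) : CPhase d) = (0, cx d (j • c)) + (0, cx d c) := by
        rw [Prod.mk_add_mk, add_zero, ← cx_add, succ_nsmul]
      rw [Function.iterate_succ_apply', hadd]
      abel
    rw [hsplit, Nat.cast_succ, add_one_mul]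
    exact (norm_add_le _ _).trans (add_le_add (ih fun i hi => hz i (hi.trans j.lt_succ_self))
      (h.norm_genMap_sub_le c (hz j j.lt_succ_self)))

theorem iterate_mem (h : SmallGenerator L τ M S) (hz : z ∈ complexStrip d L (τ / 2))
    (hn : n * (2 * M / τ) ≤ τ / 2) (hj : j ≤ n) :
    (genMap L τ S c)^[j] z ∈ complexStrip d L τ := by
  have hτ := h.τ_pos
  have hM := h.M_nonneg (complexStrip_mono (by linarith) hz)
  induction j using Nat.strong_induction_on with
  | _ j ih =>
    have hdrift := h.norm_iterate_sub_le (c := c) fun i hi => ih i hi (hi.le.trans hj)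
    have hstrip := mem_complexStrip_of_norm_sub_le (add_cx_mem_complexStrip hz (j • c))
      (hdrift.trans ((by gcongr : (j : ℝ) * (2 * M / τ) ≤ n * (2 * M / τ)).trans hn))
    rwa [add_halves] at hstrip

theorem norm_iterate_sub_le_of_le (h : SmallGenerator L τ M S)
    (hz : z ∈ complexStrip d L (τ / 2)) (hn : n * (2 * M / τ) ≤ τ / 2) (hj : j ≤ n) :
    ‖(genMap L τ S c)^[j] z - (z + (0, cx d (j • c)))‖ ≤ j * (2 * M / τ) :=
  h.norm_iterate_sub_le fun _ hi => h.iterate_mem hz hn (hi.le.trans hj)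

theorem isExactAt_returnMap (h : SmallGenerator L τ M S) (hz : z ∈ complexStrip d L (τ / 2))
    (hn : n * (2 * M / τ) ≤ τ / 2) :
    IsExactAt (returnMap L τ S c n) (returnPrimitive L τ S c n) z :=
  (IsExactAt.iterate fun _ hj => h.isExactAt_genMap c (h.iterate_mem hz hn hj.le)).sub_const _

theorem boundedHolo_returnMap (h : SmallGenerator L τ M S) (hn : n * (2 * M / τ) ≤ τ / 2) :
    BoundedHolo (returnMap L τ S c n - id) (complexStrip d L (τ / 2)) (n * (2 * M / τ)) where
  differentiableOn _ hz := ((h.isExactAt_returnMap hz hn).differentiableAt.sub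
    differentiableAt_id).differentiableWithinAt
  norm_le z hz := by
    rw [Pi.sub_apply, returnMap, sub_sub, add_comm]
    exact h.norm_iterate_sub_le_of_le hz hn le_rfl

theorem boundedHolo_returnPrimitive (h : SmallGenerator L τ M S)
    (hn : n * (2 * M / τ) ≤ τ / 2) : BoundedHolo (returnPrimitive L τ S c n)
      (complexStrip d L (τ / 2)) (n * (d * (L + 2 * τ) * (2 * M / τ) + M)) where
  differentiableOn _ hz :=
    (h.isExactAt_returnMap hz hn).differentiableAt_primitive.differentiableWithinAt
  norm_le z hz := by
    rw [returnPrimitive, Finset.sum_apply]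
    refine (norm_sum_le_of_le _ fun j hj =>
      h.norm_genPrimitive_le (h.iterate_mem hz hn (mem_range.1 hj).le)).trans_eq ?_
    rw [sum_const, card_range, nsmul_eq_mul]

theorem iterate_snd (j : ℕ) (z : CPhase d) : ((genMap L τ S c)^[j] z).2 =
    z.2 + cx d (j • c) + ∑ i ∈ range j, gradJ S (genInv L τ S ((genMap L τ S c)^[i] z)) := by
  induction j with
  | zero => simp [cx_zero]
  | succ j ih =>
    rw [Function.iterate_succ_apply', sum_range_succ, succ_nsmul, cx_add]
    simp only [genMap] at ih ⊢
    rw [ih]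
    abel

/-- Up to second order, the Hamiltonian of the return map is the sum of the generating function
along the orbit. -/
theorem norm_returnMap_main_sub_sum_le (h : SmallGenerator L τ M S)
    (hz : z ∈ complexStrip d L (τ / 2)) (hn : n * (2 * M / τ) ≤ τ / 2) :
    ‖z.1 ⬝ᵥ ((returnMap L τ S c n z).2 - z.2) - returnPrimitive L τ S c n z
      - ∑ j ∈ range n, S (genInv L τ S ((genMap L τ S c)^[j] z))‖ ≤ d * (n * (2 * M / τ)) ^ 2 := by
  have hτ := h.τ_pos
  have hb : 0 ≤ 2 * M / τ := by
    have := h.M_nonneg (complexStrip_mono (by linarith) hz)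
    positivity
  set w : ℕ → CPhase d := fun j => genInv L τ S ((genMap L τ S c)^[j] z)
  have hsplit : z.1 ⬝ᵥ ((returnMap L τ S c n z).2 - z.2) - returnPrimitive L τ S c n z
      - ∑ j ∈ range n, S (w j) = ∑ j ∈ range n, (z.1 - (w j).1) ⬝ᵥ gradJ S (w j) := by
    have hsnd : (returnMap L τ S c n z).2 - z.2 = ∑ j ∈ range n, gradJ S (w j) := by
      rw [returnMap, Prod.snd_sub, iterate_snd]
      abel
    rw [hsnd, returnPrimitive, dotProduct_sum, Finset.sum_apply, ← sum_sub_distrib,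
      ← sum_sub_distrib]
    refine sum_congr rfl fun j _ => ?_
    rw [Function.comp_apply, genPrimitive, sub_dotProduct]
    ring
  have hterm (j : ℕ) (hj : j ∈ range n) :
      ‖(z.1 - (w j).1) ⬝ᵥ gradJ S (w j)‖ ≤ d * (n * (2 * M / τ)) * (2 * M / τ) := by
    have hjn : j + 1 ≤ n := mem_range.1 hj
    have hw : w j ∈ complexStrip d L (3 * τ) := complexStrip_mono (by linarith)
      (h.genInv_mem (h.iterate_mem hz hn ((Nat.le_succ j).trans hjn)))
    have hdrift : ‖z.1 - (w j).1‖ ≤ n * (2 * M / τ) := by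
      have hfst : (w j).1 - z.1 =
          ((genMap L τ S c)^[j + 1] z - (z + (0, cx d ((j + 1) • c)))).1 := by
        rw [Function.iterate_succ_apply', Prod.fst_sub, Prod.fst_add, add_zero]
        rfl
      rw [norm_sub_rev, hfst]
      refine ((norm_fst_le _).trans (h.norm_iterate_sub_le_of_le hz hn hjn)).trans ?_
      gcongr
    refine (norm_dotProduct_le _ _).trans ?_
    gcongr
    exact h.norm_gradJ_le hw
  rw [hsplit]
  refine (norm_sum_le_of_le _ hterm).trans_eq ?_
  rw [sum_const, card_range, nsmul_eq_mul]
  ring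

end SmallGenerator

/-- The ratio between `M` and the natural bound on the near-integral of the map generated by a
function bounded by `M`. -/
noncomputable def energyConst (d : ℕ) (L τ : ℝ) : ℝ := 4 * d * (L + 2 * τ) / τ + 1

namespace SmallGenerator

theorem energyConst_bound (h : SmallGenerator L τ M S) (hM : 0 ≤ M) :
    d * (L + τ) * (n * (2 * M / τ)) + n * (d * (L + 2 * τ) * (2 * M / τ) + M) ≤
      n * M * energyConst d L τ := by
  have hτ := h.τ_pos
  have hgap : n * M * energyConst d L τ - (d * (L + τ) * (n * (2 * M / τ)) +
      n * (d * (L + 2 * τ) * (2 * M / τ) + M)) = 2 * d * n * M := by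
    rw [energyConst]
    field_simp
    ring
  linarith [show 0 ≤ 2 * d * n * M by positivity]

section NearIntegral

variable (h : SmallGenerator L τ M S) (hx : ‖x.1‖ ≤ L) (him : ∀ i, (x.2 i).im = 0) (hm1 : 1 ≤ m)
  (hm : 240 * m * (n * (2 * M / τ)) ≤ τ / 2)

include h hx him hm1 hm

theorem mul_step_le : n * (2 * M / τ) ≤ τ / 2 := by
  have hx : x ∈ complexStrip d L (4 * τ) :=
    ball_subset_complexStrip hx him (mem_ball_self (by linarith [h.τ_pos]))
  have hδ : 0 ≤ n * (2 * M / τ) :=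
    mul_nonneg n.cast_nonneg (div_nonneg (by linarith [h.M_nonneg hx]) h.τ_pos.le)
  have hm1' : (1 : ℝ) ≤ m := Nat.one_le_cast.2 hm1
  exact (le_mul_of_one_le_left hδ (by linarith)).trans hm

theorem norm_nearIntegral_returnMap_sub_le :
    ‖nearIntegral (returnMap L τ S c n) m (returnPrimitive L τ S c n) (returnMap L τ S c n x)
      - nearIntegral (returnMap L τ S c n) m (returnPrimitive L τ S c n) x‖ ≤
      n * M * energyConst d L τ / 3 ^ m := by
  have hn := h.mul_step_le hx him hm1 hm
  have hball := ball_subset_complexStrip (t := τ / 2) hx him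
  have hxs := hball (mem_ball_self (half_pos h.τ_pos))
  have hf := h.boundedHolo_returnMap (c := c) hn
  have hfst : ‖(returnMap L τ S c n x).1‖ ≤ L + τ := by
    have hdrift := (norm_fst_le _).trans (hf.norm_le x hxs)
    linarith [norm_sub_norm_le (returnMap L τ S c n x).1 x.1, h.τ_pos,
      show ‖(returnMap L τ S c n x).1 - x.1‖ ≤ _ from hdrift]
  refine (norm_nearIntegral_sub_le (half_pos h.τ_pos) (hf.nonneg hxs) hm1 hm (hf.mono hball)
    ((h.boundedHolo_returnPrimitive hn).mono hball) hfst (h.isExactAt_returnMap hxs hn)).trans ?_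
  gcongr
  exact h.energyConst_bound (h.M_nonneg (complexStrip_mono (by linarith [h.τ_pos]) hxs))

theorem norm_nearIntegral_returnMap_sub_sum_le :
    ‖nearIntegral (returnMap L τ S c n) m (returnPrimitive L τ S c n) x
      - ∑ j ∈ range n, S (genInv L τ S ((genMap L τ S c)^[j] x))‖ ≤
      n * M * energyConst d L τ / m + d * (n * (2 * M / τ)) ^ 2 := by
  have hn := h.mul_step_le hx him hm1 hm
  have hball := ball_subset_complexStrip (t := τ / 2) hx him
  have hxs := hball (mem_ball_self (half_pos h.τ_pos))
  have hf := h.boundedHolo_returnMap (c := c) hn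
  refine (norm_sub_le_norm_sub_add_norm_sub _ _ _).trans
    (add_le_add ?_ (h.norm_returnMap_main_sub_sum_le hxs hn))
  refine (norm_nearIntegral_sub_main_le (Λ := L + τ) (half_pos h.τ_pos) (hf.nonneg hxs) hm1 hm
    (hf.mono hball) ((h.boundedHolo_returnPrimitive hn).mono hball)
    (hx.trans (by linarith [h.τ_pos]))).trans ?_
  gcongr
  exact h.energyConst_bound (h.M_nonneg (complexStrip_mono (by linarith [h.τ_pos]) hxs))

end NearIntegral

end SmallGenerator

end Iterates

/-! ### Holomorphic extension of real-analytic functions -/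

section ComplexMultilinear

variable {d n : ℕ}

/-- The `ℂ`-multilinear form on `ℂ^d` with the same coefficients in the standard basis as the
`ℝ`-multilinear form `f` on `ℝ^d`. -/
noncomputable def complexMultilinear
    (f : ContinuousMultilinearMap ℝ (fun _ : Fin n => Fin d → ℝ) ℝ) :
    ContinuousMultilinearMap ℂ (fun _ : Fin n => Fin d → ℂ) ℂ :=
  ∑ s : Fin n → Fin d, ((f fun k => Pi.single (s k) 1 : ℝ) : ℂ) •
    (ContinuousMultilinearMap.mkPiAlgebra ℂ (Fin n) ℂ).compContinuousLinearMap
      (fun k => ContinuousLinearMap.proj (s k))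

variable (f : ContinuousMultilinearMap ℝ (fun _ : Fin n => Fin d → ℝ) ℝ)

theorem complexMultilinear_apply (z : Fin n → Fin d → ℂ) :
    complexMultilinear f z =
      ∑ s : Fin n → Fin d, ((f fun k => Pi.single (s k) 1 : ℝ) : ℂ) * ∏ k, z k (s k) := by
  simp only [complexMultilinear, _root_.sum_apply, _root_.smul_apply, smul_eq_mul,
    ContinuousMultilinearMap.compContinuousLinearMap_apply,
    ContinuousMultilinearMap.mkPiAlgebra_apply, ContinuousLinearMap.proj_apply]

theorem complexMultilinear_cx (v : Fin n → Fin d → ℝ) :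
    complexMultilinear f (fun k => cx d (v k)) = (f v : ℂ) := by
  have hbasis : v = fun k => ∑ i, v k i • (Pi.single i (1 : ℝ) : Fin d → ℝ) :=
    funext fun k => pi_eq_sum_univ' (v k)
  have hexpand : f v = ∑ s : Fin n → Fin d, (f fun k => Pi.single (s k) 1) * ∏ k, v k (s k) := by
    conv_lhs => rw [hbasis]
    rw [f.map_sum]
    exact sum_congr rfl fun s _ => by rw [f.map_smul_univ, smul_eq_mul, mul_comm]
  rw [complexMultilinear_apply, hexpand]
  simp only [cx]
  push_cast
  rfl

theorem norm_complexMultilinear_le : ‖complexMultilinear f‖ ≤ (d : ℝ) ^ n * ‖f‖ := by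
  refine ContinuousMultilinearMap.opNorm_le_bound (by positivity) fun z => ?_
  have hcoeff (s : Fin n → Fin d) : ‖f fun k => Pi.single (s k) 1‖ ≤ ‖f‖ := by
    simpa [Pi.norm_single] using f.le_opNorm fun k => Pi.single (s k) 1
  have hterm (s : Fin n → Fin d) :
      ‖((f fun k => Pi.single (s k) 1 : ℝ) : ℂ) * ∏ k, z k (s k)‖ ≤ ‖f‖ * ∏ k, ‖z k‖ := by
    rw [norm_mul, norm_prod, Complex.norm_real]
    gcongr with k
    exacts [hcoeff s, norm_le_pi_norm (z k) (s k)]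
  rw [complexMultilinear_apply]
  refine (norm_sum_le_of_le _ fun s _ => hterm s).trans_eq ?_
  rw [sum_const, card_univ, Fintype.card_pi_const, nsmul_eq_mul, Fintype.card_fin, mul_assoc]
  push_cast
  rfl

/-- The termwise complexification of a real power series. -/
noncomputable def complexSeries (p : FormalMultilinearSeries ℝ (Fin d → ℝ) ℝ) :
    FormalMultilinearSeries ℂ (Fin d → ℂ) ℂ := fun n => complexMultilinear (p n)

theorem complexSeries_radius_pos {p : FormalMultilinearSeries ℝ (Fin d → ℝ) ℝ}
    (hp : 0 < p.radius) : 0 < (complexSeries p).radius := by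
  obtain ⟨C, a, hC, ha, hbound⟩ := p.le_mul_pow_of_radius_pos hp
  set t : NNReal := ⟨1 / (d * a + 1), by positivity⟩
  have htpos : 0 < t := NNReal.coe_pos.1 (one_div_pos.2 (by positivity : (0 : ℝ) < d * a + 1))
  refine (ENNReal.coe_pos.2 htpos).trans_le ((complexSeries p).le_radius_of_bound C fun n => ?_)
  have hratio : (d * a / (d * a + 1)) ^ n ≤ 1 :=
    pow_le_one₀ (by positivity) ((div_le_one (by positivity)).2 (by linarith))
  calc ‖complexSeries p n‖ * (1 / (d * a + 1)) ^ n
      ≤ (d : ℝ) ^ n * (C * a ^ n) * (1 / (d * a + 1)) ^ n := by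
        gcongr
        exact (norm_complexMultilinear_le (p n)).trans (by gcongr; exact hbound n)
    _ = C * (d * a / (d * a + 1)) ^ n := by rw [div_pow, div_pow, mul_pow, one_pow]; ring
    _ ≤ C := mul_le_of_le_one_right hC.le hratio

theorem complexSeries_sum_cx {h : (Fin d → ℝ) → ℝ} {x y : Fin d → ℝ} {r : ENNReal}
    {p : FormalMultilinearSeries ℝ (Fin d → ℝ) ℝ} (hp : HasFPowerSeriesOnBall h p x r)
    (hy : y ∈ Metric.eball 0 r) (hyc : cx d y ∈ Metric.eball 0 (complexSeries p).radius) :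
    (complexSeries p).sum (cx d y) = h (x + y) := by
  have hreal := (Complex.hasSum_ofReal (f := fun n => p n fun _ => y)).2 (hp.hasSum hy)
  have hcomplex := (complexSeries p).hasSum hyc
  simp only [complexSeries, complexMultilinear_cx] at hcomplex
  exact hcomplex.unique hreal

end ComplexMultilinear

section ComplexExtension

variable {d : ℕ}

/-- `g` is a holomorphic extension of the real function `h` from the ball of radius `ρ` around the
real point `x` to the corresponding complex ball, bounded there by `M`. -/
structure ComplexExtension (h : (Fin d → ℝ) → ℝ) (x : Fin d → ℝ) (ρ M : ℝ)
    (g : (Fin d → ℂ) → ℂ) : Prop where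
  analyticOnNhd : AnalyticOnNhd ℂ g (ball (cx d x) ρ)
  norm_le : ∀ z ∈ ball (cx d x) ρ, ‖g z‖ ≤ M
  apply_cx : ∀ y ∈ ball x ρ, g (cx d y) = h y

namespace ComplexExtension

variable {h : (Fin d → ℝ) → ℝ} {x y : Fin d → ℝ} {ρ ρ' M M' : ℝ} {g : (Fin d → ℂ) → ℂ}

theorem mono (hg : ComplexExtension h x ρ M g) (hρ : dist y x + ρ' ≤ ρ) (hM : M ≤ M') :
    ComplexExtension h y ρ' M' g := by
  have hreal : ball y ρ' ⊆ ball x ρ := ball_subset_ball' (by linarith)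
  have hcomplex : ball (cx d y) ρ' ⊆ ball (cx d x) ρ := ball_subset_ball' <| by
    rw [dist_eq_norm, ← cx_sub, norm_cx, ← dist_eq_norm]
    linarith
  exact ⟨hg.analyticOnNhd.mono hcomplex, fun z hz => (hg.norm_le z (hcomplex hz)).trans hM,
    fun w hw => hg.apply_cx w (hreal hw)⟩

end ComplexExtension

variable {h : (Fin d → ℝ) → ℝ} {x : Fin d → ℝ} {K : Set (Fin d → ℝ)}

theorem exists_complexExtension (hx : AnalyticAt ℝ h x) :
    ∃ ρ > 0, ∃ M g, ComplexExtension h x ρ M g := by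
  obtain ⟨p, r, hp⟩ := hx
  set q := complexSeries p
  have hq := q.hasFPowerSeriesOnBall (complexSeries_radius_pos hp.radius_pos)
  obtain ⟨ρ₁, hρ₁, hbound⟩ := Metric.continuousAt_iff.1 hq.analyticAt.continuousAt 1 one_pos
  obtain ⟨ρ₂, hρ₂, hradius⟩ := ENNReal.lt_iff_exists_nnreal_btwn.1 (lt_min hp.r_pos hq.r_pos)
  have hsmall {V : Type} [SeminormedAddCommGroup V] {y : V} (hy : ‖y‖ < min ρ₁ ρ₂) :
      y ∈ Metric.eball 0 r ∧ y ∈ Metric.eball 0 q.radius := by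
    have hlt : edist y 0 < min r q.radius := by
      rw [edist_eq_enorm_sub, sub_zero]
      refine lt_trans (ENNReal.coe_lt_coe.2 ?_) hradius
      exact_mod_cast hy.trans_le (min_le_right _ _)
    exact ⟨hlt.trans_le (min_le_left _ _), hlt.trans_le (min_le_right _ _)⟩
  refine ⟨min ρ₁ ρ₂, lt_min hρ₁ (by exact_mod_cast hρ₂), ‖q.sum 0‖ + 1,
    fun z => q.sum (z - cx d x), fun z hz => ?_, fun z hz => ?_, fun y hy => ?_⟩
  · exact (hq.analyticOnNhd _ (hsmall (mem_ball_iff_norm.1 hz)).2).fun_comp_of_eq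
      (analyticAt_id.sub analyticAt_const) rfl
  · rw [mem_ball_iff_norm] at hz
    have hclose := hbound (x := z - cx d x) (by simpa using hz.trans_le (min_le_left _ _))
    rw [dist_eq_norm] at hclose
    linarith [norm_sub_norm_le (q.sum (z - cx d x)) (q.sum 0)]
  · rw [mem_ball_iff_norm] at hy
    have hyc : ‖cx d (y - x)‖ < min ρ₁ ρ₂ := (norm_cx _).trans_lt hy
    rw [← cx_sub, complexSeries_sum_cx hp (hsmall hy).1 (hsmall hyc).2, add_sub_cancel]

theorem exists_complexExtension_of_isCompact (hK : IsCompact K) (hh : AnalyticOnNhd ℝ h K) :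
    ∃ ρ > 0, ∃ M, ∀ x ∈ K, ∃ g, ComplexExtension h x ρ M g := by
  have hlocal : ∀ x ∈ K, ∃ t ∈ nhdsWithin x K, ∃ ρ > 0, ∃ M, ∀ y ∈ t,
      ∃ g, ComplexExtension h y ρ M g := by
    intro x hx
    obtain ⟨ρ, hρ, M, g, hg⟩ := exists_complexExtension (hh x hx)
    refine ⟨ball x (ρ / 2), mem_nhdsWithin_of_mem_nhds (ball_mem_nhds x (half_pos hρ)), ρ / 2,
      half_pos hρ, M, fun y hy => ⟨g, hg.mono ?_ le_rfl⟩⟩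
    linarith [mem_ball.1 hy]
  refine hK.induction_on ⟨1, one_pos, 0, fun _ hx => hx.elim⟩ ?_ ?_ hlocal
  · rintro s t hst ⟨ρ, hρ, M, hM⟩
    exact ⟨ρ, hρ, M, fun x hx => hM x (hst hx)⟩
  · rintro s t ⟨ρ, hρ, M, hM⟩ ⟨ρ', hρ', M', hM'⟩
    refine ⟨min ρ ρ', lt_min hρ hρ', max M M', fun x hx => ?_⟩
    rcases hx with hx | hx
    · obtain ⟨g, hg⟩ := hM x hx
      exact ⟨g, hg.mono (by simp) (le_max_left _ _)⟩
    · obtain ⟨g, hg⟩ := hM' x hx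
      exact ⟨g, hg.mono (by simp) (le_max_right _ _)⟩

end ComplexExtension

/-! ### Confinement of the actions in the rescaled problem -/

section Confinement

variable {X : Type*} {T : X → X} {N : X → ℝ} {H Q : X → ℂ} {x₀ : X} {a L κ e : ℝ} {k : ℕ}

theorem le_of_iterate_of_almost_conserved (hstep : ∀ x, N x ≤ a → N (T x) ≤ L)
    (hcons : ∀ x, N x ≤ L → ‖H (T x) - H x‖ ≤ e) (happrox : ∀ x, N x ≤ L → ‖H x - Q x‖ ≤ κ)
    (hconf : ∀ x, N x ≤ L → ‖Q x - Q x₀‖ ≤ 2 * κ + k * e → N x ≤ a) (haL : a ≤ L)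
    (hx₀ : N x₀ ≤ L) {j : ℕ} (hj : j ≤ k) : N (T^[j] x₀) ≤ a := by
  have he : 0 ≤ e := (norm_nonneg _).trans (hcons x₀ hx₀)
  have hclose {x : X} {i : ℕ} (hx : N x ≤ L) (hi : i ≤ k) (hH : ‖H x - H x₀‖ ≤ i * e) :
      N x ≤ a := by
    refine hconf x hx ?_
    have hsplit : Q x - Q x₀ = (H x - H x₀) - (H x - Q x) + (H x₀ - Q x₀) := by ring
    have hik : (i : ℝ) * e ≤ k * e := by gcongr
    rw [hsplit]
    linarith [norm_add_le (H x - H x₀ - (H x - Q x)) (H x₀ - Q x₀),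
      norm_sub_le (H x - H x₀) (H x - Q x), happrox x hx, happrox x₀ hx₀]
  suffices hind : N (T^[j] x₀) ≤ a ∧ ‖H (T^[j] x₀) - H x₀‖ ≤ j * e from hind.1
  induction j with
  | zero => exact ⟨hclose (i := 0) hx₀ hj (by simp), by simp⟩
  | succ j ih =>
    obtain ⟨hNj, hHj⟩ := ih (Nat.le_of_succ_le hj)
    rw [Function.iterate_succ_apply']
    have hH : ‖H (T (T^[j] x₀)) - H x₀‖ ≤ (j + 1 : ℕ) * e := by
      push_cast
      linarith [norm_sub_le_norm_sub_add_norm_sub (H (T (T^[j] x₀))) (H (T^[j] x₀)) (H x₀),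
        hcons _ (hNj.trans haL)]
    exact ⟨hclose (hstep _ hNj) hj hH, hH⟩

end Confinement

section ResonantModel

variable {d : ℕ}

/-- A real phase point viewed as a complex one. -/
def cxPhase (x : RPhase d) : CPhase d := (cx d x.1, cx d x.2)

/-- The generating function `μ (q(J) + u(J, φ))` of the problem rescaled around a resonant action:
`q` is the second-order part of the integrable Hamiltonian, `u` the perturbation. -/
def resonantGenerator (μ : ℝ) (q : (Fin d → ℂ) → ℂ) (u : CPhase d → ℂ) (z : CPhase d) : ℂ :=
  μ * (q z.1 + u z)

/-- The rescaled problem around a resonant action: `G` is a real lift of the map generated by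
`resonantGenerator μ q u` over the rotation by `c`, and `n • c` is integral. -/
structure ResonantModel (L τ Mq Ms μ ν : ℝ) (c : Fin d → ℝ) (n : ℕ) (q : (Fin d → ℂ) → ℂ)
    (u : CPhase d → ℂ) (G : RPhase d → RPhase d) : Prop where
  μ_pos : 0 < μ
  gen : SmallGenerator L τ (μ * (Mq + Ms)) (resonantGenerator μ q u)
  boundedHolo_q : BoundedHolo q (ball 0 (L + 4 * τ)) Mq
  norm_u_le : ∀ w ∈ complexStrip d L (4 * τ), ‖u w‖ ≤ Ms
  le_re_q : ∀ J, ‖J‖ ≤ L → ν / 2 * ‖J‖ ^ 2 ≤ (q (cx d J)).re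
  genMap_cxPhase : ∀ x, ‖x.1‖ < L + τ →
    genMap L τ (resonantGenerator μ q u) c (cxPhase x) = cxPhase (G x)
  map_add_intCast : ∀ (x : RPhase d) (e : Fin d → ℤ),
    G (x.1, x.2 + fun i => (e i : ℝ)) = ((G x).1, (G x).2 + fun i => (e i : ℝ))
  exists_intCast : ∀ i, ∃ e : ℤ, n * c i = e

/-- The real counterpart of `returnMap`. -/
def realReturnMap (G : RPhase d → RPhase d) (c : Fin d → ℝ) (n : ℕ) (x : RPhase d) : RPhase d :=
  G^[n] x - (0, n • c)

namespace ResonantModel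

variable {L τ Mq Ms μ ν : ℝ} {c : Fin d → ℝ} {n j m : ℕ} {q : (Fin d → ℂ) → ℂ}
  {u : CPhase d → ℂ} {G : RPhase d → RPhase d} {x : RPhase d}

theorem cxPhase_mem (h : ResonantModel L τ Mq Ms μ ν c n q u G) (hx : ‖x.1‖ ≤ L) :
    cxPhase x ∈ complexStrip d L (τ / 2) :=
  ball_subset_complexStrip ((norm_cx _).trans_le hx) (fun _ => Complex.ofReal_im _)
    (mem_ball_self (half_pos h.gen.τ_pos))

section Orbits

variable (h : ResonantModel L τ Mq Ms μ ν c n q u G) (hx : ‖x.1‖ ≤ L)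
  (hn : n * (2 * (μ * (Mq + Ms)) / τ) ≤ τ / 2)

include h hx hn

theorem iterate_genMap_cxPhase (hj : j ≤ n) :
    (genMap L τ (resonantGenerator μ q u) c)^[j] (cxPhase x) = cxPhase (G^[j] x) := by
  induction j with
  | zero => rfl
  | succ j ih =>
    have hjn := Nat.le_of_succ_le hj
    have hmem := (h.gen.iterate_mem (c := c) (h.cxPhase_mem hx) hn hjn).1
    rw [ih hjn] at hmem
    rw [Function.iterate_succ_apply', ih hjn, Function.iterate_succ_apply']
    exact h.genMap_cxPhase _ ((norm_cx _).symm.trans_lt hmem)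

theorem norm_iterate_fst_sub_le (hj : j ≤ n) :
    ‖(G^[j] x).1 - x.1‖ ≤ n * (2 * (μ * (Mq + Ms)) / τ) := by
  have hxs := h.cxPhase_mem hx
  have hstep : 0 ≤ 2 * (μ * (Mq + Ms)) / τ := div_nonneg (mul_nonneg zero_le_two
    (h.gen.M_nonneg (complexStrip_mono (by linarith [h.gen.τ_pos]) hxs))) h.gen.τ_pos.le
  have hdrift := (norm_fst_le _).trans (h.gen.norm_iterate_sub_le_of_le (c := c) hxs hn hj)
  rw [h.iterate_genMap_cxPhase hx hn hj] at hdrift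
  have hfst : (cxPhase (G^[j] x) - (cxPhase x + (0, cx d (j • c)))).1 =
      cx d ((G^[j] x).1 - x.1) := by
    rw [cx_sub, Prod.fst_sub, Prod.fst_add, add_zero]
    rfl
  rw [hfst, norm_cx] at hdrift
  exact hdrift.trans (by gcongr)

theorem returnMap_cxPhase :
    returnMap L τ (resonantGenerator μ q u) c n (cxPhase x) = cxPhase (realReturnMap G c n x) := by
  rw [returnMap, h.iterate_genMap_cxPhase hx hn le_rfl]
  ext i
  · simp [cxPhase, realReturnMap]
  · simp [cxPhase, realReturnMap, cx]

theorem norm_resonantGenerator_genInv_sub_le (hj : j < n) :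
    ‖resonantGenerator μ q u (genInv L τ (resonantGenerator μ q u)
        ((genMap L τ (resonantGenerator μ q u) c)^[j] (cxPhase x))) - μ * q (cx d x.1)‖ ≤
      μ * (Ms + 2 * Mq / τ * (n * (2 * (μ * (Mq + Ms)) / τ))) := by
  have hτ := h.gen.τ_pos
  set w := genInv L τ (resonantGenerator μ q u)
    ((genMap L τ (resonantGenerator μ q u) c)^[j] (cxPhase x))
  have hu : ‖u w‖ ≤ Ms := h.norm_u_le w (complexStrip_mono (by linarith)
    (h.gen.genInv_mem (h.gen.iterate_mem (h.cxPhase_mem hx) hn hj.le)))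
  have hwfst : w.1 = cx d (G^[j + 1] x).1 := by
    have hnext := congrArg Prod.fst (h.iterate_genMap_cxPhase hx hn (Nat.succ_le_of_lt hj))
    rwa [Function.iterate_succ_apply'] at hnext
  have hdist : ‖w.1 - cx d x.1‖ ≤ n * (2 * (μ * (Mq + Ms)) / τ) := by
    rw [hwfst, ← cx_sub, norm_cx]
    exact h.norm_iterate_fst_sub_le hx hn (Nat.succ_le_of_lt hj)
  have hball : ball (cx d x.1) τ ⊆ ball 0 (L + 4 * τ) :=
    ball_subset_ball' (by rw [dist_zero_right, norm_cx]; linarith)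
  have hqb := h.boundedHolo_q.mono hball
  have hMq : 0 ≤ Mq := hqb.nonneg (mem_ball_self hτ)
  have hq : ‖q w.1 - q (cx d x.1)‖ ≤ 2 * Mq / τ * (n * (2 * (μ * (Mq + Ms)) / τ)) := by
    refine (hqb.norm_sub_le_div_mul (mem_ball_iff_norm.2 (by linarith))).trans ?_
    gcongr
  have hsplit : resonantGenerator μ q u w - μ * q (cx d x.1) =
      μ * (u w + (q w.1 - q (cx d x.1))) := by
    rw [resonantGenerator]
    ring
  rw [hsplit, norm_mul, Complex.norm_real, Real.norm_of_nonneg h.μ_pos.le]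
  exact mul_le_mul_of_nonneg_left ((norm_add_le _ _).trans (add_le_add hu hq)) h.μ_pos.le

end Orbits

theorem iterate_add_intCast (h : ResonantModel L τ Mq Ms μ ν c n q u G) (k : ℕ) (x : RPhase d)
    (e : Fin d → ℤ) : G^[k] (x.1, x.2 + fun i => (e i : ℝ)) =
      ((G^[k] x).1, (G^[k] x).2 + fun i => (e i : ℝ)) := by
  induction k with
  | zero => rfl
  | succ k ih =>
    rw [Function.iterate_succ_apply', ih, h.map_add_intCast, Function.iterate_succ_apply']

theorem exists_iterate_realReturnMap_eq (h : ResonantModel L τ Mq Ms μ ν c n q u G)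
    (x : RPhase d) (j : ℕ) : ∃ e : Fin d → ℤ, (realReturnMap G c n)^[j] x =
      ((G^[n * j] x).1, (G^[n * j] x).2 + fun i => (e i : ℝ)) := by
  choose z hz using h.exists_intCast
  induction j with
  | zero => exact ⟨0, by ext i <;> simp⟩
  | succ j ih =>
    obtain ⟨e, he⟩ := ih
    refine ⟨fun i => e i - z i, ?_⟩
    rw [Function.iterate_succ_apply', he, realReturnMap, h.iterate_add_intCast,
      ← Function.iterate_add_apply, Nat.mul_succ, add_comm]
    ext i
    · simp
    · simp [hz, add_sub_assoc]

theorem norm_sq_le_of_norm_q_sub_le (h : ResonantModel L τ Mq Ms μ ν c n q u G) (hν : 0 < ν)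
    {J J₀ : Fin d → ℝ} (hJ : ‖J‖ ≤ L) (hJ₀ : (q (cx d J₀)).re ≤ Ms)
    (hclose : ‖q (cx d J) - q (cx d J₀)‖ ≤ 5 / 2 * Ms) : ‖J‖ ^ 2 ≤ 7 * Ms / ν := by
  have hre : (q (cx d J)).re - (q (cx d J₀)).re ≤ 5 / 2 * Ms := by
    rw [← Complex.sub_re]
    exact (Complex.re_le_norm _).trans hclose
  rw [le_div_iff₀ hν]
  linarith [h.le_re_q J hJ]

end ResonantModel

/-- The near-integral of the return map of the rescaled problem, of order `m`. -/
noncomputable def resonantEnergy (L τ μ : ℝ) (c : Fin d → ℝ) (n m : ℕ) (q : (Fin d → ℂ) → ℂ)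
    (u : CPhase d → ℂ) (x : RPhase d) : ℂ :=
  nearIntegral (returnMap L τ (resonantGenerator μ q u) c n) m
    (returnPrimitive L τ (resonantGenerator μ q u) c n) (cxPhase x)

namespace ResonantModel

variable {L τ Mq Ms μ ν a : ℝ} {c : Fin d → ℝ} {n m k : ℕ} {q : (Fin d → ℂ) → ℂ}
  {u : CPhase d → ℂ} {G : RPhase d → RPhase d} {x x₀ : RPhase d}

section Energy

variable (h : ResonantModel L τ Mq Ms μ ν c n q u G) (hx : ‖x.1‖ ≤ L) (hm1 : 1 ≤ m)
  (hm : 240 * m * (n * (2 * (μ * (Mq + Ms)) / τ)) ≤ τ / 2)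

include h hx hm1 hm

theorem step_le : n * (2 * (μ * (Mq + Ms)) / τ) ≤ τ / 2 :=
  h.gen.mul_step_le (x := cxPhase x) ((norm_cx _).trans_le hx) (fun _ => Complex.ofReal_im _) hm1 hm

theorem norm_resonantEnergy_realReturnMap_sub_le :
    ‖resonantEnergy L τ μ c n m q u (realReturnMap G c n x) - resonantEnergy L τ μ c n m q u x‖ ≤
      n * μ * ((Mq + Ms) * energyConst d L τ / 3 ^ m) := by
  have hstep := h.gen.norm_nearIntegral_returnMap_sub_le (c := c) (x := cxPhase x)
    ((norm_cx _).trans_le hx) (fun _ => Complex.ofReal_im _) hm1 hm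
  rw [h.returnMap_cxPhase hx (h.step_le hx hm1 hm)] at hstep
  exact hstep.trans_eq (by ring)

theorem norm_resonantEnergy_sub_le :
    ‖resonantEnergy L τ μ c n m q u x - n * μ * q (cx d x.1)‖ ≤
      n * μ * (Ms + ((2 * Mq / τ + d * (2 * (Mq + Ms) / τ)) * (n * (2 * (μ * (Mq + Ms)) / τ)) +
        (Mq + Ms) * energyConst d L τ / m)) := by
  have hn := h.step_le hx hm1 hm
  have hsum : ‖∑ j ∈ range n, resonantGenerator μ q u (genInv L τ (resonantGenerator μ q u)
      ((genMap L τ (resonantGenerator μ q u) c)^[j] (cxPhase x))) - n * μ * q (cx d x.1)‖ ≤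
      n * (μ * (Ms + 2 * Mq / τ * (n * (2 * (μ * (Mq + Ms)) / τ)))) := by
    have hconst : n * μ * q (cx d x.1) = ∑ _j ∈ range n, μ * q (cx d x.1) := by
      rw [sum_const, card_range, nsmul_eq_mul, mul_assoc]
    rw [hconst, ← sum_sub_distrib]
    refine (norm_sum_le_of_le _ fun j hj =>
      h.norm_resonantGenerator_genInv_sub_le hx hn (mem_range.1 hj)).trans_eq ?_
    rw [sum_const, card_range, nsmul_eq_mul]
  refine (norm_sub_le_norm_sub_add_norm_sub _ _ _).trans ((add_le_add
    (h.gen.norm_nearIntegral_returnMap_sub_sum_le ((norm_cx _).trans_le hx)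
      (fun _ => Complex.ofReal_im _) hm1 hm) hsum).trans_eq ?_)
  ring

theorem norm_realReturnMap_fst_sub_le :
    ‖(realReturnMap G c n x).1‖ ≤ ‖x.1‖ + n * (2 * (μ * (Mq + Ms)) / τ) := by
  have hdrift := h.norm_iterate_fst_sub_le hx (h.step_le hx hm1 hm) le_rfl
  have hfst : (realReturnMap G c n x).1 = (G^[n] x).1 := sub_zero _
  rw [hfst]
  linarith [norm_sub_norm_le (G^[n] x).1 x.1]

end Energy

/-- The constant 7 arises as `2 · (1 + 5/2)`: the initial value of `q` is at most `Ms`, the energy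
differs from `n μ q` by `n μ Ms` at both ends, and the remaining errors add up to `Ms / 2`. -/
theorem norm_iterate_fst_le (h : ResonantModel L τ Mq Ms μ ν c n q u G) (hn : 0 < n) (hν : 0 < ν)
    (hm1 : 1 ≤ m) (hm : 240 * m * (n * (2 * (μ * (Mq + Ms)) / τ)) ≤ τ / 2) (ha : 0 ≤ a)
    (haL : a + n * (2 * (μ * (Mq + Ms)) / τ) ≤ L) (ha2 : 7 * Ms / ν ≤ a ^ 2)
    (hκ : (2 * Mq / τ + d * (2 * (Mq + Ms) / τ)) * (n * (2 * (μ * (Mq + Ms)) / τ)) +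
      (Mq + Ms) * energyConst d L τ / m ≤ Ms / 8)
    (hk : k * ((Mq + Ms) * energyConst d L τ / 3 ^ m) ≤ Ms / 4)
    (hx₀ : ‖x₀.1‖ ≤ L) (hq₀ : (q (cx d x₀.1)).re ≤ Ms) :
    ‖(G^[k] x₀).1‖ ≤ a + n * (2 * (μ * (Mq + Ms)) / τ) := by
  have hnμ : 0 < n * μ := mul_pos (Nat.cast_pos.2 hn) h.μ_pos
  set δ := n * (2 * (μ * (Mq + Ms)) / τ)
  have hδ : 0 ≤ δ := (norm_nonneg _).trans
    (h.norm_iterate_fst_sub_le hx₀ (h.step_le hx₀ hm1 hm) (Nat.zero_le n))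
  have hreturn {j : ℕ} (hj : j ≤ k) : ‖((realReturnMap G c n)^[j] x₀).1‖ ≤ a := by
    refine le_of_iterate_of_almost_conserved (N := fun x : RPhase d => ‖x.1‖)
      (Q := fun x => n * μ * q (cx d x.1)) (fun x hx => ?_)
      (fun x hx => h.norm_resonantEnergy_realReturnMap_sub_le hx hm1 hm)
      (fun x hx => h.norm_resonantEnergy_sub_le hx hm1 hm) (fun x hx hclose => ?_)
      (by linarith) hx₀ hj
    · exact (h.norm_realReturnMap_fst_sub_le (by linarith) hm1 hm).trans (by linarith)
    · refine abs_le_of_sq_le_sq' ((h.norm_sq_le_of_norm_q_sub_le hν hx hq₀ ?_).trans ha2) ha |>.2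
      rw [← mul_sub, norm_mul, norm_mul, Complex.norm_natCast, Complex.norm_real,
        Real.norm_of_nonneg h.μ_pos.le] at hclose
      refine le_of_mul_le_mul_left (hclose.trans ?_) hnμ
      linarith [mul_le_mul_of_nonneg_left hκ hnμ.le, mul_le_mul_of_nonneg_left hk hnμ.le]
  have hmultiple : ‖(G^[n * (k / n)] x₀).1‖ ≤ a := by
    obtain ⟨e, he⟩ := h.exists_iterate_realReturnMap_eq x₀ (k / n)
    simpa only [he] using hreturn (Nat.div_le_self k n)
  have hrest := h.norm_iterate_fst_sub_le (x := G^[n * (k / n)] x₀) (by linarith)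
    (h.step_le hx₀ hm1 hm) (Nat.mod_lt k hn).le
  rw [← Function.iterate_add_apply, Nat.mod_add_div] at hrest
  linarith [norm_sub_norm_le (G^[k] x₀).1 (G^[n * (k / n)] x₀).1]

end ResonantModel

theorem exp_sub_one_le_three_pow_floor (y : ℝ) : Real.exp (y - 1) ≤ 3 ^ ⌊y⌋₊ := by
  have hfloor : Real.exp (y - 1) ≤ Real.exp 1 ^ ⌊y⌋₊ := by
    rw [← Real.exp_nat_mul, mul_one, Real.exp_le_exp]
    linarith [Nat.lt_floor_add_one y]
  exact hfloor.trans (pow_le_pow_left₀ (Real.exp_pos 1).le (by linarith [Real.exp_one_lt_d9]) _)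

theorem exists_order {τ δ : ℝ} (hτ : 0 < τ) (hδ : 0 < δ) (hδτ : δ ≤ τ / 480) :
    ∃ m : ℕ, 1 ≤ m ∧ 240 * m * δ ≤ τ / 2 ∧ (m : ℝ)⁻¹ ≤ 960 / τ * δ ∧
      Real.exp (τ / (480 * δ) - 1) ≤ 3 ^ m := by
  set y := τ / (480 * δ)
  have hyδ : y * δ = τ / 480 := by
    simp only [y]
    field_simp
  have hy : 1 ≤ y := (one_le_div (by positivity)).2 (by linarith)
  have hm : 1 ≤ ⌊y⌋₊ := Nat.one_le_floor_iff y |>.2 hy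
  have hm' : (1 : ℝ) ≤ ⌊y⌋₊ := Nat.one_le_cast.2 hm
  have hle := mul_le_mul_of_nonneg_right (Nat.floor_le (zero_le_one.trans hy)) hδ.le
  have hlt := mul_lt_mul_of_pos_right (Nat.lt_floor_add_one y) hδ
  refine ⟨⌊y⌋₊, hm, by linarith, ?_, exp_sub_one_le_three_pow_floor y⟩
  rw [inv_le_iff_one_le_mul₀ (by linarith), div_mul_eq_mul_div, div_mul_eq_mul_div, one_le_div hτ]
  linarith [mul_le_mul_of_nonneg_right hm' hδ.le]

namespace ResonantModel

variable {L τ Mq Ms μ ν δ C : ℝ} {c : Fin d → ℝ} {n k : ℕ} {q : (Fin d → ℂ) → ℂ}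
  {u : CPhase d → ℂ} {G : RPhase d → RPhase d} {x₀ : RPhase d}

theorem norm_iterate_fst_sq_le (h : ResonantModel L τ Mq Ms μ ν c n q u G) (hn : 0 < n)
    (hν : 0 < ν) (hMs : 0 ≤ Ms) (hL : √(7 * Ms / ν) + 1 ≤ L)
    (hδ : n * (2 * (μ * (Mq + Ms)) / τ) = δ) (hC : (Mq + Ms) * energyConst d L τ = C)
    (hδ0 : 0 < δ) (hC0 : 0 < C) (hδτ : δ ≤ τ / 480) (hδ1 : δ ≤ 1)
    (hδgap : δ ≤ √(11 * Ms / ν) - √(7 * Ms / ν))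
    (hδκ : (2 * Mq / τ + d * (2 * (Mq + Ms) / τ) + 960 * C / τ) * δ ≤ Ms / 8)
    (hx₀ : ‖x₀.1‖ ≤ L) (hq₀ : (q (cx d x₀.1)).re ≤ Ms)
    (hk : k ≤ Ms / (4 * C * Real.exp 1) * Real.exp (τ / (480 * δ))) :
    ‖(G^[k] x₀).1‖ ^ 2 ≤ 11 * Ms / ν := by
  obtain ⟨m, hm1, hm, hminv, hexp⟩ := exists_order h.gen.τ_pos hδ0 hδτ
  have hκ : (2 * Mq / τ + d * (2 * (Mq + Ms) / τ)) * δ + C / m ≤ Ms / 8 := by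
    have hCm : C / m ≤ 960 * C / τ * δ :=
      (mul_le_mul_of_nonneg_left hminv hC0.le).trans_eq (by ring)
    linarith
  have hk' : k * (C / 3 ^ m) ≤ Ms / 4 := by
    calc k * (C / 3 ^ m) ≤ Ms / (4 * C * Real.exp 1) * Real.exp (τ / (480 * δ)) *
          (C / Real.exp (τ / (480 * δ) - 1)) := by gcongr
      _ = Ms / 4 := by
        rw [Real.exp_sub]
        field_simp
  subst hδ hC
  have hbound := h.norm_iterate_fst_le hn hν hm1 hm (Real.sqrt_nonneg _)
    (by linarith) (Real.sq_sqrt (by positivity)).ge hκ hk' hx₀ hq₀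
  refine (pow_le_pow_left₀ (norm_nonneg _) (hbound.trans ?_) 2).trans_eq
    (Real.sq_sqrt (by positivity : 0 ≤ 11 * Ms / ν))
  linarith

theorem exists_confinement_constants (d : ℕ) (hτ : 0 < τ) (hMq : 0 ≤ Mq) (hMs : 0 < Ms)
    (hν : 0 < ν) (hL : √(7 * Ms / ν) + 1 ≤ L) :
    ∃ c₄ c₅ D₀ : ℝ, 0 < c₄ ∧ 0 < c₅ ∧ 0 < D₀ ∧ ∀ (μ : ℝ) (c : Fin d → ℝ) (n : ℕ)
      (q : (Fin d → ℂ) → ℂ) (u : CPhase d → ℂ) (G : RPhase d → RPhase d),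
      ResonantModel L τ Mq Ms μ ν c n q u G → 0 < n → n * μ ≤ D₀ → ∀ x₀ : RPhase d,
        ‖x₀.1‖ ≤ L → (q (cx d x₀.1)).re ≤ Ms → ∀ k : ℕ, k ≤ c₄ * Real.exp (c₅ / (n * μ)) →
          ‖(G^[k] x₀).1‖ ^ 2 ≤ 11 * Ms / ν := by
  have hL0 : 0 ≤ L := by linarith [Real.sqrt_nonneg (7 * Ms / ν)]
  set B := 2 * (Mq + Ms) / τ with hB
  set C := (Mq + Ms) * energyConst d L τ with hC
  set K := 2 * Mq / τ + d * B + 960 * C / τ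
  have hB0 : 0 < B := by positivity
  have hC0 : 0 < C := by simp only [hC, energyConst]; positivity
  have hK0 : 0 < K := by positivity
  have hgap : 0 < √(11 * Ms / ν) - √(7 * Ms / ν) :=
    sub_pos.2 (Real.sqrt_lt_sqrt (by positivity) (by gcongr; norm_num))
  refine ⟨Ms / (4 * C * Real.exp 1), τ / (480 * B),
    min (min (τ / 480) 1) (min (√(11 * Ms / ν) - √(7 * Ms / ν)) (Ms / 8 / K)) / B,
    by positivity, by positivity, by positivity, ?_⟩
  intro μ c n q u G h hn hD x₀ hx₀ hq₀ k hk
  have hnμ : 0 < n * μ := mul_pos (Nat.cast_pos.2 hn) h.μ_pos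
  rw [le_div_iff₀ hB0, le_min_iff, le_min_iff, le_min_iff, le_div_iff₀' hK0] at hD
  obtain ⟨⟨hδτ, hδ1⟩, hδgap, hδκ⟩ := hD
  exact h.norm_iterate_fst_sq_le hn hν hMs.le hL (by rw [hB]; ring) hC.symm (by positivity) hC0
    hδτ hδ1 hδgap (by rwa [← hB]) hx₀ hq₀
    (by rwa [div_div, mul_assoc 480 B, mul_comm B] at hk)

end ResonantModel

end ResonantModel

/-! ### Convexity and Cauchy estimates -/

section RealTaylor

variable {f f' f'' : ℝ → ℝ} {a : ℝ}

theorem half_le_sub_of_le_second_deriv (hf : ∀ t ∈ Icc (0 : ℝ) 1, HasDerivAt f (f' t) t)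
    (hf' : ∀ t ∈ Icc (0 : ℝ) 1, HasDerivAt f' (f'' t) t) (ha : ∀ t ∈ Icc (0 : ℝ) 1, a ≤ f'' t) :
    a / 2 ≤ f 1 - f 0 - f' 0 := by
  have hder' (t : ℝ) (ht : t ∈ Icc (0 : ℝ) 1) :
      HasDerivAt (fun t => f' t - f' 0 - a * t) (f'' t - a) t := by
    exact (((hf' t ht).sub_const (f' 0)).sub ((hasDerivAt_id t).const_mul a)).congr_deriv (by simp)
  have hder (t : ℝ) (ht : t ∈ Icc (0 : ℝ) 1) :
      HasDerivAt (fun t => f t - f' 0 * t - a / 2 * t ^ 2) (f' t - f' 0 - a * t) t := by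
    refine (((hf t ht).sub ((hasDerivAt_id t).const_mul (f' 0))).sub
      ((hasDerivAt_pow 2 t).const_mul (a / 2))).congr_deriv ?_
    push_cast
    ring
  have hmono' : MonotoneOn (fun t => f' t - f' 0 - a * t) (Icc 0 1) :=
    monotoneOn_of_hasDerivWithinAt_nonneg (convex_Icc 0 1)
      (fun t ht => (hder' t ht).continuousAt.continuousWithinAt)
      (fun t ht => (hder' t (interior_subset ht)).hasDerivWithinAt)
      fun t ht => sub_nonneg.2 (ha t (interior_subset ht))
  have hmono : MonotoneOn (fun t => f t - f' 0 * t - a / 2 * t ^ 2) (Icc 0 1) :=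
    monotoneOn_of_hasDerivWithinAt_nonneg (convex_Icc 0 1)
      (fun t ht => (hder t ht).continuousAt.continuousWithinAt)
      (fun t ht => (hder t (interior_subset ht)).hasDerivWithinAt) fun t ht => by
        have hle := hmono' (left_mem_Icc.2 zero_le_one) (interior_subset ht) (interior_subset ht).1
        simpa using hle
  have hle := hmono (left_mem_Icc.2 zero_le_one) (right_mem_Icc.2 zero_le_one) zero_le_one
  simp only [mul_zero, sub_zero, mul_one, one_pow, ne_eq, OfNat.ofNat_ne_zero, not_false_eq_true,
    zero_pow] at hle
  linarith

theorem sub_le_half_of_second_deriv_le (hf : ∀ t ∈ Icc (0 : ℝ) 1, HasDerivAt f (f' t) t)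
    (hf' : ∀ t ∈ Icc (0 : ℝ) 1, HasDerivAt f' (f'' t) t) (ha : ∀ t ∈ Icc (0 : ℝ) 1, f'' t ≤ a) :
    f 1 - f 0 - f' 0 ≤ a / 2 := by
  have hneg := half_le_sub_of_le_second_deriv (f := -f) (f' := -f') (f'' := -f'') (a := -a)
    (fun t ht => (hf t ht).neg) (fun t ht => (hf' t ht).neg) fun t ht => neg_le_neg (ha t ht)
  simp only [Pi.neg_apply] at hneg
  linarith

end RealTaylor

section SumSq

variable {d : ℕ}

theorem norm_sq_le_sum_sq (v : Fin d → ℝ) : ‖v‖ ^ 2 ≤ ∑ i, v i ^ 2 := by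
  have hnonneg : 0 ≤ ∑ i, v i ^ 2 := sum_nonneg fun i _ => sq_nonneg (v i)
  refine (Real.le_sqrt (norm_nonneg v) hnonneg).1 ?_
  exact (pi_norm_le_iff_of_nonneg (Real.sqrt_nonneg _)).2 fun i =>
    Real.abs_le_sqrt <| single_le_sum (f := fun i => v i ^ 2) (fun i _ => sq_nonneg (v i))
      (mem_univ i)

theorem sum_sq_le_norm_sq (v : Fin d → ℝ) : ∑ i, v i ^ 2 ≤ d * ‖v‖ ^ 2 := by
  refine (sum_le_card_nsmul _ _ (‖v‖ ^ 2) fun i _ => ?_).trans_eq (by simp)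
  exact sq_le_sq' (neg_le_of_abs_le (norm_le_pi_norm v i)) (le_of_abs_le (norm_le_pi_norm v i))

end SumSq

section ConvexHamiltonian

variable {d : ℕ}

/-- `h` is a real-analytic function on `U` with gradient `ω`, whose Hessian `ω'` lies between the
quadratic forms `ν |v|₂²` and `ν' |v|₂²`. -/
structure ConvexHamiltonian (U : Set (Fin d → ℝ)) (ν ν' : ℝ) (h : (Fin d → ℝ) → ℝ)
    (ω : (Fin d → ℝ) → Fin d → ℝ) : Prop where
  analyticOnNhd : AnalyticOnNhd ℝ h U
  hasFDerivAt : ∀ y ∈ U,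
    HasFDerivAt h (∑ i, ω y i • (ContinuousLinearMap.proj i : (Fin d → ℝ) →L[ℝ] ℝ)) y
  le_hessian : ∀ y ∈ U, ∀ v, ν * ∑ i, v i ^ 2 ≤ ∑ i, fderiv ℝ ω y v i * v i
  hessian_le : ∀ y ∈ U, ∀ v, ∑ i, fderiv ℝ ω y v i * v i ≤ ν' * ∑ i, v i ^ 2

namespace ConvexHamiltonian

variable {U V : Set (Fin d → ℝ)} {ν ν' σ t : ℝ} {h : (Fin d → ℝ) → ℝ}
  {ω : (Fin d → ℝ) → Fin d → ℝ} {x y v : Fin d → ℝ}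

theorem mono (hh : ConvexHamiltonian U ν ν' h ω) (hV : V ⊆ U) : ConvexHamiltonian V ν ν' h ω :=
  ⟨hh.analyticOnNhd.mono hV, fun y hy => hh.hasFDerivAt y (hV hy),
    fun y hy => hh.le_hessian y (hV hy), fun y hy => hh.hessian_le y (hV hy)⟩

theorem fderiv_apply (hh : ConvexHamiltonian U ν ν' h ω) (hy : y ∈ U) (v : Fin d → ℝ) :
    fderiv ℝ h y v = ∑ i, ω y i * v i := by
  rw [(hh.hasFDerivAt y hy).fderiv]
  simp

theorem differentiableAt_frequency (hh : ConvexHamiltonian U ν ν' h ω) (hU : IsOpen U)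
    (hy : y ∈ U) : DifferentiableAt ℝ ω y := by
  refine differentiableAt_pi.2 fun i => ?_
  have hpartial : DifferentiableAt ℝ (fun y => fderiv ℝ h y (Pi.single i 1)) y :=
    (hh.analyticOnNhd.fderiv y hy).differentiableAt.clm_apply (differentiableAt_const _)
  refine hpartial.congr_of_eventuallyEq ?_
  filter_upwards [hU.mem_nhds hy] with z hz
  simp [hh.fderiv_apply hz, Pi.single_apply]

theorem hasDerivAt_add_smul (hh : ConvexHamiltonian U ν ν' h ω) (hy : x + t • v ∈ U) :
    HasDerivAt (fun t : ℝ => h (x + t • v)) (∑ i, ω (x + t • v) i * v i) t := by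
  have hpath : HasDerivAt (fun t : ℝ => x + t • v) v t := by
    simpa using ((hasDerivAt_id t).smul_const v).const_add x
  exact ((hh.hasFDerivAt _ hy).comp_hasDerivAt t hpath).congr_deriv (by simp)

theorem hasDerivAt_frequency_add_smul (hh : ConvexHamiltonian U ν ν' h ω) (hU : IsOpen U)
    (hy : x + t • v ∈ U) : HasDerivAt (fun t : ℝ => ∑ i, ω (x + t • v) i * v i)
      (∑ i, fderiv ℝ ω (x + t • v) v i * v i) t := by
  have hpath : HasDerivAt (fun t : ℝ => x + t • v) v t := by
    simpa using ((hasDerivAt_id t).smul_const v).const_add x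
  have hcomp := (hh.differentiableAt_frequency hU hy).hasFDerivAt.comp_hasDerivAt t hpath
  exact HasDerivAt.fun_sum fun i _ => (hasDerivAt_pi.1 hcomp i).mul_const _

theorem add_smul_mem_ball (hv : ‖v‖ < σ) (ht : t ∈ Icc (0 : ℝ) 1) : x + t • v ∈ ball x σ := by
  rw [mem_ball_iff_norm, add_sub_cancel_left, norm_smul, Real.norm_of_nonneg ht.1]
  exact (mul_le_of_le_one_left (norm_nonneg v) ht.2).trans_lt hv

theorem le_sub_sub (hh : ConvexHamiltonian (ball x σ) ν ν' h ω) (hv : ‖v‖ < σ) :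
    ν / 2 * ∑ i, v i ^ 2 ≤ h (x + v) - h x - ∑ i, ω x i * v i := by
  have hle := half_le_sub_of_le_second_deriv
    (fun t ht => hh.hasDerivAt_add_smul (add_smul_mem_ball hv ht))
    (fun t ht => hh.hasDerivAt_frequency_add_smul isOpen_ball (add_smul_mem_ball hv ht))
    fun t ht => hh.le_hessian _ (add_smul_mem_ball hv ht) v
  simpa [div_mul_eq_mul_div] using hle

theorem sub_sub_le (hh : ConvexHamiltonian (ball x σ) ν ν' h ω) (hv : ‖v‖ < σ) :
    h (x + v) - h x - ∑ i, ω x i * v i ≤ ν' / 2 * ∑ i, v i ^ 2 := by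
  have hle := sub_le_half_of_second_deriv_le
    (fun t ht => hh.hasDerivAt_add_smul (add_smul_mem_ball hv ht))
    (fun t ht => hh.hasDerivAt_frequency_add_smul isOpen_ball (add_smul_mem_ball hv ht))
    fun t ht => hh.hessian_le _ (add_smul_mem_ball hv ht) v
  simpa [div_mul_eq_mul_div] using hle

end ConvexHamiltonian

end ConvexHamiltonian

section Cauchy

variable {E F : Type*} [NormedAddCommGroup E] [NormedSpace ℂ E] [NormedAddCommGroup F]
  [NormedSpace ℂ F] {g : E → F} {c z v : E} {η M : ℝ}

theorem BoundedHolo.norm_sub_sub_fderiv_le (hg : BoundedHolo g (ball c η) M) (hz : z ∈ ball c η) :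
    ‖g z - g c - fderiv ℂ g c (z - c)‖ ≤ 4 * M * (‖z - c‖ / η) ^ 2 := by
  have hη : 0 < η := nonempty_ball.1 ⟨z, hz⟩
  have hM : 0 ≤ M := hg.nonneg hz
  have hlin {w : E} (hw : w ∈ ball c η) : ‖fderiv ℂ g c (w - c)‖ ≤ 2 * M := by
    calc ‖fderiv ℂ g c (w - c)‖ ≤ 2 * M / η * ‖w - c‖ :=
          (fderiv ℂ g c).le_of_opNorm_le (hg.norm_fderiv_le hη) _
      _ ≤ 2 * M / η * η := by
          gcongr
          exact (mem_ball_iff_norm.1 hw).le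
      _ = 2 * M := div_mul_cancel₀ _ hη.ne'
  have hschwarz := Complex.dist_le_mul_div_pow_of_mapsTo_ball_of_isLittleO (n := 1)
    (f := fun w => g w - g c - fderiv ℂ g c (w - c)) (c := c) (R₁ := η) (R₂ := 4 * M) (z := z)
    ((hg.differentiableOn.sub_const _).sub ((fderiv ℂ g c).differentiable.comp
      (differentiable_id.sub_const c)).differentiableOn)
    (fun w hw => by
      have hdiff := hg.mapsTo_closedBall hη hw
      rw [mem_closedBall_iff_norm] at hdiff ⊢
      simp only [sub_self, map_zero, sub_zero]
      linarith [norm_sub_le (g w - g c) (fderiv ℂ g c (w - c)), hlin hw])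
    (by simpa using (hg.differentiableAt hη).hasFDerivAt.isLittleO.norm_right) hz
  simpa [dist_eq_norm] using hschwarz

theorem norm_fderiv_apply_le (hη : 0 < η) (hg : ∀ t : ℂ, ‖t‖ < η → DifferentiableAt ℂ g (z + t • v))
    (hM : ∀ t : ℂ, ‖t‖ < η → ‖g (z + t • v)‖ ≤ M) : ‖fderiv ℂ g z v‖ ≤ 2 * M / η := by
  have hpath (t : ℂ) : HasDerivAt (fun t : ℂ => z + t • v) v t := by
    simpa using ((hasDerivAt_id t).smul_const v).const_add z
  have hline : HasDerivAt (fun t : ℂ => g (z + t • v)) (fderiv ℂ g z v) 0 := by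
    have hgz := (hg 0 (by simpa using hη)).hasFDerivAt.comp_hasDerivAt 0 (hpath 0)
    rwa [zero_smul, add_zero] at hgz
  have hbounded : BoundedHolo (fun t : ℂ => g (z + t • v)) (ball 0 η) M :=
    ⟨fun t ht => ((hg t (mem_ball_zero_iff.1 ht)).comp t
      (hpath t).differentiableAt).differentiableWithinAt, fun t ht => hM t (mem_ball_zero_iff.1 ht)⟩
  have hle := hbounded.norm_fderiv_le hη
  rwa [hline.hasFDerivAt.fderiv, ContinuousLinearMap.norm_toSpanSingleton] at hle

end Cauchy

/-! ### Near-integrable maps -/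

section RealDirections

variable {d : ℕ}

theorem hasDerivAt_cx_add_smul (y v : Fin d → ℝ) (t : ℝ) :
    HasDerivAt (fun t : ℝ => cx d (y + t • v)) (cx d v) t :=
  hasDerivAt_pi.2 fun i => HasDerivAt.ofReal_comp (f := fun t : ℝ => y i + t * v i) <| by
    simpa using ((hasDerivAt_id t).mul_const (v i)).const_add (y i)

theorem ComplexExtension.fderiv_cx {h : (Fin d → ℝ) → ℝ} {x y : Fin d → ℝ} {ρ M : ℝ}
    {g : (Fin d → ℂ) → ℂ} (hg : ComplexExtension h x ρ M g) (hy : y ∈ ball x ρ)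
    (hh : DifferentiableAt ℝ h y) (v : Fin d → ℝ) :
    fderiv ℂ g (cx d y) (cx d v) = (fderiv ℝ h y v : ℂ) := by
  have hline : HasDerivAt (fun t : ℝ => y + t • v) v 0 := by
    simpa using ((hasDerivAt_id (0 : ℝ)).smul_const v).const_add y
  have hbase : y + (0 : ℝ) • v = y := by simp
  have hcy : cx d y ∈ ball (cx d x) ρ := by
    rwa [mem_ball_iff_norm, ← cx_sub, norm_cx, ← mem_ball_iff_norm]
  have hcomplex : HasDerivAt (fun t : ℝ => g (cx d (y + t • v)))
      (fderiv ℂ g (cx d y) (cx d v)) 0 :=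
    ((hg.analyticOnNhd _ hcy).differentiableAt.hasFDerivAt.restrictScalars ℝ).comp_hasDerivAt_of_eq
      0 (hasDerivAt_cx_add_smul y v 0) (by rw [hbase])
  have hreal : HasDerivAt (fun t : ℝ => ((h (y + t • v) : ℝ) : ℂ)) (fderiv ℝ h y v : ℂ) 0 :=
    (hh.hasFDerivAt.comp_hasDerivAt_of_eq 0 hline hbase.symm).ofReal_comp
  refine (hcomplex.congr_of_eventuallyEq ?_).unique hreal
  have hnear : ∀ᶠ t : ℝ in nhds 0, y + t • v ∈ ball x ρ :=
    hline.continuousAt.eventually_mem (isOpen_ball.mem_nhds (by rwa [hbase]))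
  exact hnear.mono fun t ht => (hg.apply_cx _ ht).symm

theorem cx_single (i : Fin d) : cx d (Pi.single i 1) = Pi.single i 1 := by
  ext j
  by_cases hj : j = i <;> simp [cx, hj]

theorem im_fderiv_cxPhase {f : CPhase d → ℂ} {x : RPhase d}
    (hf : DifferentiableAt ℂ f (cxPhase x)) (him : ∀ᶠ y in nhds x, (f (cxPhase y)).im = 0)
    (v : RPhase d) : (fderiv ℂ f (cxPhase x) (cxPhase v)).im = 0 := by
  have hbase : x + (0 : ℝ) • v = x := by simp
  have hpath : HasDerivAt (fun t : ℝ => cxPhase (x + t • v)) (cxPhase v) 0 :=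
    (hasDerivAt_cx_add_smul x.1 v.1 0).prodMk (hasDerivAt_cx_add_smul x.2 v.2 0)
  have hcomp : HasDerivAt (fun t : ℝ => f (cxPhase (x + t • v)))
      (fderiv ℂ f (cxPhase x) (cxPhase v)) 0 :=
    (hf.hasFDerivAt.restrictScalars ℝ).comp_hasDerivAt_of_eq 0 hpath (by rw [hbase])
  have him' := Complex.imCLM.hasFDerivAt.comp_hasDerivAt 0 hcomp
  have hcont : ContinuousAt (fun t : ℝ => x + t • v) 0 := by fun_prop
  refine (him'.congr_of_eventuallyEq ?_).unique (hasDerivAt_const (0 : ℝ) (0 : ℝ))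
  have hnear := hcont.tendsto.eventually (by rwa [hbase])
  exact hnear.mono fun t ht => ht.symm

end RealDirections

section NearIntegrableMap

variable {d : ℕ}

/-- The actions at distance at most `σ` from `B`. -/
def actionNhd (B : Set (Fin d → ℝ)) (σ : ℝ) : Set (Fin d → ℝ) := {I | ∃ y ∈ B, dist I y ≤ σ}

/-- The complex domain with actions at distance at most `σ` from `B` and angles in the closed strip
of width `r`. -/
def complexDomain (B : Set (Fin d → ℝ)) (σ r : ℝ) : Set (CPhase d) :=
  {z | (∃ y ∈ B, dist z.1 (cx d y) ≤ σ) ∧ ∀ i, |(z.2 i).im| ≤ r}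

/-- `F` is a lift of the map with generating function `Ī · φ + h₀(Ī) + ε s(Ī, φ)`, where `ω` is the
gradient of `h₀` and `s` is analytic, real at real points and bounded by `Ms` on the complex domain
around `B`. The implicit equations are only required at actions in the half-width neighbourhood of
`B`. -/
structure NearIntegrableMap (B : Set (Fin d → ℝ)) (σ r Ms ε : ℝ) (ω : (Fin d → ℝ) → Fin d → ℝ)
    (s : CPhase d → ℂ) (F : RPhase d → RPhase d) : Prop where
  analyticOnNhd : AnalyticOnNhd ℂ s (complexDomain B σ r)
  im_eq_zero : ∀ x, cxPhase x ∈ complexDomain B σ r → (s (cxPhase x)).im = 0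
  norm_le : ∀ z ∈ complexDomain B σ r, ‖s z‖ ≤ Ms
  mapsTo : ∀ x : RPhase d, x.1 ∈ actionNhd B (σ / 2) → (F x).1 ∈ actionNhd B σ
  fst_apply : ∀ x : RPhase d, x.1 ∈ actionNhd B (σ / 2) → ∀ i,
    (F x).1 i = x.1 i - ε * (gradPhi s (cxPhase ((F x).1, x.2)) i).re
  snd_apply : ∀ x : RPhase d, x.1 ∈ actionNhd B (σ / 2) → ∀ i,
    (F x).2 i = x.2 i + ω (F x).1 i + ε * (gradJ s (cxPhase ((F x).1, x.2)) i).re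
  map_add_intCast : ∀ (x : RPhase d) (e : Fin d → ℤ),
    F (x.1, x.2 + fun i => (e i : ℝ)) = ((F x).1, (F x).2 + fun i => (e i : ℝ))

variable {B : Set (Fin d → ℝ)} {σ r Ms ε : ℝ} {ω : (Fin d → ℝ) → Fin d → ℝ} {s : CPhase d → ℂ}
  {F : RPhase d → RPhase d} {x p : RPhase d} {I : Fin d → ℝ}

theorem cxPhase_mem_complexDomain (hr : 0 ≤ r) (hp : p.1 ∈ actionNhd B σ) :
    cxPhase p ∈ complexDomain B σ r := by
  obtain ⟨y, hy, hdist⟩ := hp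
  refine ⟨⟨y, hy, ?_⟩, fun i => by simpa [cxPhase, cx] using hr⟩
  rwa [cxPhase, dist_eq_norm, ← cx_sub, norm_cx, ← dist_eq_norm]

namespace NearIntegrableMap

theorem Ms_nonneg (h : NearIntegrableMap B σ r Ms ε ω s F) (hσ : 0 ≤ σ) (hr : 0 ≤ r)
    (hI : I ∈ B) : 0 ≤ Ms :=
  (norm_nonneg _).trans (h.norm_le _ (cxPhase_mem_complexDomain (p := (I, 0)) hr
    ⟨I, hI, by simpa using hσ⟩))

theorem norm_gradPhi_le (h : NearIntegrableMap B σ r Ms ε ω s F) (hr : 0 < r)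
    (hp : p.1 ∈ actionNhd B σ) : ‖gradPhi s (cxPhase p)‖ ≤ 2 * Ms / r := by
  have hdom := cxPhase_mem_complexDomain hr.le hp
  have hMs : 0 ≤ Ms := (norm_nonneg _).trans (h.norm_le _ hdom)
  refine (pi_norm_le_iff_of_nonneg (by positivity)).2 fun i => ?_
  have hline (t : ℂ) (ht : ‖t‖ < r) :
      cxPhase p + t • ((0, Pi.single i 1) : CPhase d) ∈ complexDomain B σ r := by
    refine ⟨by simpa using hdom.1, fun j => ?_⟩
    have him : ((cxPhase p + t • ((0, Pi.single i 1) : CPhase d)).2 j).im =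
        if j = i then t.im else 0 := by
      by_cases hj : j = i <;> simp [cxPhase, cx, hj]
    rw [him]
    split_ifs
    exacts [(Complex.abs_im_le_norm t).trans ht.le, by simpa using hr.le]
  exact norm_fderiv_apply_le hr (fun t ht => (h.analyticOnNhd _ (hline t ht)).differentiableAt)
    fun t ht => h.norm_le _ (hline t ht)

theorem norm_fst_sub_le (h : NearIntegrableMap B σ r Ms ε ω s F) (hr : 0 < r) (hε : 0 ≤ ε)
    (hx : x.1 ∈ actionNhd B (σ / 2)) : ‖(F x).1 - x.1‖ ≤ ε * (2 * Ms / r) := by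
  have hle := h.norm_gradPhi_le (p := ((F x).1, x.2)) hr (h.mapsTo x hx)
  refine (pi_norm_le_iff_of_nonneg (mul_nonneg hε ((norm_nonneg _).trans hle))).2 fun i => ?_
  rw [Pi.sub_apply, h.fst_apply x hx i, sub_sub_cancel_left, norm_neg, norm_mul,
    Real.norm_of_nonneg hε]
  gcongr
  exact (Complex.abs_re_le_norm _).trans ((norm_le_pi_norm _ i).trans hle)

theorem im_fderiv_eq_zero (h : NearIntegrableMap B σ r Ms ε ω s F) (hr : 0 ≤ r) (hI : I ∈ B)
    (hp : p.1 ∈ ball I σ) (v : RPhase d) : (fderiv ℂ s (cxPhase p) (cxPhase v)).im = 0 := by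
  have hmem {y : RPhase d} (hy : y.1 ∈ ball I σ) : cxPhase y ∈ complexDomain B σ r :=
    cxPhase_mem_complexDomain hr ⟨I, hI, (mem_ball.1 hy).le⟩
  refine im_fderiv_cxPhase (h.analyticOnNhd _ (hmem hp)).differentiableAt ?_ v
  exact (continuousAt_fst.eventually_mem (isOpen_ball.mem_nhds hp)).mono fun y hy =>
    h.im_eq_zero y (hmem hy)

theorem gradPhi_eq_re (h : NearIntegrableMap B σ r Ms ε ω s F) (hr : 0 ≤ r) (hI : I ∈ B)
    (hp : p.1 ∈ ball I σ) (i : Fin d) :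
    gradPhi s (cxPhase p) i = ((gradPhi s (cxPhase p) i).re : ℂ) := by
  have hdir : cxPhase (0, Pi.single i 1) = ((0, Pi.single i 1) : CPhase d) :=
    Prod.ext cx_zero (cx_single i)
  have him := h.im_fderiv_eq_zero hr hI hp (0, Pi.single i 1)
  rw [hdir] at him
  exact Complex.ext rfl him

theorem gradJ_eq_re (h : NearIntegrableMap B σ r Ms ε ω s F) (hr : 0 ≤ r) (hI : I ∈ B)
    (hp : p.1 ∈ ball I σ) (i : Fin d) :
    gradJ s (cxPhase p) i = ((gradJ s (cxPhase p) i).re : ℂ) := by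
  have hdir : cxPhase (Pi.single i 1, 0) = ((Pi.single i 1, 0) : CPhase d) :=
    Prod.ext (cx_single i) cx_zero
  have him := h.im_fderiv_eq_zero hr hI hp (Pi.single i 1, 0)
  rw [hdir] at him
  exact Complex.ext rfl him

theorem cx_fst (h : NearIntegrableMap B σ r Ms ε ω s F) (hr : 0 ≤ r) (hI : I ∈ B)
    (hx : x.1 ∈ actionNhd B (σ / 2)) (hFx : (F x).1 ∈ ball I σ) :
    cx d (F x).1 = cx d x.1 - (ε : ℂ) • gradPhi s (cxPhase ((F x).1, x.2)) := by
  ext i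
  rw [Pi.sub_apply, Pi.smul_apply, h.gradPhi_eq_re hr hI (p := ((F x).1, x.2)) hFx i, cx,
    h.fst_apply x hx i]
  simp [cx]

theorem cx_snd (h : NearIntegrableMap B σ r Ms ε ω s F) (hr : 0 ≤ r) (hI : I ∈ B)
    (hx : x.1 ∈ actionNhd B (σ / 2)) (hFx : (F x).1 ∈ ball I σ) :
    cx d (F x).2 = cx d x.2 + cx d (ω (F x).1)
      + (ε : ℂ) • gradJ s (cxPhase ((F x).1, x.2)) := by
  ext i
  rw [Pi.add_apply, Pi.smul_apply, h.gradJ_eq_re hr hI (p := ((F x).1, x.2)) hFx i, cx,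
    h.snd_apply x hx i]
  simp [cx]

end NearIntegrableMap

end NearIntegrableMap

/-! ### Rescaling around a resonant action -/

section Rescaling

variable {d : ℕ}

/-- The second-order Taylor remainder of `g` at `a` in the rescaled variable `J = (I - a) / μ`,
normalised by `μ⁻²`. -/
noncomputable def rescaledRemainder (g : (Fin d → ℂ) → ℂ) (a : Fin d → ℂ) (μ : ℝ)
    (J : Fin d → ℂ) : ℂ :=
  ((μ : ℂ) ^ 2)⁻¹ * (g (a + (μ : ℂ) • J) - g a - fderiv ℂ g a ((μ : ℂ) • J))

/-- The perturbation `s` in the rescaled action variable `J = (I - a) / μ`. -/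
def rescaledPerturbation (s : CPhase d → ℂ) (a : Fin d → ℂ) (μ : ℝ) (z : CPhase d) : ℂ :=
  s (a + (μ : ℂ) • z.1, z.2)

/-- The map `F` in the rescaled action variable `J = (I' - I) / μ`. -/
noncomputable def rescaledMap (F : RPhase d → RPhase d) (I : Fin d → ℝ) (μ : ℝ) (x : RPhase d) :
    RPhase d :=
  (μ⁻¹ • ((F (I + μ • x.1, x.2)).1 - I), (F (I + μ • x.1, x.2)).2)

variable {g : (Fin d → ℂ) → ℂ} {s : CPhase d → ℂ} {a J : Fin d → ℂ} {μ ρ M : ℝ} {z : CPhase d}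

theorem iterate_rescaledMap (F : RPhase d → RPhase d) (I : Fin d → ℝ) (hμ : μ ≠ 0) (x : RPhase d)
    (k : ℕ) : (rescaledMap F I μ)^[k] x =
      (μ⁻¹ • ((F^[k] (I + μ • x.1, x.2)).1 - I), (F^[k] (I + μ • x.1, x.2)).2) := by
  induction k with
  | zero => simp [smul_smul, inv_mul_cancel₀ hμ]
  | succ k ih =>
    rw [Function.iterate_succ_apply', ih, Function.iterate_succ_apply', rescaledMap]
    simp [smul_smul, mul_inv_cancel₀ hμ]

theorem hasFDerivAt_add_smul (a J : Fin d → ℂ) (μ : ℝ) :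
    HasFDerivAt (fun J => a + (μ : ℂ) • J) ((μ : ℂ) • ContinuousLinearMap.id ℂ (Fin d → ℂ)) J :=
  ((hasFDerivAt_id J).const_smul (μ : ℂ)).const_add a

theorem analyticAt_rescaledRemainder (hg : AnalyticAt ℂ g (a + (μ : ℂ) • J)) :
    AnalyticAt ℂ (rescaledRemainder g a μ) J := by
  have hlin : AnalyticAt ℂ (fun J : Fin d → ℂ => (μ : ℂ) • J) J := by fun_prop
  exact analyticAt_const.mul (((hg.comp_of_eq (analyticAt_const.add hlin) rfl).sub
    analyticAt_const).sub (((fderiv ℂ g a).analyticAt _).comp_of_eq hlin rfl))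

theorem fderiv_rescaledRemainder (hμ : μ ≠ 0) (hg : DifferentiableAt ℂ g (a + (μ : ℂ) • J))
    (v : Fin d → ℂ) : μ * fderiv ℂ (rescaledRemainder g a μ) J v =
      fderiv ℂ g (a + (μ : ℂ) • J) v - fderiv ℂ g a v := by
  have hμ' : (μ : ℂ) ≠ 0 := Complex.ofReal_ne_zero.2 hμ
  have hder := ((((hg.hasFDerivAt.comp J (hasFDerivAt_add_smul a J μ)).sub_const (g a)).sub
    ((fderiv ℂ g a).hasFDerivAt.comp J ((hasFDerivAt_id J).const_smul (μ : ℂ)))).const_mul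
      ((μ : ℂ) ^ 2)⁻¹)
  rw [show fderiv ℂ (rescaledRemainder g a μ) J = _ from hder.fderiv]
  simp
  field_simp

theorem norm_rescaledRemainder_le (hg : BoundedHolo g (ball a ρ) M) (hμ : 0 < μ)
    (hJ : μ * ‖J‖ < ρ) : ‖rescaledRemainder g a μ J‖ ≤ 4 * M * (‖J‖ / ρ) ^ 2 := by
  have hnorm : ‖(μ : ℂ) • J‖ = μ * ‖J‖ := by
    rw [norm_smul, Complex.norm_real, Real.norm_of_nonneg hμ.le]
  have htaylor := hg.norm_sub_sub_fderiv_le (z := a + (μ : ℂ) • J) <| by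
    rwa [mem_ball_iff_norm, add_sub_cancel_left, hnorm]
  rw [add_sub_cancel_left, hnorm] at htaylor
  rw [rescaledRemainder, norm_mul, norm_inv, norm_pow, Complex.norm_real,
    Real.norm_of_nonneg hμ.le, inv_mul_le_iff₀ (by positivity)]
  exact htaylor.trans_eq (by ring)

theorem hasFDerivAt_rescaledPerturbation (hs : DifferentiableAt ℂ s (a + (μ : ℂ) • z.1, z.2)) :
    HasFDerivAt (rescaledPerturbation s a μ) ((fderiv ℂ s (a + (μ : ℂ) • z.1, z.2)).comp
      (((μ : ℂ) • ContinuousLinearMap.fst ℂ (Fin d → ℂ) (Fin d → ℂ)).prod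
        (ContinuousLinearMap.snd ℂ (Fin d → ℂ) (Fin d → ℂ)))) z := by
  have hscale : HasFDerivAt (fun z : CPhase d => (a + (μ : ℂ) • z.1, z.2))
      (((μ : ℂ) • ContinuousLinearMap.fst ℂ (Fin d → ℂ) (Fin d → ℂ)).prod
        (ContinuousLinearMap.snd ℂ (Fin d → ℂ) (Fin d → ℂ))) z :=
    ((hasFDerivAt_fst.const_smul (μ : ℂ)).const_add a).prodMk hasFDerivAt_snd
  exact HasFDerivAt.comp z (f := fun z : CPhase d => (a + (μ : ℂ) • z.1, z.2)) hs.hasFDerivAt hscale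

theorem analyticAt_rescaledPerturbation (hs : AnalyticAt ℂ s (a + (μ : ℂ) • z.1, z.2)) :
    AnalyticAt ℂ (rescaledPerturbation s a μ) z := by
  have hscale : AnalyticAt ℂ (fun z : CPhase d => (a + (μ : ℂ) • z.1, z.2)) z :=
    (analyticAt_const.fun_add (analyticAt_const.fun_smul analyticAt_fst)).prod analyticAt_snd
  exact hs.comp_of_eq hscale rfl

theorem fderiv_resonantGenerator (hμ : μ ≠ 0) (hg : AnalyticAt ℂ g (a + (μ : ℂ) • z.1))
    (hs : DifferentiableAt ℂ s (a + (μ : ℂ) • z.1, z.2)) (v : CPhase d) :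
    fderiv ℂ (resonantGenerator μ (rescaledRemainder g a μ) (rescaledPerturbation s a μ)) z v =
      fderiv ℂ g (a + (μ : ℂ) • z.1) v.1 - fderiv ℂ g a v.1
        + μ * fderiv ℂ s (a + (μ : ℂ) • z.1, z.2) ((μ : ℂ) • v.1, v.2) := by
  have hq := (analyticAt_rescaledRemainder hg).differentiableAt.hasFDerivAt.comp z hasFDerivAt_fst
  have hder := (hq.add (hasFDerivAt_rescaledPerturbation hs)).const_mul (μ : ℂ)
  rw [show fderiv ℂ (resonantGenerator μ (rescaledRemainder g a μ) (rescaledPerturbation s a μ)) z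
    = _ from hder.fderiv, ← fderiv_rescaledRemainder hμ hg.differentiableAt]
  simp

theorem gradPhi_resonantGenerator (hμ : μ ≠ 0) (hg : AnalyticAt ℂ g (a + (μ : ℂ) • z.1))
    (hs : DifferentiableAt ℂ s (a + (μ : ℂ) • z.1, z.2)) :
    gradPhi (resonantGenerator μ (rescaledRemainder g a μ) (rescaledPerturbation s a μ)) z =
      (μ : ℂ) • gradPhi s (a + (μ : ℂ) • z.1, z.2) := by
  ext i
  rw [gradPhi, fderiv_resonantGenerator hμ hg hs]
  simp [gradPhi]

theorem gradJ_resonantGenerator (hμ : μ ≠ 0) (hg : AnalyticAt ℂ g (a + (μ : ℂ) • z.1))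
    (hs : DifferentiableAt ℂ s (a + (μ : ℂ) • z.1, z.2)) (i : Fin d) :
    gradJ (resonantGenerator μ (rescaledRemainder g a μ) (rescaledPerturbation s a μ)) z i =
      fderiv ℂ g (a + (μ : ℂ) • z.1) (Pi.single i 1) - fderiv ℂ g a (Pi.single i 1)
        + (μ : ℂ) ^ 2 * gradJ s (a + (μ : ℂ) • z.1, z.2) i := by
  have hscale : (((μ : ℂ) • Pi.single i 1, 0) : CPhase d) = (μ : ℂ) • (Pi.single i 1, 0) := by simp
  rw [gradJ, fderiv_resonantGenerator hμ hg hs, hscale, map_smul, smul_eq_mul, gradJ]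
  ring

end Rescaling

section RealRemainder

variable {d : ℕ} {h₀ : (Fin d → ℝ) → ℝ} {ω : (Fin d → ℝ) → Fin d → ℝ} {g : (Fin d → ℂ) → ℂ}
  {I J : Fin d → ℝ} {μ ρ σ M ν ν' : ℝ}

theorem rescaledRemainder_cx (hg : ComplexExtension h₀ I ρ M g)
    (hh : ConvexHamiltonian (ball I σ) ν ν' h₀ ω) (hσ : 0 < σ) (hJ : ‖μ • J‖ < ρ) :
    rescaledRemainder g (cx d I) μ (cx d J) =
      ((μ ^ 2)⁻¹ * (h₀ (I + μ • J) - h₀ I - ∑ i, ω I i * (μ • J) i) : ℝ) := by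
  have hI : I ∈ ball I σ := mem_ball_self hσ
  have hIρ : I ∈ ball I ρ := mem_ball_self ((norm_nonneg _).trans_lt hJ)
  rw [rescaledRemainder, ← cx_smul, ← cx_add, hg.apply_cx _ hIρ, hg.apply_cx _ (by simpa using hJ),
    hg.fderiv_cx hIρ (hh.hasFDerivAt I hI).differentiableAt, hh.fderiv_apply hI]
  push_cast
  rfl

theorem le_re_rescaledRemainder (hg : ComplexExtension h₀ I ρ M g)
    (hh : ConvexHamiltonian (ball I σ) ν ν' h₀ ω) (hμ : 0 < μ) (hν : 0 ≤ ν) (hJρ : ‖μ • J‖ < ρ)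
    (hJσ : ‖μ • J‖ < σ) : ν / 2 * ‖J‖ ^ 2 ≤ (rescaledRemainder g (cx d I) μ (cx d J)).re := by
  rw [rescaledRemainder_cx hg hh ((norm_nonneg _).trans_lt hJσ) hJρ, Complex.ofReal_re,
    le_inv_mul_iff₀ (by positivity)]
  calc μ ^ 2 * (ν / 2 * ‖J‖ ^ 2) = ν / 2 * ‖μ • J‖ ^ 2 := by
        rw [norm_smul, Real.norm_of_nonneg hμ.le]; ring
    _ ≤ ν / 2 * ∑ i, (μ • J) i ^ 2 := by gcongr; exact norm_sq_le_sum_sq _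
    _ ≤ _ := hh.le_sub_sub hJσ

theorem re_rescaledRemainder_le (hg : ComplexExtension h₀ I ρ M g)
    (hh : ConvexHamiltonian (ball I σ) ν ν' h₀ ω) (hμ : 0 < μ) (hν' : 0 ≤ ν') (hJρ : ‖μ • J‖ < ρ)
    (hJσ : ‖μ • J‖ < σ) :
    (rescaledRemainder g (cx d I) μ (cx d J)).re ≤ d * ν' / 2 * ‖J‖ ^ 2 := by
  rw [rescaledRemainder_cx hg hh ((norm_nonneg _).trans_lt hJσ) hJρ, Complex.ofReal_re,
    inv_mul_le_iff₀ (by positivity)]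
  calc _ ≤ ν' / 2 * ∑ i, (μ • J) i ^ 2 := hh.sub_sub_le hJσ
    _ ≤ ν' / 2 * (d * ‖μ • J‖ ^ 2) := by gcongr; exact sum_sq_le_norm_sq _
    _ = μ ^ 2 * (d * ν' / 2 * ‖J‖ ^ 2) := by
        rw [norm_smul, Real.norm_of_nonneg hμ.le]; ring

theorem fderiv_single_eq_frequency (hg : ComplexExtension h₀ I ρ M g)
    (hh : ConvexHamiltonian (ball I σ) ν ν' h₀ ω) {y : Fin d → ℝ} (hyρ : y ∈ ball I ρ)
    (hyσ : y ∈ ball I σ) (i : Fin d) : fderiv ℂ g (cx d y) (Pi.single i 1) = (ω y i : ℂ) := by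
  rw [← cx_single, hg.fderiv_cx hyρ (hh.hasFDerivAt y hyσ).differentiableAt,
    hh.fderiv_apply hyσ]
  simp [Pi.single_apply]

end RealRemainder

section RescaledModel

variable {d : ℕ}

/-- The scale `μ` is so small that the rescaled problem around a resonant action falls under the
hypotheses of `ResonantModel`: `ρ`, `σ`, `r` are the widths of analyticity in the original
variables, `τ` the width and `L` the radius in the rescaled ones. -/
structure RescalingScale (L τ ρ σ r Mq Ms μ : ℝ) : Prop where
  μ_pos : 0 < μ
  τ_pos : 0 < τ
  four_mul_le : 4 * τ ≤ r
  mul_le_radius : μ * (L + 4 * τ) ≤ ρ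
  mul_le_width : μ * (L + 4 * τ) ≤ σ / 2
  step_le : μ * (2 * Ms / r) ≤ τ
  small : 8 * (μ * (Mq + Ms)) ≤ τ ^ 2

section Model

variable {L τ ρ σ r M Ms μ ν ν' : ℝ} {h₀ : (Fin d → ℝ) → ℝ} {ω : (Fin d → ℝ) → Fin d → ℝ}
  {g : (Fin d → ℂ) → ℂ} {s : CPhase d → ℂ} {F : RPhase d → RPhase d} {B : Set (Fin d → ℝ)}
  {I J : Fin d → ℝ} {z : CPhase d} {x : RPhase d} {Mq : ℝ}

theorem RescalingScale.smul_lt (hs : RescalingScale L τ ρ σ r Mq Ms μ) {V : Type*}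
    [NormedAddCommGroup V] [NormedSpace ℝ V] {v : V} (hv : ‖v‖ < L + 4 * τ) :
    ‖μ • v‖ < ρ ∧ ‖μ • v‖ < σ / 2 := by
  have hlt : ‖μ • v‖ < μ * (L + 4 * τ) := by
    rw [norm_smul, Real.norm_of_nonneg hs.μ_pos.le]
    exact mul_lt_mul_of_pos_left hv hs.μ_pos
  exact ⟨hlt.trans_le hs.mul_le_radius, hlt.trans_le hs.mul_le_width⟩

theorem RescalingScale.mem_complexDomain (hs : RescalingScale L τ ρ σ r Mq Ms μ) (hI : I ∈ B)
    (hz : z ∈ complexStrip d L (4 * τ)) :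
    (cx d I + (μ : ℂ) • z.1, z.2) ∈ complexDomain B σ r := by
  have hlt := (hs.smul_lt hz.1).2
  refine ⟨⟨I, hI, ?_⟩, fun i => (hz.2 i).le.trans hs.four_mul_le⟩
  rw [dist_eq_norm, add_sub_cancel_left]
  exact hlt.le.trans (half_le_self (by linarith [norm_nonneg (μ • z.1)]))

theorem RescalingScale.mem_ball (hs : RescalingScale L τ ρ σ r Mq Ms μ)
    {v : Fin d → ℂ} (hv : ‖v‖ < L + 4 * τ) : cx d I + (μ : ℂ) • v ∈ ball (cx d I) ρ := by
  rw [mem_ball_iff_norm, add_sub_cancel_left]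
  exact (hs.smul_lt hv).1

theorem boundedHolo_rescaledRemainder
    (hs : RescalingScale L τ ρ σ r (4 * M * ((L + 4 * τ) / ρ) ^ 2) Ms μ)
    (hg : ComplexExtension h₀ I ρ M g) : BoundedHolo (rescaledRemainder g (cx d I) μ)
      (ball 0 (L + 4 * τ)) (4 * M * ((L + 4 * τ) / ρ) ^ 2) where
  differentiableOn J hJ := (analyticAt_rescaledRemainder (hg.analyticOnNhd _
    (hs.mem_ball (mem_ball_zero_iff.1 hJ)))).differentiableAt.differentiableWithinAt
  norm_le J hJ := by
    rw [mem_ball_zero_iff] at hJ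
    have hmem := hs.mem_ball (I := I) hJ
    have hM : 0 ≤ M := (norm_nonneg _).trans (hg.norm_le _ hmem)
    have hρ : 0 < ρ := nonempty_ball.1 ⟨_, hmem⟩
    have hbounded : BoundedHolo g (ball (cx d I) ρ) M :=
      ⟨hg.analyticOnNhd.differentiableOn, hg.norm_le⟩
    refine (norm_rescaledRemainder_le hbounded hs.μ_pos ?_).trans (by gcongr)
    exact (mul_lt_mul_of_pos_left hJ hs.μ_pos).trans_le hs.mul_le_radius

theorem smallGenerator_rescaled (hs : RescalingScale L τ ρ σ r (4 * M * ((L + 4 * τ) / ρ) ^ 2) Ms μ)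
    (hg : ComplexExtension h₀ I ρ M g) (hF : NearIntegrableMap B σ r Ms (μ ^ 2) ω s F)
    (hI : I ∈ B) :
    SmallGenerator L τ (μ * (4 * M * ((L + 4 * τ) / ρ) ^ 2 + Ms)) (resonantGenerator μ
      (rescaledRemainder g (cx d I) μ) (rescaledPerturbation s (cx d I) μ)) where
  τ_pos := hs.τ_pos
  analyticOnNhd z hz := analyticAt_const.mul
    (((analyticAt_rescaledRemainder (hg.analyticOnNhd _ (hs.mem_ball hz.1))).comp
      analyticAt_fst).add (analyticAt_rescaledPerturbation
        (hF.analyticOnNhd _ (hs.mem_complexDomain hI hz))))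
  norm_le z hz := by
    rw [resonantGenerator, norm_mul, Complex.norm_real, Real.norm_of_nonneg hs.μ_pos.le]
    refine mul_le_mul_of_nonneg_left (norm_add_le_of_le ?_ ?_) hs.μ_pos.le
    · exact (boundedHolo_rescaledRemainder hs hg).norm_le _ (mem_ball_zero_iff.2 hz.1)
    · exact hF.norm_le _ (hs.mem_complexDomain hI hz)
  small := hs.small

section Map

variable (hs : RescalingScale L τ ρ σ r Mq Ms μ) (hF : NearIntegrableMap B σ r Ms (μ ^ 2) ω s F)
  (hI : I ∈ B) (hx : ‖x.1‖ < L + τ)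

include hs hI hx

theorem RescalingScale.add_smul_mem_actionNhd : I + μ • x.1 ∈ actionNhd B (σ / 2) :=
  ⟨I, hI, by simpa [dist_eq_norm] using (hs.smul_lt (v := x.1) (by linarith [hs.τ_pos])).2.le⟩

include hF

theorem norm_rescaledMap_fst_lt : ‖(rescaledMap F I μ x).1‖ < L + 2 * τ := by
  have hμ := hs.μ_pos
  have hr : 0 < r := by linarith [hs.four_mul_le, hs.τ_pos]
  have hdrift := hF.norm_fst_sub_le (x := (I + μ • x.1, x.2)) hr (sq_nonneg μ)
    (hs.add_smul_mem_actionNhd hI hx)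
  have hsub : (rescaledMap F I μ x).1 - x.1 =
      μ⁻¹ • ((F (I + μ • x.1, x.2)).1 - (I + μ • x.1)) := by
    simp [rescaledMap, smul_sub, smul_smul, hμ.ne', sub_sub]
  have hstep : ‖(rescaledMap F I μ x).1 - x.1‖ ≤ τ := by
    rw [hsub, norm_smul, norm_inv, Real.norm_of_nonneg hμ.le, inv_mul_le_iff₀ hμ]
    exact hdrift.trans ((by ring : _ = μ * (μ * (2 * Ms / r))).trans_le
      (mul_le_mul_of_nonneg_left hs.step_le hμ.le))
  linarith [norm_le_norm_add_norm_sub' (rescaledMap F I μ x).1 x.1]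

theorem cxPhase_rescaledMap_fst_mem :
    cxPhase ((rescaledMap F I μ x).1, x.2) ∈ complexStrip d L (2 * τ) :=
  ⟨(norm_cx _).trans_lt (norm_rescaledMap_fst_lt hs hF hI hx), fun i => by
    simpa [cxPhase, cx] using hs.τ_pos⟩

omit hF hI hx in
theorem RescalingScale.add_smul_rescaledMap_fst (F : RPhase d → RPhase d) (I : Fin d → ℝ)
    (x : RPhase d) : I + μ • (rescaledMap F I μ x).1 = (F (I + μ • x.1, x.2)).1 := by
  simp [rescaledMap, smul_smul, hs.μ_pos.ne']

omit hF hI hx in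
theorem RescalingScale.add_smul_cx_rescaledMap_fst (F : RPhase d → RPhase d) (I : Fin d → ℝ)
    (x : RPhase d) : cx d I + (μ : ℂ) • cx d (rescaledMap F I μ x).1 =
      cx d (F (I + μ • x.1, x.2)).1 := by
  rw [← hs.add_smul_rescaledMap_fst, cx_add, cx_smul]

theorem fst_mem_ball : (F (I + μ • x.1, x.2)).1 ∈ ball I (min ρ (σ / 2)) := by
  rw [mem_ball_iff_norm, ← hs.add_smul_rescaledMap_fst, add_sub_cancel_left]
  exact lt_min_iff.2 (hs.smul_lt ((norm_rescaledMap_fst_lt hs hF hI hx).trans_le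
    (by linarith [hs.τ_pos])))

theorem fst_mem_ball_radius : (F (I + μ • x.1, x.2)).1 ∈ ball I ρ :=
  ball_subset_ball (min_le_left _ _) (fst_mem_ball hs hF hI hx)

theorem fst_mem_ball_width : (F (I + μ • x.1, x.2)).1 ∈ ball I σ := by
  have hmem := ball_subset_ball (min_le_right _ _) (fst_mem_ball hs hF hI hx)
  exact ball_subset_ball (by linarith [nonempty_ball.1 ⟨_, hmem⟩]) hmem

end Map

section Model

variable (hs : RescalingScale L τ ρ σ r (4 * M * ((L + 4 * τ) / ρ) ^ 2) Ms μ)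
  (hg : ComplexExtension h₀ I ρ M g) (hF : NearIntegrableMap B σ r Ms (μ ^ 2) ω s F) (hI : I ∈ B)

include hs hg hF hI

theorem genInv_rescaled_cxPhase (hx : ‖x.1‖ < L + τ) :
    genInv L τ (resonantGenerator μ (rescaledRemainder g (cx d I) μ)
      (rescaledPerturbation s (cx d I) μ)) (cxPhase x) =
        cxPhase ((rescaledMap F I μ x).1, x.2) := by
  have hμ : (μ : ℂ) ≠ 0 := Complex.ofReal_ne_zero.2 hs.μ_pos.ne'
  have hτ := hs.τ_pos
  set S := resonantGenerator μ (rescaledRemainder g (cx d I) μ) (rescaledPerturbation s (cx d I) μ)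
  set w : CPhase d := cxPhase ((rescaledMap F I μ x).1, x.2)
  have hw := cxPhase_rescaledMap_fst_mem hs hF hI hx
  have hw4 := complexStrip_mono (by linarith : 2 * τ ≤ 4 * τ) hw
  have hact : cx d I + (μ : ℂ) • w.1 = cx d (F (I + μ • x.1, x.2)).1 :=
    hs.add_smul_cx_rescaledMap_fst F I x
  have hgrad : gradPhi S w = (μ : ℂ) • gradPhi s (cxPhase ((F (I + μ • x.1, x.2)).1, x.2)) := by
    rw [gradPhi_resonantGenerator hs.μ_pos.ne' (hg.analyticOnNhd _ (hs.mem_ball hw4.1))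
      (hF.analyticOnNhd _ (hs.mem_complexDomain hI hw4)).differentiableAt, hact]
    rfl
  have hfst : w.1 + gradPhi S w = cx d x.1 := by
    have heq := hF.cx_fst (x := (I + μ • x.1, x.2)) (by linarith [hs.four_mul_le]) hI
      (hs.add_smul_mem_actionNhd hI hx) (fst_mem_ball_width hs hF hI hx)
    rw [← hact, cx_add, cx_smul, add_sub_assoc, add_right_inj] at heq
    refine smul_right_injective _ hμ ?_
    simp only [smul_add, hgrad, heq, smul_smul]
    push_cast
    rw [sq, sub_add_cancel]
  have hsum : w + (gradPhi S w, 0) = cxPhase x := Prod.ext hfst (add_zero _)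
  rw [← hsum]
  refine (smallGenerator_rescaled hs hg hF hI).genInv_eq hw ?_
  rw [hsum]
  exact ⟨(norm_cx _).trans_lt hx, fun i => by simpa [cxPhase, cx] using hτ⟩

theorem genMap_rescaled_cxPhase (hh : ConvexHamiltonian (ball I σ) ν ν' h₀ ω)
    (hx : ‖x.1‖ < L + τ) :
    genMap L τ (resonantGenerator μ (rescaledRemainder g (cx d I) μ)
      (rescaledPerturbation s (cx d I) μ)) (ω I) (cxPhase x) = cxPhase (rescaledMap F I μ x) := by
  have hμ := hs.μ_pos.ne'
  have hI₀ {t : ℝ} {y : Fin d → ℝ} (hy : y ∈ ball I t) : I ∈ ball I t :=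
    mem_ball_self (nonempty_ball.1 ⟨y, hy⟩)
  have hw4 := complexStrip_mono (by linarith [hs.τ_pos] : 2 * τ ≤ 4 * τ)
    (cxPhase_rescaledMap_fst_mem hs hF hI hx)
  have hact := hs.add_smul_cx_rescaledMap_fst F I x
  have hρ := fst_mem_ball_radius hs hF hI hx
  have hσ := fst_mem_ball_width hs hF hI hx
  have hgrad : gradJ (resonantGenerator μ (rescaledRemainder g (cx d I) μ)
      (rescaledPerturbation s (cx d I) μ)) (cxPhase ((rescaledMap F I μ x).1, x.2)) =
        cx d (ω (F (I + μ • x.1, x.2)).1) - cx d (ω I)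
          + (μ : ℂ) ^ 2 • gradJ s (cxPhase ((F (I + μ • x.1, x.2)).1, x.2)) := by
    ext i
    rw [gradJ_resonantGenerator hμ (hg.analyticOnNhd _ (hs.mem_ball hw4.1))
      (hF.analyticOnNhd _ (hs.mem_complexDomain hI hw4)).differentiableAt]
    simp only [cxPhase, hact]
    rw [fderiv_single_eq_frequency hg hh hρ hσ, fderiv_single_eq_frequency hg hh (hI₀ hρ) (hI₀ hσ)]
    rfl
  have hang := hF.cx_snd (x := (I + μ • x.1, x.2)) (by linarith [hs.four_mul_le, hs.τ_pos]) hI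
    (hs.add_smul_mem_actionNhd hI hx) hσ
  rw [genMap, genInv_rescaled_cxPhase hs hg hF hI hx, hgrad]
  refine Prod.ext rfl ?_
  change cx d x.2 + cx d (ω I) + _ = cx d (F (I + μ • x.1, x.2)).2
  rw [hang]
  push_cast
  abel

theorem resonantModel_rescaled (hh : ConvexHamiltonian (ball I σ) ν ν' h₀ ω) (hν : 0 ≤ ν) {n : ℕ}
    (hn : ∀ i, ∃ e : ℤ, n * ω I i = e) :
    ResonantModel L τ (4 * M * ((L + 4 * τ) / ρ) ^ 2) Ms μ ν (ω I) n
      (rescaledRemainder g (cx d I) μ) (rescaledPerturbation s (cx d I) μ)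
      (rescaledMap F I μ) where
  μ_pos := hs.μ_pos
  gen := smallGenerator_rescaled hs hg hF hI
  boundedHolo_q := boundedHolo_rescaledRemainder hs hg
  norm_u_le z hz := hF.norm_le _ (hs.mem_complexDomain hI hz)
  le_re_q J hJ := by
    have hlt := hs.smul_lt (v := J) (by linarith [hs.τ_pos])
    exact le_re_rescaledRemainder hg hh hs.μ_pos hν hlt.1 (by linarith [norm_nonneg (μ • J)])
  genMap_cxPhase x hx := genMap_rescaled_cxPhase hs hg hF hI hh hx
  map_add_intCast x e := by simp only [rescaledMap, hF.map_add_intCast (I + μ • x.1, x.2) e]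
  exists_intCast := hn

end Model

end Model

end RescaledModel

/-! ### Stability in the nucleus of a resonance -/

section Stability

variable {d : ℕ} {B : Set (Fin d → ℝ)} {L τ ρ σ r M Mq Ms μ ν ν' ε D : ℝ} {n k : ℕ}
  {h₀ : (Fin d → ℝ) → ℝ} {ω : (Fin d → ℝ) → Fin d → ℝ} {g : (Fin d → ℂ) → ℂ}
  {s : CPhase d → ℂ} {F : RPhase d → RPhase d} {I : Fin d → ℝ} {x : RPhase d}

theorem eventually_rescalingScale (hτ : 0 < τ) (hρ : 0 < ρ) (hσ : 0 < σ) (hτr : 4 * τ ≤ r)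
    (L Mq Ms : ℝ) : ∀ᶠ μ in nhdsWithin (0 : ℝ) (Ioi 0), RescalingScale L τ ρ σ r Mq Ms μ := by
  have hsmall {f : ℝ → ℝ} (hf : Continuous f) (hf₀ : f 0 = 0) {b : ℝ} (hb : 0 < b) :
      ∀ᶠ μ in nhdsWithin (0 : ℝ) (Ioi 0), f μ ≤ b :=
    (hf.tendsto' 0 0 hf₀).mono_left nhdsWithin_le_nhds |>.eventually_le_const hb
  filter_upwards [self_mem_nhdsWithin,
    hsmall (f := fun μ => μ * (L + 4 * τ)) (by fun_prop) (zero_mul _) hρ,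
    hsmall (f := fun μ => μ * (L + 4 * τ)) (by fun_prop) (zero_mul _) (half_pos hσ),
    hsmall (f := fun μ => μ * (2 * Ms / r)) (by fun_prop) (zero_mul _) hτ,
    hsmall (f := fun μ => 8 * (μ * (Mq + Ms))) (by fun_prop) (by simp) (pow_pos hτ 2)]
    with μ hμ hradius hwidth hstep hsmall
  exact ⟨hμ, hτ, hτr, hradius, hwidth, hstep, hsmall⟩

theorem norm_iterate_fst_sub_sq_le_of_rescaledMap (hd : 0 < d)
    (hs : RescalingScale L τ ρ σ r Mq Ms μ) (hg : ComplexExtension h₀ I ρ M g)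
    (hh : ConvexHamiltonian (ball I σ) ν ν' h₀ ω) (hν' : 0 < ν')
    (hL : √(2 * (d * ν')⁻¹ * Ms) ≤ L)
    (hconf : ∀ y : RPhase d, ‖y.1‖ ≤ L → (rescaledRemainder g (cx d I) μ (cx d y.1)).re ≤ Ms →
      ‖((rescaledMap F I μ)^[k] y).1‖ ^ 2 ≤ 11 * Ms / ν)
    (hx : ‖x.1 - I‖ ^ 2 ≤ 2 * (d * ν')⁻¹ * Ms * μ ^ 2) :
    ‖(F^[k] x).1 - I‖ ^ 2 ≤ 11 * ν⁻¹ * Ms * μ ^ 2 := by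
  have hμ := hs.μ_pos
  have : (0 : ℝ) < d := Nat.cast_pos.2 hd
  have hscale (v : Fin d → ℝ) : ‖μ⁻¹ • v‖ ^ 2 = ‖v‖ ^ 2 / μ ^ 2 := by
    rw [norm_smul, norm_inv, Real.norm_of_nonneg hμ.le]; field_simp
  set y : RPhase d := (μ⁻¹ • (x.1 - I), x.2)
  have hxy : (I + μ • y.1, y.2) = x := by simp [y, smul_smul, hμ.ne']
  have hy : ‖y.1‖ ^ 2 ≤ 2 * (d * ν')⁻¹ * Ms := by
    rwa [hscale, div_le_iff₀ (by positivity)]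
  have hyL : ‖y.1‖ ≤ L := (Real.le_sqrt_of_sq_le hy).trans hL
  have henergy : (rescaledRemainder g (cx d I) μ (cx d y.1)).re ≤ Ms := by
    have hlt := hs.smul_lt (v := y.1) (by linarith [hs.τ_pos])
    calc _ ≤ d * ν' / 2 * ‖y.1‖ ^ 2 := re_rescaledRemainder_le hg hh hμ hν'.le hlt.1
          (by linarith [norm_nonneg (μ • y.1)])
      _ ≤ d * ν' / 2 * (2 * (d * ν')⁻¹ * Ms) := by gcongr
      _ = Ms := by field_simp
  have hbound := hconf y hyL henergy
  rw [iterate_rescaledMap F I hμ.ne', hxy, hscale, div_le_iff₀ (by positivity)] at hbound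
  exact hbound.trans_eq (by ring)

theorem NearIntegrableMap.iterate_fst_eq (h : NearIntegrableMap B σ r 0 ε ω s F) (hr : 0 < r)
    (hε : 0 ≤ ε) (hx : x.1 ∈ actionNhd B (σ / 2)) (k : ℕ) : (F^[k] x).1 = x.1 := by
  induction k with
  | zero => rfl
  | succ k ih =>
    have hle := h.norm_fst_sub_le hr hε (ih.symm ▸ hx : (F^[k] x).1 ∈ actionNhd B (σ / 2))
    rw [mul_zero, zero_div, mul_zero, norm_le_zero_iff, sub_eq_zero] at hle
    rw [Function.iterate_succ_apply', hle, ih]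

theorem improved_stability_in_resonance_nucleus_general (hd : 1 ≤ d) (hσ : 0 < σ) (hr : 0 < r)
    (hν : 0 < ν) (hν' : 0 < ν') (hB : IsCompact B)
    (hh : ConvexHamiltonian (actionNhd B σ) ν ν' h₀ ω) (Ms : ℝ) :
    ∃ c₄ c₅ D₀ : ℝ, 0 < c₄ ∧ 0 < c₅ ∧ 0 < D₀ ∧
      ∀ ε s F, 0 < ε → NearIntegrableMap B σ r Ms ε ω s F → ∀ n : ℕ, 0 < n → n * √ε ≤ D₀ →
        ∀ I ∈ B, (∀ i, ∃ e : ℤ, n * ω I i = e) →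
          ∀ x : RPhase d, ‖x.1 - I‖ ^ 2 ≤ 2 * (d * ν')⁻¹ * Ms * ε →
            ∀ k : ℕ, k ≤ c₄ * Real.exp (c₅ / (n * √ε)) →
              ‖(F^[k] x).1 - I‖ ^ 2 ≤ 11 * ν⁻¹ * Ms * ε := by
  rcases le_or_gt Ms 0 with hMs | hMs
  · refine ⟨1, 1, 1, one_pos, one_pos, one_pos, fun ε s F hε hF n _ _ I hI _ x hx k _ => ?_⟩
    obtain rfl : Ms = 0 := hMs.antisymm (hF.Ms_nonneg hσ.le hr.le hI)
    have hxI : x.1 = I := by simpa [sub_eq_zero, sq_nonpos_iff] using hx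
    rw [hF.iterate_fst_eq hr hε.le ⟨I, hI, by simpa [hxI] using (half_pos hσ).le⟩, hxI]
    simp
  obtain ⟨ρ, hρ, M', hext⟩ := exists_complexExtension_of_isCompact hB
    (hh.analyticOnNhd.mono fun I hI => ⟨I, hI, by simpa using hσ.le⟩)
  set M := max M' 0
  set L := max (√(7 * Ms / ν) + 1) √(2 * (d * ν')⁻¹ * Ms)
  obtain ⟨c₄, c₅, D₁, hc₄, hc₅, hD₁, hconf⟩ := ResonantModel.exists_confinement_constants d
    (L := L) (τ := r / 4) (Mq := 4 * M * ((L + 4 * (r / 4)) / ρ) ^ 2) (by positivity)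
    (by positivity) hMs hν (le_max_left _ _)
  obtain ⟨μ₀, hμ₀, hscale⟩ := mem_nhdsGT_iff_exists_Ioc_subset.1 <|
    eventually_rescalingScale (τ := r / 4) (r := r) (by positivity) hρ hσ (by linarith) L
      (4 * M * ((L + 4 * (r / 4)) / ρ) ^ 2) Ms
  refine ⟨c₄, c₅, min D₁ μ₀, hc₄, hc₅, lt_min hD₁ hμ₀,
    fun ε s F hε hF n hn hnε I hI hres x hx k hk => ?_⟩
  have hμ : √ε ≤ n * √ε := le_mul_of_one_le_left (Real.sqrt_nonneg ε) (Nat.one_le_cast.2 hn)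
  have hs := hscale ⟨Real.sqrt_pos.2 hε, hμ.trans (hnε.trans (min_le_right _ _))⟩
  have hhI : ConvexHamiltonian (ball I σ) ν ν' h₀ ω := hh.mono fun y hy => ⟨I, hI, hy.le⟩
  obtain ⟨g, hg'⟩ := hext I hI
  have hg : ComplexExtension h₀ I ρ M g := hg'.mono (by simp) (le_max_left _ _)
  rw [← Real.sq_sqrt hε.le] at hF hx ⊢
  have hmodel := resonantModel_rescaled hs hg hF hI hhI hν.le hres
  exact norm_iterate_fst_sub_sq_le_of_rescaledMap hd hs hg hhI hν' (le_max_right _ _)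
    (fun y hy henergy =>
      hconf _ _ n _ _ _ hmodel hn (hnε.trans (min_le_left _ _)) y hy henergy k hk) hx

theorem mul_sqrt_le_of_lt_rpow (hε : 0 < ε) (hD : 0 < D)
    (hεD : ε ≤ D ^ (2 * ((d : ℝ) + 1))) (hn : n < ε ^ (-((d : ℝ) / (2 * ((d : ℝ) + 1))))) :
    n * √ε ≤ D := by
  have hexp : -((d : ℝ) / (2 * ((d : ℝ) + 1))) + 1 / 2 = (2 * ((d : ℝ) + 1))⁻¹ := by
    field_simp
    ring
  calc n * √ε ≤ ε ^ (-((d : ℝ) / (2 * ((d : ℝ) + 1)))) * √ε := by gcongr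
    _ = ε ^ (2 * ((d : ℝ) + 1))⁻¹ := by rw [Real.sqrt_eq_rpow, ← Real.rpow_add hε, hexp]
    _ ≤ (D ^ (2 * ((d : ℝ) + 1))) ^ (2 * ((d : ℝ) + 1))⁻¹ := by gcongr
    _ = D := Real.rpow_rpow_inv hD.le (by positivity)

end Stability

/-- **Improved stability in the nucleus of a resonance.**
In the Nekhoroshev setting, with `‖s‖ = M_s` the uniform bound of the perturbation on
`𝒟_F`, `‖h₀''‖ ≤ n_{h''}` a bound for the Hessian quadratic form of `h₀` and
`ν₂ = d·n_{h''}`: there are constants `c₄, c₅ > 0`, independent of the resonance, and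
`ε₀ > 0` such that if `0 < ε ≤ ε₀`, `n < ε^{−d/(2(d+1))}`, `n ω(I*) ∈ ℤ^d` with
`I* ∈ B_R`, and `|I₀ − I*|² ≤ 2 ν₂^{−1} ‖s‖ ε`, then
`|I_k − I*|² ≤ 11 ν^{−1} ‖s‖ ε` for all `0 ≤ k ≤ c₄ exp(c₅/√(n²ε))`. -/
theorem improved_stability_in_resonance_nucleus (d : ℕ) (hd : 1 ≤ d)
    (R σ r ν εbar Ms : ℝ)
    (hR : 0 < R) (hσ : 0 < σ) (hr : 0 < r) (hν : 0 < ν) (hεbar : 0 < εbar)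
    (c₀ : Fin d → ℝ) (BR : Set (Fin d → ℝ)) (hBR : BR = Metric.closedBall c₀ R)
    (Uσ : Set (Fin d → ℝ)) (hUσ : Uσ = {I | ∃ y ∈ BR, dist I y ≤ σ})
    (DF : Set (CPhase d))
    (hDF : DF = {z : CPhase d |
      (∃ y ∈ BR, dist z.1 (cx d y) ≤ σ) ∧ ∀ i, |(z.2 i).im| ≤ r})
    (h₀ : (Fin d → ℝ) → ℝ) (hh₀ : AnalyticOnNhd ℝ h₀ Uσ)
    (ω : (Fin d → ℝ) → Fin d → ℝ)
    (hω : ∀ I ∈ Uσ, HasFDerivAt h₀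
      (∑ i, ω I i • (ContinuousLinearMap.proj i : (Fin d → ℝ) →L[ℝ] ℝ)) I)
    (hconvex : ∀ I ∈ Uσ, ∀ v : Fin d → ℝ,
      ν * ∑ i, v i ^ 2 ≤ ∑ i, fderiv ℝ ω I v i * v i)
    (s : ℝ → CPhase d → ℂ)
    (hsa : ∀ ε ∈ Set.Icc (0 : ℝ) εbar, AnalyticOnNhd ℂ (s ε) DF)
    (hsreal : ∀ ε ∈ Set.Icc (0 : ℝ) εbar, ∀ x : RPhase d,
      (cx d x.1, cx d x.2) ∈ DF → (s ε (cx d x.1, cx d x.2)).im = 0)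
    (hsper : ∀ ε ∈ Set.Icc (0 : ℝ) εbar, ∀ z ∈ DF, ∀ e : Fin d → ℤ,
      s ε (z.1, z.2 + fun i => ((e i : ℝ) : ℂ)) = s ε z)
    (hsbound : ∀ ε ∈ Set.Icc (0 : ℝ) εbar, ∀ z ∈ DF, ‖s ε z‖ ≤ Ms)
    (F : ℝ → RPhase d → RPhase d)
    (hF : ∀ ε ∈ Set.Icc (0 : ℝ) εbar, ∀ x : RPhase d,
      (∃ y ∈ BR, dist x.1 y ≤ σ / 2) →
      (∃ y ∈ BR, dist (F ε x).1 y ≤ σ) ∧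
      (∀ i, (F ε x).1 i = x.1 i -
        ε * (fderiv ℂ (s ε) (cx d (F ε x).1, cx d x.2) (0, Pi.single i 1)).re) ∧
      (∀ i, (F ε x).2 i = x.2 i + ω (F ε x).1 i +
        ε * (fderiv ℂ (s ε) (cx d (F ε x).1, cx d x.2) (Pi.single i 1, 0)).re))
    (hlift : ∀ ε ∈ Set.Icc (0 : ℝ) εbar, ∀ x : RPhase d, ∀ e : Fin d → ℤ,
      F ε (x.1, x.2 + fun i => (e i : ℝ)) = ((F ε x).1, (F ε x).2 + fun i => (e i : ℝ)))
    (nh2 : ℝ) (hnh2pos : 0 < nh2)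
    (hh2 : ∀ I ∈ Uσ, ∀ v : Fin d → ℝ,
      ∑ i, fderiv ℝ ω I v i * v i ≤ nh2 * ∑ i, v i ^ 2) :
    ∃ c₄ c₅ ε₀ : ℝ, 0 < c₄ ∧ 0 < c₅ ∧ 0 < ε₀ ∧ ε₀ ≤ εbar ∧
      ∀ ε : ℝ, 0 < ε → ε ≤ ε₀ →
        ∀ n : ℕ, 0 < n → (n : ℝ) < ε ^ (-((d : ℝ) / (2 * ((d : ℝ) + 1)))) →
          ∀ Istar : Fin d → ℝ, Istar ∈ BR →
            (∀ i, ∃ z : ℤ, (n : ℝ) * ω Istar i = (z : ℝ)) →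
            ∀ x₀ : RPhase d,
              ‖x₀.1 - Istar‖ ^ 2 ≤ 2 * ((d : ℝ) * nh2)⁻¹ * Ms * ε →
              ∀ k : ℕ, (k : ℝ) ≤ c₄ * Real.exp (c₅ / Real.sqrt ((n : ℝ) ^ 2 * ε)) →
                ‖((F ε)^[k] x₀).1 - Istar‖ ^ 2 ≤ 11 * ν⁻¹ * Ms * ε := by
  subst hBR hUσ hDF
  obtain ⟨c₄, c₅, D₀, hc₄, hc₅, hD₀, hstab⟩ := improved_stability_in_resonance_nucleus_general hd hσ
    hr hν hnh2pos (isCompact_closedBall c₀ R) ⟨hh₀, hω, hconvex, hh2⟩ Ms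
  refine ⟨c₄, c₅, min εbar (D₀ ^ (2 * ((d : ℝ) + 1))), hc₄, hc₅, by positivity, min_le_left _ _,
    fun ε hε hε₀ n hn hnε Istar hIstar hres x₀ hx₀ k hk => ?_⟩
  have hεI : ε ∈ Set.Icc 0 εbar := ⟨hε.le, hε₀.trans (min_le_left _ _)⟩
  have hFε : NearIntegrableMap (Metric.closedBall c₀ R) σ r Ms ε ω (s ε) (F ε) :=
    ⟨hsa ε hεI, hsreal ε hεI, hsbound ε hεI, fun x hx => (hF ε hεI x hx).1,
      fun x hx => (hF ε hεI x hx).2.1, fun x hx => (hF ε hεI x hx).2.2, hlift ε hεI⟩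
  rw [Real.sqrt_mul (sq_nonneg _), Real.sqrt_sq n.cast_nonneg] at hk
  exact hstab ε (s ε) (F ε) hε hFε n hn
    (mul_sqrt_le_of_lt_rpow hε hD₀ (hε₀.trans (min_le_right _ _)) hnε) Istar hIstar hres x₀ hx₀ k hk
end

section
/- (Quantitative analytic implicit function theorem) Let A, B ⊆ ℂ^d be open sets, f : A × B → ℂ^d analytic, x₀ ∈ A and y₀ ∈ B. Suppose there is R > 0 such that the closed ball B_R(y₀) (sup norm) is contained in B and M := sup_{y ∈ B_R(y₀)} |f(x₀,y)| < R/(d+1). Then the equation y = y₀ + f(x₀,y) has a unique solution y in B_R(y₀); moreover this solution lies in the closed ball of radius M around y₀. -/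
/-!
The solutions are the fixed points of `F y = y₀ + f (x₀, y)`, which maps the ball of radius `R`
into the concentric ball of radius `M < R`. As in the Earle–Hamilton theorem, this room to spare
makes `F` contracting: replacing each factor of the iterate `F^[n]` by its dilation, with a ratio
`r > 1`, about the corresponding point of the orbit of `x` yields a holomorphic self-map of the
large ball whose derivative at `x` is `r ^ n` times that of `F^[n]`. By Cauchy's estimate this
derivative is bounded independently of `n`, so some iterate of `F` is a contraction of the smaller
ball, and Banach's fixed point theorem applies.
-/

open Function Metric Set
open scoped NNReal

theorem existsUnique_isFixedPt_of_lipschitzOnWith_iterate {α : Type*} [MetricSpace α]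
    {f : α → α} {s : Set α} {n : ℕ} {K : ℝ≥0} (hs : IsComplete s) (hne : s.Nonempty)
    (hmaps : MapsTo f s s) (hK : K < 1) (hlip : LipschitzOnWith K f^[n] s) :
    ∃! y, y ∈ s ∧ IsFixedPt f y := by
  have : CompleteSpace s := hs.completeSpace_coe
  have : Nonempty s := hne.to_subtype
  have hcontr : ContractingWith K (hmaps.restrict f s s)^[n] := by
    rw [hmaps.iterate_restrict n]
    exact ⟨hK, hlip.mapsToRestrict (hmaps.iterate n)⟩
  let y : s := ContractingWith.fixedPoint _ hcontr
  refine ⟨y, ⟨y.2, ?_⟩, ?_⟩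
  · exact congrArg Subtype.val hcontr.isFixedPt_fixedPoint_iterate
  · rintro y ⟨hy, hfy⟩
    have hfix : IsFixedPt (hmaps.restrict f s s) ⟨y, hy⟩ := Subtype.ext hfy
    exact congrArg Subtype.val (hcontr.fixedPoint_unique (hfix.iterate n))

theorem exists_one_lt_forall_mapsTo_homothety_thickening {V : Type*} [SeminormedAddCommGroup V]
    [NormedSpace ℝ V] {s : Set V} {δ : ℝ} (hs : Bornology.IsBounded s) (hδ : 0 < δ) :
    ∃ r : ℝ, 1 < r ∧ ∀ p ∈ s, MapsTo (AffineMap.homothety p r) s (thickening δ s) := by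
  have hdiam : 0 < diam s + 1 := by positivity
  refine ⟨1 + δ / (diam s + 1), lt_add_of_pos_right 1 (by positivity), fun p hp c hc => ?_⟩
  refine mem_thickening_iff.mpr ⟨c, hc, ?_⟩
  calc dist (AffineMap.homothety p (1 + δ / (diam s + 1)) c) c
      = δ / (diam s + 1) * dist p c := by
        rw [dist_homothety_self, sub_add_cancel_left, norm_neg, Real.norm_of_nonneg (by positivity)]
    _ ≤ δ / (diam s + 1) * diam s := by gcongr; exact dist_le_diam_of_mem hs hp hc
    _ < δ / (diam s + 1) * (diam s + 1) := by gcongr; exact lt_add_one _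
    _ = δ := div_mul_cancel₀ δ hdiam.ne'

section EarleHamilton

variable {E : Type*} [NormedAddCommGroup E] [NormedSpace ℂ E] {F : E → E} {C U : Set E}
  {r δ : ℝ} {x : E}

theorem exists_mapsTo_hasFDerivAt_pow_smul_fderiv_iterate (hU : IsOpen U)
    (hF : DifferentiableOn ℂ F U) (hmaps : MapsTo F U C) (hCU : C ⊆ U)
    (hr : ∀ p ∈ C, MapsTo (AffineMap.homothety p r) C U) (hx : x ∈ U) (n : ℕ) :
    ∃ H : E → E, DifferentiableOn ℂ H U ∧ MapsTo H U U ∧ H x = F^[n] x ∧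
      HasFDerivAt H (r ^ n • fderiv ℂ F^[n] x) x := by
  have hmapsU : MapsTo F U U := hmaps.mono_right hCU
  induction n with
  | zero => exact ⟨id, differentiableOn_id, mapsTo_id U, rfl, by simpa using hasFDerivAt_id x⟩
  | succ n ih =>
    obtain ⟨H, hH, hHU, hHx, hH'⟩ := ih
    have hxn : F^[n] x ∈ U := hmapsU.iterate n hx
    have hFxn : HasFDerivAt F (fderiv ℂ F (F^[n] x)) (F^[n] x) :=
      (hF.differentiableAt (hU.mem_nhds hxn)).hasFDerivAt
    have hiter : HasFDerivAt F^[n] (fderiv ℂ F^[n] x) x :=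
      ((hF.iterate hmapsU n).differentiableAt (hU.mem_nhds hx)).hasFDerivAt
    have hchain : fderiv ℂ F^[n + 1] x = (fderiv ℂ F (F^[n] x)).comp (fderiv ℂ F^[n] x) := by
      rw [iterate_succ']
      exact (hFxn.comp x hiter).fderiv
    let p := F^[n + 1] x
    have hp : F (F^[n] x) = p := (iterate_succ_apply' F n x).symm
    refine ⟨fun y => r • (F (H y) - p) + p, ?_, ?_, ?_, ?_⟩
    · exact (((hF.comp hH hHU).sub_const p).const_smul r).add_const p
    · exact fun y hy => hr p (hp ▸ hmaps hxn) (hmaps (hHU hy))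
    · simp only [hHx, hp, sub_self, smul_zero, zero_add, p]
    · rw [hchain, pow_succ', mul_smul, ← ContinuousLinearMap.comp_smul]
      rw [← hHx] at hFxn ⊢
      exact (((hFxn.comp x hH').sub_const p).const_smul r).add_const p

theorem norm_fderiv_iterate_le_of_mapsTo_homothety (hU : IsOpen U) (hUb : Bornology.IsBounded U)
    (hF : DifferentiableOn ℂ F U) (hmaps : MapsTo F U C) (hCU : C ⊆ U) (hr₀ : 0 < r)
    (hr : ∀ p ∈ C, MapsTo (AffineMap.homothety p r) C U) (hδ : 0 < δ) (hx : ball x δ ⊆ U) (n : ℕ) :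
    ‖fderiv ℂ F^[n] x‖ ≤ r⁻¹ ^ n * (diam U / δ) := by
  have hxU : x ∈ U := hx (mem_ball_self hδ)
  obtain ⟨H, hH, hHU, -, hH'⟩ :=
    exists_mapsTo_hasFDerivAt_pow_smul_fderiv_iterate hU hF hmaps hCU hr hxU n
  have hball : MapsTo H (ball x δ) (closedBall (H x) (diam U)) := fun y hy =>
    dist_le_diam_of_mem hUb (hHU (hx hy)) (hHU hxU)
  have hcauchy : r ^ n * ‖fderiv ℂ F^[n] x‖ ≤ diam U / δ := by
    simpa only [hH'.fderiv, norm_smul, norm_pow, Real.norm_of_nonneg hr₀.le] using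
      Complex.norm_fderiv_le_div_of_mapsTo_ball (hH.mono hx) hball hδ
  rwa [inv_pow, ← div_eq_inv_mul, le_div_iff₀' (pow_pos hr₀ n)]

theorem exists_lipschitzOnWith_iterate_of_mapsTo_thickening (hC : Convex ℝ C)
    (hCb : Bornology.IsBounded C) (hδ : 0 < δ) (hF : DifferentiableOn ℂ F (thickening δ C))
    (hmaps : MapsTo F (thickening δ C) C) :
    ∃ (n : ℕ) (K : ℝ≥0), K < 1 ∧ LipschitzOnWith K F^[n] C := by
  have hCU : C ⊆ thickening δ C := self_subset_thickening hδ C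
  obtain ⟨r, hr₁, hr⟩ := exists_one_lt_forall_mapsTo_homothety_thickening hCb hδ
  have hr₀ : 0 < r := one_pos.trans hr₁
  have hbound (n : ℕ) {x : E} (hx : x ∈ C) :
      ‖fderiv ℂ F^[n] x‖ ≤ r⁻¹ ^ n * (diam (thickening δ C) / δ) :=
    norm_fderiv_iterate_le_of_mapsTo_homothety isOpen_thickening hCb.thickening hF hmaps hCU hr₀
      hr hδ (ball_subset_thickening hx δ) n
  have hlim : Filter.Tendsto (fun n : ℕ => r⁻¹ ^ n * (diam (thickening δ C) / δ))
      Filter.atTop (nhds 0) := by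
    simpa only [zero_mul] using (tendsto_pow_atTop_nhds_zero_of_lt_one (inv_nonneg.mpr hr₀.le)
      (inv_lt_one_of_one_lt₀ hr₁)).mul_const (diam (thickening δ C) / δ)
  obtain ⟨n, hn⟩ := (hlim.eventually_lt_const one_pos).exists
  have hK : 0 ≤ r⁻¹ ^ n * (diam (thickening δ C) / δ) := by positivity
  refine ⟨n, ⟨_, hK⟩, hn, hC.lipschitzOnWith_of_nnnorm_fderiv_le (𝕜 := ℂ) (fun x hx => ?_)
    fun x hx => hbound n hx⟩
  exact (hF.iterate (hmaps.mono_right hCU) n).differentiableAt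
    (isOpen_thickening.mem_nhds (hCU hx))

theorem existsUnique_isFixedPt_of_mapsTo_thickening [CompleteSpace E] (hC : Convex ℝ C)
    (hCb : Bornology.IsBounded C) (hCc : IsClosed C) (hne : C.Nonempty) (hδ : 0 < δ)
    (hF : DifferentiableOn ℂ F (thickening δ C)) (hmaps : MapsTo F (thickening δ C) C) :
    ∃! y, y ∈ C ∧ IsFixedPt F y := by
  obtain ⟨n, K, hK, hlip⟩ :=
    exists_lipschitzOnWith_iterate_of_mapsTo_thickening hC hCb hδ hF hmaps
  exact existsUnique_isFixedPt_of_lipschitzOnWith_iterate hCc.isComplete hne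
    (hmaps.mono_left (self_subset_thickening hδ C)) hK hlip

end EarleHamilton

theorem quantitative_analytic_implicit_function_theorem_general {E : Type*}
    [NormedAddCommGroup E] [NormedSpace ℂ E] [CompleteSpace E] {g : E → E} {y₀ : E} {R M : ℝ}
    (hR : 0 < R) (hg : DifferentiableOn ℂ g (ball y₀ R))
    (hMub : ∀ y ∈ closedBall y₀ R, ‖g y‖ ≤ M) (hM : M < R) :
    ∃ y ∈ closedBall y₀ M,
      y = y₀ + g y ∧ ∀ y' ∈ closedBall y₀ R, y' = y₀ + g y' → y' = y := by
  have hM₀ : 0 ≤ M := (norm_nonneg _).trans (hMub y₀ (mem_closedBall_self hR.le))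
  have hmaps : MapsTo (fun y => y₀ + g y) (closedBall y₀ R) (closedBall y₀ M) := fun y hy => by
    simpa only [mem_closedBall_iff_norm, add_sub_cancel_left] using hMub y hy
  have hthick : thickening (R - M) (closedBall y₀ M) = ball y₀ R := by
    rw [thickening_closedBall (sub_pos.mpr hM) hM₀, sub_add_cancel]
  obtain ⟨y, ⟨hy, hfix⟩, huniq⟩ :=
    existsUnique_isFixedPt_of_mapsTo_thickening (convex_closedBall y₀ M) isBounded_closedBall
      isClosed_closedBall (nonempty_closedBall.mpr hM₀) (sub_pos.mpr hM)
      (hthick ▸ hg.const_add y₀) (hthick ▸ hmaps.mono_left ball_subset_closedBall)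
  refine ⟨y, hy, hfix.eq.symm, fun y' hy' hfix' => huniq y' ⟨?_, hfix'.symm⟩⟩
  rw [hfix']
  exact hmaps hy'

/-- **Quantitative analytic implicit function theorem.**
`A, B ⊆ ℂ^d` open, `f : A × B → ℂ^d` analytic, `x₀ ∈ A`, `y₀ ∈ B`.  If the closed ball
`B_R(y₀)` (sup norm) is contained in `B` and `M` bounds `|f(x₀,·)|` on that ball with
`M < R/(d+1)`, then the equation `y = y₀ + f(x₀,y)` has a unique solution in `B_R(y₀)`;
moreover the solution lies in the closed ball of radius `M` around `y₀`. -/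
theorem quantitative_analytic_implicit_function_theorem (d : ℕ) (hd : 1 ≤ d)
    (A B : Set (Fin d → ℂ)) (hA : IsOpen A) (hB : IsOpen B)
    (f : (Fin d → ℂ) × (Fin d → ℂ) → Fin d → ℂ)
    (hf : AnalyticOnNhd ℂ f (A ×ˢ B))
    (x₀ : Fin d → ℂ) (hx₀ : x₀ ∈ A)
    (y₀ : Fin d → ℂ) (hy₀ : y₀ ∈ B)
    (R M : ℝ) (hR : 0 < R)
    (hball : Metric.closedBall y₀ R ⊆ B)
    (hMub : ∀ y ∈ Metric.closedBall y₀ R, ‖f (x₀, y)‖ ≤ M)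
    (hM : M < R / (d + 1)) :
    ∃ y ∈ Metric.closedBall y₀ M,
      y = y₀ + f (x₀, y) ∧
      ∀ y' ∈ Metric.closedBall y₀ R, y' = y₀ + f (x₀, y') → y' = y :=
  quantitative_analytic_implicit_function_theorem_general hR
    (fun y hy => (hf (x₀, y) ⟨hx₀, hball (ball_subset_closedBall hy)⟩).along_snd
      |>.differentiableWithinAt) hMub (hM.trans_le (div_le_self hR.le (by simp)))
end

section
/- (Explicit interpolation weights identity) For all integers m ≥ 1 and 1 ≤ j ≤ m, one has Σ_{k=j}^m (1/k)·binom(k,j) = ((m+1−j)/(j(m+1)))·binom(m+1,j). Consequently, for any x₀,…,x_m in ℝ^s, Σ_{k=1}^m ((−1)^{k−1}/k) Δ^k = −H_m·x₀ + Σ_{j=1}^m (−1)^{j+1} ((m+1−j)/(j(m+1)))·binom(m+1,j)·x_j, where Δ^k = Σ_{i=0}^k (−1)^{k−i} binom(k,i) x_i and H_m = Σ_{k=1}^m 1/k is the harmonic number. -/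
/-!
By absorption, `(1/k) * choose k j = (1/j) * choose (k-1) (j-1)`, so the weight of `x j` is a
hockey-stick sum equal to `choose m j / j`. In the alternating sum of differences the signs
`(-1)^(k-1)` and `(-1)^(k-l)` combine to `(-1)^(l+1)`, which no longer depends on `k`; exchanging
the two summations then leaves exactly these weights, the index `0` contributing `-H_m`.
-/

open Finset

section Weights

variable {K : Type*} [Field K] [CharZero K]

theorem one_div_mul_cast_choose_succ (k j : ℕ) :
    1 / ((k + 1 : ℕ) : K) * (k + 1).choose (j + 1) = k.choose j / (j + 1 : ℕ) := by
  have hk : ((k + 1 : ℕ) : K) ≠ 0 := Nat.cast_ne_zero.mpr k.succ_ne_zero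
  have hj : ((j + 1 : ℕ) : K) ≠ 0 := Nat.cast_ne_zero.mpr j.succ_ne_zero
  rw [one_div_mul_eq_div, div_eq_div_iff hk hj, mul_comm (k.choose j : K)]
  exact_mod_cast (Nat.add_one_mul_choose_eq k j).symm

theorem sum_Icc_one_div_mul_choose (m : ℕ) {j : ℕ} (hj : 1 ≤ j) :
    ∑ k ∈ Icc j m, (1 : K) / k * k.choose j = m.choose j / j := by
  obtain ⟨i, rfl⟩ := Nat.exists_eq_add_of_le' hj
  obtain _ | n := m
  · simp
  · calc
      ∑ k ∈ Icc (i + 1) (n + 1), (1 : K) / k * k.choose (i + 1)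
          = ∑ k ∈ Icc i n, 1 / ((k + 1 : ℕ) : K) * (k + 1).choose (i + 1) := by
        rw [← map_add_right_Icc, sum_map]
        rfl
      _ = (∑ k ∈ Icc i n, (k.choose i : K)) / (i + 1 : ℕ) := by
        simp only [one_div_mul_cast_choose_succ, sum_div]
      _ = (n + 1).choose (i + 1) / (i + 1 : ℕ) := by
        rw [← Nat.cast_sum, Nat.sum_Icc_choose]

theorem cast_choose_eq_div_mul_choose_succ (m j : ℕ) :
    (m.choose j : K) = ((m : K) + 1 - j) / ((m : K) + 1) * (m + 1).choose j := by
  obtain hj | hj := le_or_gt j (m + 1)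
  · have hm : (m : K) + 1 ≠ 0 := Nat.cast_add_one_ne_zero m
    have h : (m.choose j : K) * (m + 1) = (m + 1).choose j * ((m : K) + 1 - j) := by
      have := congrArg (Nat.cast (R := K)) (Nat.choose_mul_succ_eq m j)
      push_cast [Nat.cast_sub hj] at this
      exact this
    rw [div_mul_eq_mul_div, eq_div_iff hm, h, mul_comm]
  · rw [Nat.choose_eq_zero_of_lt hj, Nat.choose_eq_zero_of_lt (by lia), Nat.cast_zero, mul_zero]

theorem sum_Icc_one_div_mul_choose_eq_div_mul_choose_succ (m : ℕ) {j : ℕ} (hj : 1 ≤ j) :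
    ∑ k ∈ Icc j m, (1 : K) / k * k.choose j =
      ((m : K) + 1 - j) / (j * ((m : K) + 1)) * (m + 1).choose j := by
  rw [sum_Icc_one_div_mul_choose m hj, cast_choose_eq_div_mul_choose_succ, mul_comm (j : K),
    ← div_div, div_mul_eq_mul_div _ (j : K)]

end Weights

theorem sum_Icc_Icc_comm_triangle {α M : Type*} [Preorder α] [LocallyFiniteOrder α]
    [AddCommMonoid M] (a b : α) (f : α → α → M) :
    ∑ k ∈ Icc a b, ∑ l ∈ Icc a k, f k l = ∑ l ∈ Icc a b, ∑ k ∈ Icc l b, f k l := by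
  refine sum_comm' fun k l ↦ ?_
  simp only [mem_Icc]
  constructor
  · rintro ⟨⟨-, hkb⟩, hal, hlk⟩
    exact ⟨⟨hlk, hkb⟩, hal, hlk.trans hkb⟩
  · rintro ⟨⟨hlk, hkb⟩, hal, -⟩
    exact ⟨⟨hal.trans hlk, hkb⟩, hal, hlk⟩

theorem neg_one_pow_pred_mul_neg_one_pow_sub {R : Type*} [Monoid R] [HasDistribNeg R] {k l : ℕ}
    (hk : 1 ≤ k) (hl : l ≤ k) : (-1 : R) ^ (k - 1) * (-1) ^ (k - l) = (-1) ^ (l + 1) := by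
  rw [← pow_add]
  exact neg_one_pow_congr (by grind)

section Differences

variable {R M : Type*} [Ring R] [AddCommGroup M] [Module R M]

theorem neg_one_pow_pred_smul_sum_choose_smul {k : ℕ} (hk : 1 ≤ k) (x : ℕ → M) :
    (-1 : R) ^ (k - 1) • ∑ l ∈ range (k + 1), ((-1 : R) ^ (k - l) * k.choose l) • x l =
      -x 0 + ∑ l ∈ Icc 1 k, ((-1 : R) ^ (l + 1) * k.choose l) • x l := by
  calc
    _ = ∑ l ∈ range (k + 1), ((-1 : R) ^ (l + 1) * k.choose l) • x l := by
      rw [smul_sum]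
      refine sum_congr rfl fun l hl ↦ ?_
      rw [smul_smul, ← mul_assoc,
        neg_one_pow_pred_mul_neg_one_pow_sub hk (mem_range_succ_iff.mp hl)]
    _ = _ := by
      rw [range_eq_Ico, sum_eq_sum_Ico_succ_bot k.add_one_pos, zero_add, pow_one,
        Nat.choose_zero_right, Nat.cast_one, mul_one, neg_one_smul, Ico_add_one_right_eq_Icc]

theorem sum_smul_neg_one_pow_pred_smul_sum_choose_smul (c : ℕ → R) (m : ℕ) (x : ℕ → M) :
    ∑ k ∈ Icc 1 m, c k • (-1 : R) ^ (k - 1) •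
        ∑ l ∈ range (k + 1), ((-1 : R) ^ (k - l) * k.choose l) • x l =
      -(∑ k ∈ Icc 1 m, c k) • x 0 +
        ∑ j ∈ Icc 1 m, ((-1 : R) ^ (j + 1) * ∑ k ∈ Icc j m, c k * k.choose j) • x j := by
  calc
    _ = ∑ k ∈ Icc 1 m,
          (-c k • x 0 + ∑ l ∈ Icc 1 k, ((-1 : R) ^ (l + 1) * (c k * k.choose l)) • x l) := by
      refine sum_congr rfl fun k hk ↦ ?_
      have sign_comm (l : ℕ) : c k * (-1) ^ (l + 1) = (-1) ^ (l + 1) * c k :=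
        ((Commute.neg_one_right (c k)).pow_right (l + 1)).eq
      rw [neg_one_pow_pred_smul_sum_choose_smul (mem_Icc.mp hk).1, smul_add, smul_neg, neg_smul,
        smul_sum]
      simp only [smul_smul, ← mul_assoc, sign_comm]
    _ = -(∑ k ∈ Icc 1 m, c k) • x 0 +
          ∑ j ∈ Icc 1 m, ∑ k ∈ Icc j m, ((-1 : R) ^ (j + 1) * (c k * k.choose j)) • x j := by
      rw [sum_add_distrib, ← sum_smul, sum_neg_distrib, sum_Icc_Icc_comm_triangle]
    _ = _ := by
      simp only [← sum_smul, ← mul_sum]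

end Differences

theorem interpolation_weights_identity_general {K M : Type*} [Field K] [CharZero K]
    [AddCommGroup M] [Module K M] (m : ℕ) :
    (∀ j : ℕ, 1 ≤ j →
      ∑ k ∈ Icc j m, (1 : K) / k * (k.choose j) =
        ((m : K) + 1 - j) / (j * ((m : K) + 1)) * ((m + 1).choose j)) ∧
    ∀ x : ℕ → M,
      ∑ k ∈ Icc 1 m, ((-1 : K) ^ (k - 1) / k) •
          ∑ l ∈ range (k + 1), ((-1 : K) ^ (k - l) * (k.choose l)) • x l =
        -(∑ k ∈ Icc 1 m, (1 : K) / k) • x 0 +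
          ∑ j ∈ Icc 1 m, ((-1 : K) ^ (j + 1) *
            (((m : K) + 1 - j) / (j * ((m : K) + 1))) * ((m + 1).choose j)) • x j := by
  refine ⟨fun j hj ↦ sum_Icc_one_div_mul_choose_eq_div_mul_choose_succ m hj, fun x ↦ ?_⟩
  have expansion := sum_smul_neg_one_pow_pred_smul_sum_choose_smul (fun k ↦ (1 : K) / k) m x
  simp only [smul_smul, one_div_mul_eq_div] at expansion ⊢
  rw [expansion]
  congr 1
  refine sum_congr rfl fun j hj ↦ ?_
  rw [mul_assoc, ← sum_Icc_one_div_mul_choose_eq_div_mul_choose_succ m (mem_Icc.mp hj).1]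
  simp only [one_div_mul_eq_div]

/-- **Explicit interpolation weights identity.**
For `m ≥ 1` and `1 ≤ j ≤ m`, `Σ_{k=j}^m (1/k)·binom(k,j) = ((m+1−j)/(j(m+1)))·binom(m+1,j)`.
Consequently for any `x₀,…,x_m` in `ℝ^s`,
`Σ_{k=1}^m ((−1)^{k−1}/k) Δ^k = −H_m x₀ + Σ_{j=1}^m (−1)^{j+1}((m+1−j)/(j(m+1))) binom(m+1,j) x_j`,
with `Δ^k = Σ_{i=0}^k (−1)^{k−i} binom(k,i) x_i` and `H_m = Σ_{k=1}^m 1/k`. -/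
theorem interpolation_weights_identity (s m : ℕ) (hs : 1 ≤ s) (hm : 1 ≤ m) :
    (∀ j : ℕ, 1 ≤ j → j ≤ m →
      ∑ k ∈ Finset.Icc j m, (1 : ℝ) / k * (k.choose j) =
        ((m : ℝ) + 1 - j) / (j * ((m : ℝ) + 1)) * ((m + 1).choose j)) ∧
    ∀ x : ℕ → Fin s → ℝ, ∀ i : Fin s,
      ∑ k ∈ Finset.Icc 1 m, (-1 : ℝ) ^ (k - 1) / k *
          ∑ l ∈ Finset.range (k + 1), (-1 : ℝ) ^ (k - l) * (k.choose l) * x l i =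
        -(∑ k ∈ Finset.Icc 1 m, (1 : ℝ) / k) * x 0 i +
          ∑ j ∈ Finset.Icc 1 m, (-1 : ℝ) ^ (j + 1) *
            (((m : ℝ) + 1 - j) / (j * ((m : ℝ) + 1))) * ((m + 1).choose j) * x j i := by
  have h := interpolation_weights_identity_general (K := ℝ) (M := ℝ) m
  exact ⟨fun j hj _ ↦ h.1 j hj, fun x i ↦ h.2 (x · i)⟩
end
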